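/- arXiv:1901.10789 — 5 statements merged into one kernel-verified Lean document; each statement's English description precedes it below -/
import Mathlib

section
/- There exists a universal constant C > 0 such that for all positive integers n, m, every matrix U ∈ [−1,1]^{n×m}, every vector w ∈ ℝ^m with ‖w‖₁ = 1, and every positive integer T ≤ m, there exists a vector w' ∈ ℝ^m with ‖w'‖₁ = 1, ‖w'‖₀ ≤ T, and ‖Uw − Uw'‖_∞ ≤ C·√(log(2 + n/T)/T). -/
open Finset
open scoped Classical

namespace Sparsification

/-- The sign `±1` encoded by a Boolean. -/
def boolSign (b : Bool) : ℝ := if b then 1 else -1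

/-- Sub-Gaussian bound for the moment generating function of a Rademacher sum. -/
lemma sum_exp_boolSign_le {ι : Type*} [Fintype ι] (a : ι → ℝ) (ha : ∀ i, |a i| ≤ 1) (t : ℝ) :
    ∑ x : ι → Bool, Real.exp (t * ∑ i, a i * boolSign (x i)) ≤
      2 ^ Fintype.card ι * Real.exp (t ^ 2 * Fintype.card ι / 2) := by
  have hfactor : ∑ x : ι → Bool, Real.exp (t * ∑ i, a i * boolSign (x i)) =
      ∏ i, ∑ b : Bool, Real.exp (t * (a i * boolSign b)) := by
    rw [Finset.prod_univ_sum, Fintype.piFinset_univ]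
    refine Finset.sum_congr rfl fun x _ => ?_
    rw [Finset.mul_sum, Real.exp_sum]
  rw [hfactor]
  calc ∏ i, ∑ b : Bool, Real.exp (t * (a i * boolSign b))
      ≤ ∏ _i : ι, (2 * Real.exp (t ^ 2 / 2)) := by
        refine Finset.prod_le_prod (fun i _ => by positivity) fun i _ => ?_
        have hcosh := Real.cosh_le_exp_half_sq (t * a i)
        rw [Real.cosh_eq] at hcosh
        have hsq : (t * a i) ^ 2 / 2 ≤ t ^ 2 / 2 := by
          have : a i ^ 2 ≤ 1 := by
            rw [← sq_abs]; exact pow_le_one₀ (abs_nonneg _) (ha i)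
          nlinarith [sq_nonneg t]
        have hexp := Real.exp_le_exp.mpr hsq
        simp only [Fintype.sum_bool, boolSign, if_true, Bool.false_eq_true, if_false, mul_one,
          mul_neg]
        linarith
    _ = 2 ^ Fintype.card ι * Real.exp (t ^ 2 * Fintype.card ι / 2) := by
        rw [Finset.prod_const, Finset.card_univ, mul_pow, ← Real.exp_nat_mul]
        congr 2; ring

lemma natAbs_round_le {z l t : ℝ} (hl : 0 < l) (ht : 1 ≤ t * l) :
    ((round (z / (2 * l))).natAbs : ℝ) ≤
      Real.exp (-(t * l)) * (Real.exp (t * z) + Real.exp (-t * z)) := by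
  rw [Nat.cast_natAbs, Int.cast_abs]
  have hround := abs_sub_round (z / (2 * l))
  have htpos : 0 < t := by
    by_contra h
    nlinarith
  set N := round (z / (2 * l)) with hN
  by_cases hN0 : N = 0
  · simp only [hN0, Int.cast_zero, abs_zero]; positivity
  have hone : (1 : ℝ) ≤ |(N : ℝ)| := by
    exact_mod_cast Int.one_le_abs hN0
  have htri : |(N : ℝ)| ≤ |z / (2 * l)| + 1 / 2 := by
    have := abs_sub_abs_le_abs_sub (N : ℝ) (z / (2 * l))
    rw [abs_sub_comm] at this
    linarith
  have habs : |z / (2 * l)| = |z| / l / 2 := by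
    rw [abs_div, abs_of_pos (by positivity : 0 < 2 * l)]
    field_simp
  rw [habs] at htri
  set u := |z| / l with hu
  have hu1 : 1 ≤ u := by linarith
  have hz : |z| = u * l := by rw [hu]; field_simp
  have hexp : u ≤ Real.exp (t * |z| - t * l) := by
    have h1 := Real.add_one_le_exp (u - 1)
    have h2 : Real.exp (u - 1) ≤ Real.exp (t * |z| - t * l) := by
      apply Real.exp_le_exp.mpr
      rw [hz]; nlinarith
    linarith
  have habsexp : Real.exp (t * |z|) ≤ Real.exp (t * z) + Real.exp (-t * z) := by
    rcases abs_cases z with ⟨h, _⟩ | ⟨h, _⟩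
    · rw [h]; linarith [Real.exp_pos (-t * z)]
    · rw [h, mul_neg, neg_mul]; linarith [Real.exp_pos (t * z)]
  calc |(N : ℝ)| ≤ u := by linarith
    _ ≤ Real.exp (t * |z| - t * l) := hexp
    _ = Real.exp (-(t * l)) * Real.exp (t * |z|) := by rw [← Real.exp_add]; congr 1; ring
    _ ≤ _ := by gcongr

/-- A Rademacher sum rounded at a scale above its standard deviation is almost always zero. -/
lemma sum_natAbs_round_le {ι : Type*} [Fintype ι] [Nonempty ι] (a : ι → ℝ)
    (ha : ∀ i, |a i| ≤ 1) {l : ℝ} (hl : 0 < l) (hl2 : (Fintype.card ι : ℝ) ≤ l ^ 2) :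
    ∑ x : ι → Bool, ((round ((∑ i, a i * boolSign (x i)) / (2 * l))).natAbs : ℝ) ≤
      2 ^ Fintype.card ι * (2 * Real.exp (-(l ^ 2 / (2 * Fintype.card ι)))) := by
  have hs : (0 : ℝ) < Fintype.card ι := by exact_mod_cast Fintype.card_pos
  set s : ℝ := (Fintype.card ι : ℝ) with hsdef
  have ht : 1 ≤ l / s * l := by
    rw [div_mul_eq_mul_div, le_div_iff₀ hs]; nlinarith
  have hpos := sum_exp_boolSign_le a ha (l / s)
  have hneg := sum_exp_boolSign_le a ha (-(l / s))
  rw [neg_sq] at hneg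
  calc ∑ x : ι → Bool, ((round ((∑ i, a i * boolSign (x i)) / (2 * l))).natAbs : ℝ)
      ≤ ∑ x : ι → Bool, Real.exp (-(l / s * l)) *
          (Real.exp (l / s * ∑ i, a i * boolSign (x i)) +
            Real.exp (-(l / s) * ∑ i, a i * boolSign (x i))) :=
        Finset.sum_le_sum fun x _ => natAbs_round_le hl ht
    _ ≤ Real.exp (-(l / s * l)) * (2 * (2 ^ Fintype.card ι * Real.exp ((l / s) ^ 2 * s / 2))) := by
        rw [← Finset.mul_sum, Finset.sum_add_distrib]
        gcongr
        linarith
    _ = 2 ^ Fintype.card ι * (2 * (Real.exp (-(l / s * l)) * Real.exp ((l / s) ^ 2 * s / 2))) := by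
        ring
    _ = _ := by
        rw [← Real.exp_add]
        congr 3
        field_simp
        ring

lemma sum_Icc_pow_natAbs_le {r : ℝ} (hr : 0 ≤ r) (hr3 : r ≤ 1 / 3) (V : ℕ) :
    ∑ v ∈ Finset.Icc (-(V : ℤ)) V, r ^ v.natAbs ≤ Real.exp (3 * r) := by
  have key : ∑ v ∈ Finset.Icc (-(V : ℤ)) V, r ^ v.natAbs ≤ 1 + 3 * r - 3 * r ^ (V + 1) := by
    induction V with
    | zero => simp
    | succ V ih =>
      have hins : Finset.Icc (-((V + 1 : ℕ) : ℤ)) ((V + 1 : ℕ) : ℤ) =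
          insert (-((V + 1 : ℕ) : ℤ)) (insert ((V + 1 : ℕ) : ℤ) (Finset.Icc (-(V : ℤ)) V)) := by
        ext v
        simp only [Finset.mem_Icc, Finset.mem_insert]
        omega
      rw [hins, Finset.sum_insert, Finset.sum_insert]
      · simp only [Int.natAbs_neg, Int.natAbs_natCast]
        have := pow_nonneg hr (V + 1)
        have : r ^ (V + 1 + 1) = r ^ (V + 1) * r := pow_succ _ _
        nlinarith
      · simp only [Finset.mem_Icc]; omega
      · simp only [Finset.mem_Icc, Finset.mem_insert]; omega
  have := pow_nonneg hr (V + 1)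
  linarith [Real.add_one_le_exp (3 * r)]

/-- An integer-vector valued map whose values have small average `ℓ¹` norm has a large fiber. -/
lemma exists_large_fiber {Ω J : Type*} [Fintype Ω] [Nonempty Ω] [Fintype J] (B : Ω → J → ℤ)
    {r M : ℝ} (hr : 0 < r) (hr3 : r ≤ 1 / 3)
    (hM : ∑ x, ∑ j, ((B x j).natAbs : ℝ) ≤ Fintype.card Ω * M) :
    ∃ b : J → ℤ, Fintype.card Ω * Real.exp (-(M * Real.log (1 / r)) - 3 * r * Fintype.card J) ≤
      (Finset.univ.filter fun x => B x = b).card := by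
  by_contra! hcon
  set F : ℝ := Fintype.card Ω * Real.exp (-(M * Real.log (1 / r)) - 3 * r * Fintype.card J)
    with hF
  set L := Real.log (1 / r) with hL
  have hLnn : 0 ≤ L := Real.log_nonneg (by rw [le_div_iff₀ hr]; linarith)
  have hrL : r = Real.exp (-L) := by
    rw [hL, one_div, Real.log_inv, neg_neg, Real.exp_log hr]
  let q : (J → ℤ) → ℝ := fun b => ∏ j, r ^ (b j).natAbs
  have hq : ∀ b, 0 < q b := fun b => Finset.prod_pos fun j _ => pow_pos hr _
  have hlower : Fintype.card Ω * Real.exp (-(M * L)) ≤ ∑ x, q (B x) := by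
    have hpt : ∀ x, Real.exp (-(M * L)) * (1 + (M * L - L * ∑ j, ((B x j).natAbs : ℝ))) ≤
        q (B x) := by
      intro x
      have hqx : q (B x) = Real.exp (-(M * L)) *
          Real.exp (M * L - L * ∑ j, ((B x j).natAbs : ℝ)) := by
        rw [← Real.exp_add]
        simp only [q]
        rw [Finset.prod_pow_eq_pow_sum, hrL, ← Real.exp_nat_mul]
        push_cast
        congr 1; ring
      rw [hqx]
      gcongr
      linarith [Real.add_one_le_exp (M * L - L * ∑ j, ((B x j).natAbs : ℝ))]
    refine le_trans ?_ (Finset.sum_le_sum fun x _ => hpt x)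
    rw [← Finset.mul_sum, Finset.sum_add_distrib, Finset.sum_sub_distrib,
      ← Finset.mul_sum (f := fun x => ∑ j, ((B x j).natAbs : ℝ)), mul_comm]
    simp only [Finset.sum_const, Finset.card_univ, nsmul_eq_mul, mul_one]
    gcongr
    nlinarith
  have himage : (Finset.univ.image B).Nonempty := Finset.univ_nonempty.image B
  have hupper : ∑ x, q (B x) < F * ∑ b ∈ Finset.univ.image B, q b := by
    rw [Finset.sum_comp, Finset.mul_sum]
    refine Finset.sum_lt_sum_of_nonempty himage fun b _ => ?_
    rw [nsmul_eq_mul]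
    exact mul_lt_mul_of_pos_right (hcon b) (hq b)
  obtain ⟨V, hV⟩ : ∃ V : ℕ, ∀ x j, (B x j).natAbs ≤ V := by
    refine ⟨∑ x, ∑ j, (B x j).natAbs, fun x j => ?_⟩
    calc (B x j).natAbs ≤ ∑ j, (B x j).natAbs :=
          Finset.single_le_sum (f := fun j => (B x j).natAbs) (fun _ _ => Nat.zero_le _)
            (Finset.mem_univ j)
      _ ≤ _ := Finset.single_le_sum (f := fun x => ∑ j, (B x j).natAbs)
            (fun _ _ => Nat.zero_le _) (Finset.mem_univ x)
  have hZ : ∑ b ∈ Finset.univ.image B, q b ≤ Real.exp (3 * r * Fintype.card J) := by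
    calc ∑ b ∈ Finset.univ.image B, q b
        ≤ ∑ b ∈ Fintype.piFinset fun _ : J => Finset.Icc (-(V : ℤ)) V, q b := by
          refine Finset.sum_le_sum_of_subset_of_nonneg ?_ fun b _ _ => (hq b).le
          intro b hb
          obtain ⟨x, -, rfl⟩ := Finset.mem_image.mp hb
          rw [Fintype.mem_piFinset]
          intro j
          have := hV x j
          rw [Finset.mem_Icc]; omega
      _ = ∏ _j : J, ∑ v ∈ Finset.Icc (-(V : ℤ)) V, r ^ v.natAbs := by
          rw [Finset.prod_univ_sum]
      _ ≤ ∏ _j : J, Real.exp (3 * r) :=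
          Finset.prod_le_prod (fun _ _ => Finset.sum_nonneg fun _ _ => by positivity)
            fun _ _ => sum_Icc_pow_natAbs_le hr.le hr3 V
      _ = _ := by
          rw [Finset.prod_const, Finset.card_univ, ← Real.exp_nat_mul]
          congr 1; ring
  have hFnn : 0 ≤ F := by positivity
  have hfinal := mul_le_mul_of_nonneg_left hZ hFnn
  have hFexp : F * Real.exp (3 * r * Fintype.card J) = Fintype.card Ω * Real.exp (-(M * L)) := by
    rw [hF, mul_assoc, ← Real.exp_add, sub_add_cancel]
  linarith

/-- A set containing a large part of the Hamming cube has two points at linear distance. -/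
lemma exists_far_pair {ι : Type*} [Fintype ι] [Nonempty ι] (A : Finset (ι → Bool))
    (hA : 2 ^ Fintype.card ι * Real.exp (-(Fintype.card ι / 5 : ℝ)) ≤ A.card) :
    ∃ x ∈ A, ∃ y ∈ A,
      (Fintype.card ι : ℝ) / 10 ≤ (Finset.univ.filter fun i => x i ≠ y i).card := by
  have hs : (0 : ℝ) < Fintype.card ι := by exact_mod_cast Fintype.card_pos
  have hApos : (0 : ℝ) < A.card := lt_of_lt_of_le (by positivity) hA
  obtain ⟨y, hy⟩ := Finset.card_pos.mp (by exact_mod_cast hApos : 0 < A.card)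
  by_contra! hcon
  set s : ℝ := (Fintype.card ι : ℝ) with hsdef
  let d : (ι → Bool) → ℕ := fun x => (Finset.univ.filter fun i => x i ≠ y i).card
  have hlog8 : Real.exp (-(3 * Real.log 2)) = 1 / 8 := by
    rw [Real.exp_neg, mul_comm, Real.exp_mul, Real.exp_log two_pos]
    norm_num
  have htotal : ∑ x : ι → Bool, (1 / 8 : ℝ) ^ d x = (9 / 8) ^ Fintype.card ι := by
    have hprod : ∀ x : ι → Bool,
        (1 / 8 : ℝ) ^ d x = ∏ i, if x i ≠ y i then (1 / 8 : ℝ) else 1 := by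
      intro x
      rw [Finset.prod_ite, Finset.prod_const, Finset.prod_const_one, mul_one]
    have hcol : ∀ i, ∑ b : Bool, (if b ≠ y i then (1 / 8 : ℝ) else 1) = 9 / 8 := by
      intro i
      cases y i <;> norm_num
    simp_rw [hprod]
    rw [← Fintype.piFinset_univ,
      ← Finset.prod_univ_sum (fun _ => Finset.univ) fun i b => if b ≠ y i then (1 / 8 : ℝ) else 1]
    simp_rw [hcol]
    rw [Finset.prod_const, Finset.card_univ]
  have hball : A.card * Real.exp (-(3 * Real.log 2) * (s / 10)) ≤ (9 / 8) ^ Fintype.card ι := by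
    rw [← htotal, ← nsmul_eq_mul, ← Finset.sum_const]
    refine (Finset.sum_le_sum fun x hx => ?_).trans
      (Finset.sum_le_sum_of_subset_of_nonneg (Finset.subset_univ A) fun _ _ _ => by positivity)
    have hdx : (d x : ℝ) < s / 10 := hcon x hx y hy
    rw [← hlog8, ← Real.exp_nat_mul]
    apply Real.exp_le_exp.mpr
    nlinarith [Real.log_two_gt_d9]
  have h98 : (9 / 8 : ℝ) ^ Fintype.card ι ≤ Real.exp (s / 8) := by
    have : (9 / 8 : ℝ) ≤ Real.exp (1 / 8) := by linarith [Real.add_one_le_exp (1 / 8 : ℝ)]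
    calc (9 / 8 : ℝ) ^ Fintype.card ι ≤ Real.exp (1 / 8) ^ Fintype.card ι := by gcongr
      _ = _ := by rw [← Real.exp_nat_mul]; congr 1; ring
  have h2 : (2 : ℝ) ^ Fintype.card ι = Real.exp (s * Real.log 2) := by
    rw [hsdef, Real.exp_nat_mul, Real.exp_log two_pos]
  rw [h2, ← Real.exp_add] at hA
  have hchain : Real.exp (s * Real.log 2 + -(s / 5)) * Real.exp (-(3 * Real.log 2) * (s / 10)) ≤
      Real.exp (s / 8) :=
    (mul_le_mul_of_nonneg_right hA (Real.exp_pos _).le).trans (hball.trans h98)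
  rw [← Real.exp_add, Real.exp_le_exp] at hchain
  nlinarith [Real.log_two_gt_d9]

/-- Spencer-type partial coloring lemma. -/
lemma exists_partial_coloring {ι J : Type*} [Fintype ι] [Nonempty ι] [Fintype J]
    (a : J → ι → ℝ) (ha : ∀ j i, |a j i| ≤ 1) :
    ∃ χ : ι → ℝ, (∀ i, χ i = 0 ∨ χ i = 1 ∨ χ i = -1) ∧
      (Fintype.card ι : ℝ) / 10 ≤ (Finset.univ.filter fun i => χ i ≠ 0).card ∧
      ∀ j, |∑ i, a j i * χ i| ≤ Real.sqrt (24 * Fintype.card ι *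
        Real.log (2 + (Fintype.card J : ℝ) / Fintype.card ι)) := by
  have hs : (0 : ℝ) < Fintype.card ι := by exact_mod_cast Fintype.card_pos
  set s : ℝ := (Fintype.card ι : ℝ) with hsdef
  set N : ℝ := (Fintype.card J : ℝ) with hNdef
  have hNnn : 0 ≤ N := Nat.cast_nonneg _
  set ρ : ℝ := 2 + N / s with hρdef
  have hρ2 : 2 ≤ ρ := by rw [hρdef]; linarith [div_nonneg hNnn hs.le]
  have hNρ : N ≤ s * ρ := by
    rw [hρdef, mul_add, mul_div_cancel₀ _ hs.ne']; linarith
  have hlogρ : Real.log 2 ≤ Real.log ρ := Real.log_le_log two_pos hρ2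
  have hlog2 := Real.log_two_gt_d9
  set l := Real.sqrt (24 * s * Real.log ρ) with hldef
  have harg : 0 < 24 * s * Real.log ρ := by
    have : 0 < Real.log ρ := by linarith
    positivity
  have hl : 0 < l := Real.sqrt_pos.mpr harg
  have hlsq : l ^ 2 = 24 * s * Real.log ρ := Real.sq_sqrt harg.le
  have hexp : Real.exp (-(l ^ 2 / (2 * s))) = (ρ ^ 12)⁻¹ := by
    have : l ^ 2 / (2 * s) = (12 : ℕ) * Real.log ρ := by
      rw [hlsq]; push_cast; field_simp; ring
    rw [this, Real.exp_neg, Real.exp_nat_mul, Real.exp_log (by linarith)]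
  let z : (ι → Bool) → J → ℝ := fun x j => ∑ i, a j i * boolSign (x i)
  let B : (ι → Bool) → J → ℤ := fun x j => round (z x j / (2 * l))
  have hcard : (Fintype.card (ι → Bool) : ℝ) = 2 ^ Fintype.card ι := by simp
  have hsum : ∑ x, ∑ j, ((B x j).natAbs : ℝ) ≤
      Fintype.card (ι → Bool) * (N * (2 * (ρ ^ 12)⁻¹)) := by
    rw [Finset.sum_comm, hcard]
    calc ∑ j, ∑ x, ((B x j).natAbs : ℝ)
        ≤ ∑ _j : J, 2 ^ Fintype.card ι * (2 * (ρ ^ 12)⁻¹) := by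
          refine Finset.sum_le_sum fun j _ => ?_
          rw [← hexp]
          exact sum_natAbs_round_le (a j) (ha j) hl (by rw [hlsq]; nlinarith)
      _ = _ := by
          rw [Finset.sum_const, Finset.card_univ, nsmul_eq_mul]; ring
  have hρpos : 0 < ρ := by linarith
  have hr3 : 1 / (30 * ρ) ≤ 1 / 3 := by
    apply one_div_le_one_div_of_le <;> linarith
  obtain ⟨b, hb⟩ := exists_large_fiber B (by positivity : 0 < 1 / (30 * ρ)) hr3 hsum
  have hexpo : -(s / 5) ≤ -(N * (2 * (ρ ^ 12)⁻¹) * Real.log (1 / (1 / (30 * ρ)))) -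
      3 * (1 / (30 * ρ)) * N := by
    have h1 : 3 * (1 / (30 * ρ)) * N ≤ s / 10 := by
      have : 3 * (1 / (30 * ρ)) * N = N / ρ / 10 := by field_simp; ring
      rw [this]
      have : N / ρ ≤ s := by rw [div_le_iff₀ hρpos]; exact hNρ
      linarith
    have h2 : Real.log (1 / (1 / (30 * ρ))) ≤ 30 * ρ := by
      rw [one_div_one_div]
      linarith [Real.log_le_sub_one_of_pos (by positivity : 0 < 30 * ρ)]
    have h3 : N * (2 * (ρ ^ 12)⁻¹) * Real.log (1 / (1 / (30 * ρ))) ≤ s / 10 := by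
      calc N * (2 * (ρ ^ 12)⁻¹) * Real.log (1 / (1 / (30 * ρ)))
          ≤ N * (2 * (ρ ^ 12)⁻¹) * (30 * ρ) := by gcongr
        _ ≤ (s * ρ) * (2 * (ρ ^ 12)⁻¹) * (30 * ρ) := by gcongr
        _ = 60 * s / ρ ^ 10 := by field_simp; norm_num
        _ ≤ 60 * s / 2 ^ 10 := by gcongr
        _ ≤ s / 10 := by linarith
    linarith
  obtain ⟨x, hx, y, hy, hxy⟩ := exists_far_pair (Finset.univ.filter fun x => B x = b) (by
    refine le_trans ?_ hb
    rw [hcard]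
    gcongr)
  have hBx : B x = b := (Finset.mem_filter.mp hx).2
  have hBy : B y = b := (Finset.mem_filter.mp hy).2
  refine ⟨fun i => (boolSign (x i) - boolSign (y i)) / 2, fun i => ?_, ?_, fun j => ?_⟩
  · rcases hxi : x i <;> rcases hyi : y i <;> norm_num [boolSign, hxi, hyi]
  · refine hxy.trans (le_of_eq ?_)
    congr 2
    ext i
    simp only [Finset.mem_filter, Finset.mem_univ, true_and]
    cases x i <;> cases y i <;> norm_num [boolSign]
  · have heq : ∑ i, a j i * ((boolSign (x i) - boolSign (y i)) / 2) =
        l * (z x j / (2 * l) - z y j / (2 * l)) := by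
      have : l * (z x j / (2 * l) - z y j / (2 * l)) = (z x j - z y j) / 2 := by field_simp
      rw [this]
      simp only [z]
      rw [← Finset.sum_sub_distrib, Finset.sum_div]
      exact Finset.sum_congr rfl fun i _ => by ring
    have h1 := abs_sub_round (z x j / (2 * l))
    have h2 := abs_sub_round (z y j / (2 * l))
    have h3 : round (z x j / (2 * l)) = round (z y j / (2 * l)) :=
      congrFun (hBx.trans hBy.symm) j
    rw [h3] at h1
    rw [abs_le] at h1 h2
    rw [heq, abs_mul, abs_of_pos hl]
    refine mul_le_of_le_one_right hl.le ?_
    rw [abs_le]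
    constructor <;> linarith

/-- Partial coloring of a subset of the columns, with many entries equal to `-1`. -/
lemma exists_partial_coloring_finset {ι J : Type*} [Fintype ι] [Fintype J]
    (S : Finset ι) (hS : S.Nonempty) (a : J → ι → ℝ) (ha : ∀ j, ∀ i ∈ S, |a j i| ≤ 1) :
    ∃ χ : ι → ℝ, (∀ i, |χ i| ≤ 1) ∧ (∀ i ∉ S, χ i = 0) ∧
      (S.card : ℝ) / 20 ≤ (Finset.univ.filter fun i => χ i = -1).card ∧
      ∀ j, |∑ i, a j i * χ i| ≤
        Real.sqrt (24 * S.card * Real.log (2 + (Fintype.card J : ℝ) / S.card)) := by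
  have hne : Nonempty S := hS.to_subtype
  obtain ⟨χ, hχ, hmany, hdisc⟩ :=
    exists_partial_coloring (fun j (i : S) => a j i) fun j i => ha j i i.2
  rw [Fintype.card_coe] at hmany hdisc
  wlog hneg : (Finset.univ.filter fun i => χ i = 1).card ≤
      (Finset.univ.filter fun i => χ i = -1).card generalizing χ
  · refine this (fun i => -χ i) (fun i => ?_) ?_ (fun j => ?_) ?_
    · rcases hχ i with h | h | h <;> simp [h]
    · simpa only [ne_eq, neg_eq_zero] using hmany
    · simpa only [mul_neg, Finset.sum_neg_distrib, abs_neg] using hdisc j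
    · simpa only [neg_inj, neg_eq_iff_eq_neg, neg_neg] using (not_le.mp hneg).le
  have hsplit : (Finset.univ.filter fun i => χ i ≠ 0).card ≤
      (Finset.univ.filter fun i => χ i = 1).card +
        (Finset.univ.filter fun i => χ i = -1).card := by
    refine (Finset.card_le_card fun i hi => ?_).trans (Finset.card_union_le _ _)
    simp only [Finset.mem_filter, Finset.mem_univ, true_and, Finset.mem_union] at hi ⊢
    exact (hχ i).resolve_left hi
  have hhalf : (S.card : ℝ) / 20 ≤ (Finset.univ.filter fun i => χ i = -1).card := by
    have h1 : ((Finset.univ.filter fun i => χ i ≠ 0).card : ℝ) ≤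
        (Finset.univ.filter fun i => χ i = 1).card +
          (Finset.univ.filter fun i => χ i = -1).card := by exact_mod_cast hsplit
    have h2 : ((Finset.univ.filter fun i => χ i = 1).card : ℝ) ≤
        (Finset.univ.filter fun i => χ i = -1).card := by exact_mod_cast hneg
    linarith
  let ψ : ι → ℝ := fun i => if h : i ∈ S then χ ⟨i, h⟩ else 0
  have hψ : ∀ i : S, ψ i = χ i := fun i => by simp [ψ]
  have hψ0 : ∀ i ∉ S, ψ i = 0 := fun i hi => by simp [ψ, hi]
  refine ⟨ψ, fun i => ?_, hψ0, hhalf.trans ?_, fun j => ?_⟩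
  · by_cases hi : i ∈ S
    · rw [hψ ⟨i, hi⟩]
      rcases hχ ⟨i, hi⟩ with h | h | h <;> simp [h]
    · simp [hψ0 i hi]
  · rw [← Finset.card_map (Function.Embedding.subtype (· ∈ S))]
    refine Nat.cast_le.mpr (Finset.card_le_card fun i hi => ?_)
    obtain ⟨i, hχi, rfl⟩ := Finset.mem_map.mp hi
    exact Finset.mem_filter.mpr ⟨Finset.mem_univ _, (hψ i).trans (Finset.mem_filter.mp hχi).2⟩
  · refine le_of_eq_of_le ?_ (hdisc j)
    rw [← Finset.sum_subset (Finset.subset_univ S) fun i _ hi => by rw [hψ0 i hi, mul_zero],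
      ← Finset.sum_coe_sort S]
    simp_rw [hψ]

lemma abs_mulVec_le {J ι : Type*} [Fintype ι] (U : Matrix J ι ℝ)
    (hU : ∀ i j, U i j ∈ Set.Icc (-1 : ℝ) 1) (w : ι → ℝ) (i : J) :
    |U.mulVec w i| ≤ ∑ j, |w j| := by
  refine (Finset.abs_sum_le_sum_abs _ _).trans (Finset.sum_le_sum fun j _ => ?_)
  rw [abs_mul]
  exact mul_le_of_le_one_left (abs_nonneg _) (abs_le.mpr (hU i j))

/-- The discrepancy of the rescaled matrix in terms of the support size. -/
lemma sqrt_discrepancy_le {n k s : ℝ} (hn : 0 ≤ n) (hk : 2 ≤ k) (hsk : s ≤ k) (hks : k / 2 ≤ s) :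
    2 / k * Real.sqrt (24 * s * Real.log (2 + (n + 1) / s)) ≤
      14 * Real.sqrt (Real.log (2 + n / k) / k) := by
  have hkpos : 0 < k := by linarith
  have hspos : 0 < s := by linarith
  have hx : 0 ≤ n / k := by positivity
  have hlog : Real.log (2 + (n + 1) / s) ≤ 2 * Real.log (2 + n / k) := by
    have hpow : 2 * Real.log (2 + n / k) = Real.log ((2 + n / k) ^ 2) := by
      rw [Real.log_pow]; norm_num
    rw [hpow]
    apply Real.log_le_log (by positivity)
    have h1 : (n + 1) / s ≤ (n + 1) / (k / 2) := by gcongr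
    have h2 : (n + 1) / (k / 2) = 2 * (n / k) + 2 / k := by field_simp
    have h3 : 2 / k ≤ 1 := by rw [div_le_one hkpos]; exact hk
    nlinarith
  have hlognn : 0 ≤ Real.log (2 + n / k) := Real.log_nonneg (by linarith)
  have hsqrt : Real.sqrt (24 * s * Real.log (2 + (n + 1) / s)) ≤
      7 * k * Real.sqrt (Real.log (2 + n / k) / k) := by
    apply Real.sqrt_le_iff.mpr
    refine ⟨by positivity, ?_⟩
    rw [mul_pow, Real.sq_sqrt (by positivity)]
    calc 24 * s * Real.log (2 + (n + 1) / s) ≤ 24 * s * (2 * Real.log (2 + n / k)) := by gcongr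
      _ ≤ 24 * k * (2 * Real.log (2 + n / k)) := by gcongr
      _ ≤ 49 * (k * Real.log (2 + n / k)) := by nlinarith [mul_nonneg hkpos.le hlognn]
      _ = (7 * k) ^ 2 * (Real.log (2 + n / k) / k) := by field_simp; ring
  calc 2 / k * Real.sqrt (24 * s * Real.log (2 + (n + 1) / s))
      ≤ 2 / k * (7 * k * Real.sqrt (Real.log (2 + n / k) / k)) := by gcongr
    _ = _ := by field_simp; ring

/-- At least half of the support of an `ℓ¹`-normalized vector has entries at most twice the
average. -/
lemma half_support_le_card_small {ι : Type*} [Fintype ι] (w : ι → ℝ) (hw : ∑ j, |w j| = 1)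
    {k : ℕ} (hk : (Finset.univ.filter fun j => w j ≠ 0).card = k) (hkpos : 0 < k) :
    (k : ℝ) / 2 ≤ (Finset.univ.filter fun j => w j ≠ 0 ∧ |w j| ≤ 2 / k).card := by
  have hkR : (0 : ℝ) < k := by exact_mod_cast hkpos
  have hbig : ((Finset.univ.filter fun j => w j ≠ 0 ∧ ¬ |w j| ≤ 2 / k).card : ℝ) * (2 / k) ≤ 1 := by
    rw [← hw, ← nsmul_eq_mul, ← Finset.sum_const]
    refine (Finset.sum_le_sum fun j hj => ?_).trans
      (Finset.sum_le_sum_of_subset_of_nonneg (Finset.subset_univ _) fun _ _ _ => abs_nonneg _)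
    exact (not_le.mp (Finset.mem_filter.mp hj).2.2).le
  have hsplit := Finset.card_filter_add_card_filter_not
    (s := Finset.univ.filter fun j => w j ≠ 0) (fun j => |w j| ≤ 2 / k)
  rw [Finset.filter_filter, Finset.filter_filter, hk] at hsplit
  have hsplitR : ((Finset.univ.filter fun j => w j ≠ 0 ∧ |w j| ≤ 2 / k).card : ℝ) +
      (Finset.univ.filter fun j => w j ≠ 0 ∧ ¬ |w j| ≤ 2 / k).card = k := by exact_mod_cast hsplit
  rw [mul_div_assoc', div_le_one hkR] at hbig
  linarith

/-- One round of sparsification: the support shrinks by a constant factor. -/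
lemma exists_support_shrink {ι : Type*} [Fintype ι] {n : ℕ} (U : Matrix (Fin n) ι ℝ)
    (hU : ∀ i j, U i j ∈ Set.Icc (-1 : ℝ) 1) (w : ι → ℝ) (hw : ∑ j, |w j| = 1) {k : ℕ}
    (hk : (Finset.univ.filter fun j => w j ≠ 0).card = k) (hk2 : 2 ≤ k) :
    ∃ w' : ι → ℝ, ∑ j, |w' j| = 1 ∧
      ((Finset.univ.filter fun j => w' j ≠ 0).card : ℝ) ≤ 39 / 40 * k ∧
      ∀ i, |U.mulVec w i - U.mulVec w' i| ≤
        28 * Real.sqrt (Real.log (2 + (n : ℝ) / k) / k) := by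
  have hk2R : (2 : ℝ) ≤ k := by exact_mod_cast hk2
  have hkR : (0 : ℝ) < k := by linarith
  set S := Finset.univ.filter fun j => w j ≠ 0 ∧ |w j| ≤ 2 / k with hS
  have hScard : (k : ℝ) / 2 ≤ S.card := half_support_le_card_small w hw hk (by omega)
  have hSsub : S ⊆ Finset.univ.filter fun j => w j ≠ 0 := fun j hj =>
    Finset.mem_filter.mpr ⟨Finset.mem_univ j, (Finset.mem_filter.mp hj).2.1⟩
  have hSk : (S.card : ℝ) ≤ k := by
    rw [← hk]; exact_mod_cast Finset.card_le_card hSsub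
  have hSne : S.Nonempty := by
    rw [← Finset.card_pos]
    have : (0 : ℝ) < S.card := by linarith
    exact_mod_cast this
  let c : Option (Fin n) → ι → ℝ := fun o j => o.elim |w j| fun i => U i j * w j
  have hc : ∀ o j, |c o j| ≤ |w j| := by
    rintro (_ | i) j
    · simp [c]
    · simp only [c, Option.elim, abs_mul]
      exact mul_le_of_le_one_left (abs_nonneg _) (abs_le.mpr (hU i j))
  obtain ⟨χ, hχ1, hχ0, hχneg, hdisc⟩ := exists_partial_coloring_finset S hSne
    (fun o j => k / 2 * c o j) (by
      intro o j hj
      have hsmall : |w j| ≤ 2 / k := (Finset.mem_filter.mp hj).2.2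
      rw [abs_mul, abs_of_pos (by positivity : (0 : ℝ) < k / 2)]
      calc (k : ℝ) / 2 * |c o j| ≤ k / 2 * (2 / k) := by gcongr; exact (hc o j).trans hsmall
        _ = 1 := by field_simp)
  set Q := Real.sqrt (Real.log (2 + (n : ℝ) / k) / k) with hQ
  have hdisc' : ∀ o, |∑ j, c o j * χ j| ≤ 14 * Q := by
    intro o
    have h := hdisc o
    simp only [mul_assoc (k / 2 : ℝ)] at h
    rw [← Finset.mul_sum, abs_mul, abs_of_pos (by positivity : (0 : ℝ) < k / 2),
      Fintype.card_option, Fintype.card_fin, Nat.cast_add, Nat.cast_one] at h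
    refine le_trans ?_ (sqrt_discrepancy_le (Nat.cast_nonneg n) hk2R hSk hScard)
    calc |∑ j, c o j * χ j| = 2 / k * (k / 2 * |∑ j, c o j * χ j|) := by field_simp
      _ ≤ _ := by gcongr
  let v : ι → ℝ := fun j => w j * (1 + χ j)
  set σ := ∑ j, |v j| with hσ
  have hσnn : 0 ≤ σ := Finset.sum_nonneg fun _ _ => abs_nonneg _
  have hσ1 : |σ - 1| ≤ 14 * Q := by
    have : σ - 1 = ∑ j, c none j * χ j := by
      rw [hσ, ← hw, ← Finset.sum_sub_distrib]
      refine Finset.sum_congr rfl fun j _ => ?_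
      have : 0 ≤ 1 + χ j := by linarith [(abs_le.mp (hχ1 j)).1]
      simp only [v, c, Option.elim, abs_mul, abs_of_nonneg this]
      ring
    rw [this]; exact hdisc' none
  have hUv : ∀ i, |U.mulVec w i - U.mulVec v i| ≤ 14 * Q := by
    intro i
    have : U.mulVec w i - U.mulVec v i = -∑ j, c (some i) j * χ j := by
      simp only [Matrix.mulVec, dotProduct]
      rw [← Finset.sum_sub_distrib, ← Finset.sum_neg_distrib]
      refine Finset.sum_congr rfl fun j _ => ?_
      simp only [v, c, Option.elim]
      ring
    rw [this, abs_neg]; exact hdisc' (some i)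
  have hvcard : ((Finset.univ.filter fun j => v j ≠ 0).card : ℝ) ≤ 39 / 40 * k := by
    have hnegS : (Finset.univ.filter fun j => χ j = -1) ⊆
        Finset.univ.filter fun j => w j ≠ 0 := by
      intro j hj
      refine hSsub (by_contra fun hjS => ?_)
      have h1 := (Finset.mem_filter.mp hj).2
      rw [hχ0 j hjS] at h1
      norm_num at h1
    have hsub : (Finset.univ.filter fun j => v j ≠ 0) ⊆
        (Finset.univ.filter fun j => w j ≠ 0) \ Finset.univ.filter fun j => χ j = -1 := by
      intro j hj
      simp only [v, Finset.mem_filter, Finset.mem_univ, true_and, Finset.mem_sdiff,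
        mul_ne_zero_iff] at hj ⊢
      exact ⟨hj.1, fun h => hj.2 (by rw [h]; norm_num)⟩
    have hle := Finset.card_le_card hsub
    have hadd := Finset.card_sdiff_add_card_eq_card hnegS
    rw [hk] at hadd
    have hsum : ((Finset.univ.filter fun j => v j ≠ 0).card : ℝ) +
        (Finset.univ.filter fun j => χ j = -1).card ≤ k := by
      exact_mod_cast (by omega : (Finset.univ.filter fun j => v j ≠ 0).card +
        (Finset.univ.filter fun j => χ j = -1).card ≤ k)
    linarith
  rcases hσnn.eq_or_lt with hσ0 | hσpos
  · obtain ⟨j₀, -⟩ := hSne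
    have hsingle : ∑ j, |(Pi.single j₀ 1 : ι → ℝ) j| = 1 := by
      rw [Finset.sum_eq_single j₀] <;> simp +contextual
    refine ⟨Pi.single j₀ 1, hsingle, ?_, fun i => ?_⟩
    · have : (Finset.univ.filter fun j => (Pi.single j₀ 1 : ι → ℝ) j ≠ 0) = {j₀} := by
        ext j; simp [Pi.single_apply]
      rw [this, Finset.card_singleton]
      push_cast
      linarith
    · rw [← hσ0] at hσ1
      norm_num at hσ1
      have h1 := abs_mulVec_le U hU w i
      have h2 := abs_mulVec_le U hU (Pi.single j₀ 1) i
      rw [hw] at h1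
      rw [hsingle] at h2
      linarith [abs_sub (U.mulVec w i) (U.mulVec (Pi.single j₀ 1) i)]
  · refine ⟨σ⁻¹ • v, ?_, ?_, fun i => ?_⟩
    · simp only [Pi.smul_apply, smul_eq_mul, abs_mul, abs_of_pos (inv_pos.mpr hσpos)]
      rw [← Finset.mul_sum, ← hσ, inv_mul_cancel₀ hσpos.ne']
    · simpa [hσpos.ne'] using hvcard
    · have hscale : |U.mulVec v i - U.mulVec (σ⁻¹ • v) i| ≤ 14 * Q := by
        refine le_trans ?_ hσ1
        have heq : U.mulVec v i - U.mulVec (σ⁻¹ • v) i = (σ - 1) * (σ⁻¹ * U.mulVec v i) := by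
          rw [Matrix.mulVec_smul, Pi.smul_apply, smul_eq_mul]
          field_simp
        rw [heq, abs_mul]
        refine mul_le_of_le_one_right (abs_nonneg _) ?_
        rw [abs_mul, abs_of_pos (inv_pos.mpr hσpos), inv_mul_le_iff₀ hσpos, mul_one]
        exact abs_mulVec_le U hU v i
      linarith [abs_sub_le (U.mulVec w i) (U.mulVec v i) (U.mulVec (σ⁻¹ • v) i), hUv i]

lemma one_div_sqrt_shrink {k k' : ℝ} (hk' : 0 < k') (h : k' ≤ 39 / 40 * k) :
    101 / 100 * (1 / Real.sqrt k) ≤ 1 / Real.sqrt k' := by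
  have hk : 0 < k := by linarith
  have hsk := Real.sqrt_pos.mpr hk
  have hle : 101 / 100 * Real.sqrt k' ≤ Real.sqrt k := by
    apply Real.le_sqrt_of_sq_le
    rw [mul_pow, Real.sq_sqrt hk'.le]
    linarith
  rw [mul_one_div, div_le_div_iff₀ hsk (Real.sqrt_pos.mpr hk')]
  linarith

/-- Iterating the support reduction down to `T`; the errors form a geometric series, tracked by
the potential `2 / √T - 1 / √k`. -/
lemma exists_sparse_of_support {ι : Type*} [Fintype ι] {n : ℕ} (U : Matrix (Fin n) ι ℝ)
    (hU : ∀ i j, U i j ∈ Set.Icc (-1 : ℝ) 1) {T : ℕ} (hT : 0 < T) (k : ℕ) :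
    ∀ w : ι → ℝ, ∑ j, |w j| = 1 → (Finset.univ.filter fun j => w j ≠ 0).card = k → T < k →
      ∃ w' : ι → ℝ, ∑ j, |w' j| = 1 ∧ (Finset.univ.filter fun j => w' j ≠ 0).card ≤ T ∧
        ∀ i, |U.mulVec w i - U.mulVec w' i| ≤
          2800 * Real.sqrt (Real.log (2 + (n : ℝ) / T)) *
            (2 * (1 / Real.sqrt T) - 1 / Real.sqrt k) := by
  induction k using Nat.strong_induction_on with
  | _ k ih =>
  intro w hw hk hTk
  obtain ⟨v, hv, hvcard, hvU⟩ := exists_support_shrink U hU w hw hk (by omega)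
  have hTR : (0 : ℝ) < T := by exact_mod_cast hT
  have hTkR : (T : ℝ) < k := by exact_mod_cast hTk
  have hkR : (0 : ℝ) < k := hTR.trans hTkR
  set R := Real.sqrt (Real.log (2 + (n : ℝ) / T)) with hR
  have hRnn : 0 ≤ R := Real.sqrt_nonneg _
  have hstep : ∀ i, |U.mulVec w i - U.mulVec v i| ≤ 28 * R * (1 / Real.sqrt k) := by
    intro i
    refine (hvU i).trans ?_
    rw [Real.sqrt_div' _ hkR.le, mul_assoc, mul_one_div]
    have hlog : Real.sqrt (Real.log (2 + (n : ℝ) / k)) ≤ R := by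
      rw [hR]; gcongr
    gcongr
  set k' := (Finset.univ.filter fun j => v j ≠ 0).card with hk'
  by_cases hk'T : k' ≤ T
  · refine ⟨v, hv, hk'T, fun i => (hstep i).trans ?_⟩
    have h1 : 1 / Real.sqrt k ≤ 1 / Real.sqrt T :=
      one_div_le_one_div_of_le (Real.sqrt_pos.mpr hTR) (Real.sqrt_le_sqrt hTkR.le)
    have h2 : 0 ≤ 1 / Real.sqrt k := by positivity
    nlinarith [mul_le_mul_of_nonneg_left h1 hRnn, mul_nonneg hRnn h2]
  · have hk'pos : (0 : ℝ) < k' := by exact_mod_cast (by omega : 0 < k')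
    have hk'k : k' < k := by
      have : (k' : ℝ) < k := by linarith
      exact_mod_cast this
    obtain ⟨w', hw', hw'card, hw'U⟩ := ih k' hk'k v hv rfl (not_le.mp hk'T)
    refine ⟨w', hw', hw'card, fun i => ?_⟩
    have hshrink := mul_le_mul_of_nonneg_left (one_div_sqrt_shrink hk'pos hvcard) hRnn
    have htri := abs_sub_le (U.mulVec w i) (U.mulVec v i) (U.mulVec w' i)
    nlinarith [hstep i, hw'U i]

end Sparsification

/-- Sparsification Theorem: for any matrix `U ∈ [-1,1]^{n×m}`, any `w` with `‖w‖₁ = 1`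
and any positive `T ≤ m`, there is `w'` with `‖w'‖₁ = 1`, `‖w'‖₀ ≤ T` and
`‖Uw - Uw'‖_∞ ≤ C √(log(2 + n/T)/T)`. -/
theorem sparsification :
    ∃ C : ℝ, 0 < C ∧
      ∀ (n m : ℕ), 0 < n → 0 < m →
        ∀ U : Matrix (Fin n) (Fin m) ℝ, (∀ i j, U i j ∈ Set.Icc (-1 : ℝ) 1) →
          ∀ w : Fin m → ℝ, (∑ j, |w j|) = 1 →
            ∀ T : ℕ, 0 < T → T ≤ m →
              ∃ w' : Fin m → ℝ,
                (∑ j, |w' j|) = 1 ∧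
                (Finset.univ.filter (fun j => w' j ≠ 0)).card ≤ T ∧
                ∀ i, |U.mulVec w i - U.mulVec w' i| ≤
                  C * Real.sqrt (Real.log (2 + (n : ℝ) / (T : ℝ)) / (T : ℝ)) := by
  refine ⟨5600, by norm_num, fun n m _ _ U hU w hw T hT _ => ?_⟩
  by_cases hcard : (Finset.univ.filter fun j => w j ≠ 0).card ≤ T
  · refine ⟨w, hw, hcard, fun i => ?_⟩
    rw [sub_self, abs_zero]
    positivity
  · obtain ⟨w', hw', hw'card, hw'U⟩ :=
      Sparsification.exists_sparse_of_support U hU hT _ w hw rfl (not_le.mp hcard)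
    refine ⟨w', hw', hw'card, fun i => (hw'U i).trans ?_⟩
    rw [Real.sqrt_div' _ (Nat.cast_nonneg T), div_eq_mul_one_div (Real.sqrt _)]
    have h1 : 0 ≤ Real.sqrt (Real.log (2 + (n : ℝ) / T)) := Real.sqrt_nonneg _
    have h2 : 0 ≤ 1 / Real.sqrt ((Finset.univ.filter fun j => w j ≠ 0).card : ℝ) := by positivity
    nlinarith [mul_nonneg h1 h2]
end

section
/- There exists a universal constant C > 0 such that for all positive integers n, m, every matrix U ∈ [−1,1]^{n×m}, every vector w ∈ ℝ^m with ‖w‖₁ = 1 and all coordinates of w nonnegative, and every positive integer T ≤ m, there exists a vector w' ∈ ℝ^m with all coordinates nonnegative, ‖w'‖₁ = 1, ‖w'‖₀ ≤ T, and ‖Uw − Uw'‖_∞ ≤ C·√(log(2 + n/T)/T). -/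
open Finset
open scoped Classical

/-- The sign `±1` encoded by a Boolean. -/
def boolSign (b : Bool) : ℝ := if b then 1 else -1

/-- The exponential moments of a Rademacher sum with coefficients in `[-1, 1]` are subgaussian. -/
lemma sum_exp_rademacher_le {ι : Type*} [Fintype ι] (v : ι → ℝ) (hv : ∀ j, |v j| ≤ 1) (t : ℝ) :
    ∑ ε : ι → Bool, Real.exp (t * ∑ j, boolSign (ε j) * v j) ≤
      2 ^ Fintype.card ι * Real.exp (t ^ 2 * Fintype.card ι / 2) := by
  have hprod : ∑ ε : ι → Bool, Real.exp (t * ∑ j, boolSign (ε j) * v j) =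
      ∏ j, ∑ b : Bool, Real.exp (t * (boolSign b * v j)) := by
    rw [Fintype.prod_sum]
    refine Finset.sum_congr rfl fun ε _ => ?_
    rw [← Real.exp_sum, Finset.mul_sum]
  have hfactor : ∀ j, ∑ b : Bool, Real.exp (t * (boolSign b * v j)) ≤
      2 * Real.exp (t ^ 2 / 2) := by
    intro j
    have hcosh : ∑ b : Bool, Real.exp (t * (boolSign b * v j)) = 2 * Real.cosh (t * v j) := by
      rw [Real.cosh_eq]
      simp [boolSign]
      ring
    rw [hcosh]
    have hsq : (t * v j) ^ 2 ≤ t ^ 2 := by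
      rw [mul_pow]
      have : v j ^ 2 ≤ 1 := by
        rw [← sq_abs]
        exact pow_le_one₀ (abs_nonneg _) (hv j)
      nlinarith [sq_nonneg t]
    have := (Real.cosh_le_exp_half_sq (t * v j)).trans
      (Real.exp_le_exp.2 (div_le_div_of_nonneg_right hsq (by norm_num : (0 : ℝ) ≤ 2)))
    linarith
  rw [hprod]
  calc _ ≤ ∏ _j : ι, (2 * Real.exp (t ^ 2 / 2)) :=
        Finset.prod_le_prod (fun j _ => Finset.sum_nonneg fun b _ => (Real.exp_pos _).le)
          fun j _ => hfactor j
    _ = _ := by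
        rw [Finset.prod_const, Finset.card_univ, mul_pow, ← Real.exp_nat_mul]
        congr 2
        ring

lemma abs_round_le_exp (y a : ℝ) (ha : 1 ≤ a) :
    ((|round y| : ℤ) : ℝ) ≤ Real.exp (-(a / 2)) * (Real.exp (a * y) + Real.exp (-a * y)) := by
  rcases eq_or_ne (round y) 0 with h | h
  · rw [h]
    simp only [abs_zero, Int.cast_zero]
    positivity
  have hk : (1 : ℝ) ≤ ((|round y| : ℤ) : ℝ) := by
    exact_mod_cast Int.one_le_abs h
  have hy : ((|round y| : ℤ) : ℝ) - 1 / 2 ≤ |y| := by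
    have h1 := abs_sub_round y
    have h2 := abs_sub_abs_le_abs_sub (round y : ℝ) y
    rw [abs_sub_comm] at h2
    push_cast
    linarith
  have hexp : ((|round y| : ℤ) : ℝ) ≤ Real.exp (-(a / 2)) * Real.exp (a * |y|) := by
    rw [← Real.exp_add]
    have := Real.add_one_le_exp (-(a / 2) + a * |y|)
    nlinarith
  refine hexp.trans (mul_le_mul_of_nonneg_left ?_ (Real.exp_pos _).le)
  rcases abs_cases y with ⟨h', _⟩ | ⟨h', _⟩
  · rw [h']
    linarith [Real.exp_pos (-a * y)]
  · rw [h', mul_neg, ← neg_mul]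
    linarith [Real.exp_pos (a * y)]

/-- At bucket width `4 √(N L)`, the average bucket index of a Rademacher sum of length `N` is at
most `2 exp (-2 L)`. -/
lemma sum_abs_round_rademacher_le {ι : Type*} [Fintype ι] [Nonempty ι] (v : ι → ℝ)
    (hv : ∀ j, |v j| ≤ 1) (L : ℝ) (hL : 1 ≤ L) :
    ∑ ε : ι → Bool, ((|round ((∑ j, boolSign (ε j) * v j) /
        (4 * Real.sqrt (Fintype.card ι * L)))| : ℤ) : ℝ) ≤
      2 ^ Fintype.card ι * (2 * Real.exp (-(2 * L))) := by
  have hN : (0 : ℝ) < Fintype.card ι := by exact_mod_cast Fintype.card_pos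
  set Δ : ℝ := 4 * Real.sqrt (Fintype.card ι * L) with hΔ
  have hΔpos : 0 < Δ := by positivity
  have hΔsq : Δ ^ 2 = 16 * (Fintype.card ι * L) := by
    rw [hΔ, mul_pow, Real.sq_sqrt (by positivity)]
    norm_num
  have hexponent : (8 * L / Δ) ^ 2 * Fintype.card ι / 2 = 2 * L := by
    rw [div_pow, hΔsq]
    field_simp
    norm_num
  have hplus := sum_exp_rademacher_le v hv (8 * L / Δ)
  have hminus := sum_exp_rademacher_le v hv (-(8 * L / Δ))
  rw [neg_sq] at hminus
  rw [hexponent] at hplus hminus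
  calc _ ≤ ∑ ε : ι → Bool, Real.exp (-(4 * L)) *
        (Real.exp (8 * L / Δ * ∑ j, boolSign (ε j) * v j) +
          Real.exp (-(8 * L / Δ) * ∑ j, boolSign (ε j) * v j)) := by
        refine Finset.sum_le_sum fun ε _ => ?_
        refine (abs_round_le_exp _ (8 * L) (by linarith)).trans_eq ?_
        congr 2
        · ring
        · congr 1; ring
        · congr 1; ring
    _ ≤ Real.exp (-(4 * L)) * (2 ^ Fintype.card ι * Real.exp (2 * L) +
          2 ^ Fintype.card ι * Real.exp (2 * L)) := by
        rw [← Finset.mul_sum, Finset.sum_add_distrib]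
        gcongr
    _ = 2 ^ Fintype.card ι * (2 * (Real.exp (-(4 * L)) * Real.exp (2 * L))) := by ring
    _ = _ := by
        rw [← Real.exp_add]
        congr 3
        ring

lemma sum_Icc_exp_neg_abs_le (L : ℝ) (hL : 1 ≤ L) (M : ℕ) :
    ∑ b ∈ Finset.Icc (-(M : ℤ)) M, Real.exp (-(L * ((|b| : ℤ) : ℝ))) ≤
      Real.exp (4 * Real.exp (-L)) := by
  have hr : Real.exp (-L) ≤ 1 / 2 := by
    rw [Real.exp_neg, ← one_div]
    exact one_div_le_one_div_of_le (by norm_num) (by linarith [Real.add_one_le_exp L])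
  have hr0 := Real.exp_pos (-L)
  have hgeom : ∑ k ∈ Finset.range (M + 1), Real.exp (-(L * ((|(k : ℤ)| : ℤ) : ℝ))) ≤
      (1 - Real.exp (-L))⁻¹ := by
    rw [← tsum_geometric_of_lt_one hr0.le (by linarith)]
    have hs := summable_geometric_of_lt_one hr0.le (by linarith)
    refine le_trans (le_of_eq ?_)
      (hs.sum_le_tsum (Finset.range (M + 1)) fun k _ => pow_nonneg hr0.le k)
    refine Finset.sum_congr rfl fun k _ => ?_
    rw [← Real.exp_nat_mul]
    simp only [Nat.abs_cast, Int.cast_natCast]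
    congr 1
    ring
  have heven : Function.Even fun b : ℤ => Real.exp (-(L * ((|b| : ℤ) : ℝ))) := fun b => by
    simp only [abs_neg]
  rw [Finset.sum_Icc_of_even_eq_range heven]
  have hinv : 2 * (1 - Real.exp (-L))⁻¹ - 1 ≤ 1 + 4 * Real.exp (-L) := by
    have hpos : 0 < 1 - Real.exp (-L) := by linarith
    have : (1 - Real.exp (-L))⁻¹ ≤ 1 + 2 * Real.exp (-L) := by
      rw [inv_le_iff_one_le_mul₀ hpos]
      nlinarith
    linarith
  have := Real.add_one_le_exp (4 * Real.exp (-L))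
  simp only [abs_zero, Int.cast_zero, mul_zero, neg_zero, Real.exp_zero, nsmul_eq_mul]
  push_cast at hgeom ⊢
  linarith

/-- A set of sign vectors of Hamming diameter less than `N / 10` is small. -/
lemma card_le_of_hammingDist_lt {ι : Type*} [Fintype ι] (F : Finset (ι → Bool))
    (hF : ∀ ε ∈ F, ∀ ε' ∈ F, 10 * hammingDist ε ε' < Fintype.card ι) :
    (F.card : ℝ) ≤ Real.exp (Fintype.card ι / 5) * (1 + Real.exp (-2)) ^ Fintype.card ι := by
  rcases F.eq_empty_or_nonempty with rfl | ⟨ε₀, h₀⟩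
  · simp only [Finset.card_empty, Nat.cast_zero]
    positivity
  have hgen : ∑ ε : ι → Bool, Real.exp (-(2 * (hammingDist ε₀ ε : ℝ))) =
      (1 + Real.exp (-2)) ^ Fintype.card ι := by
    have hprod : ∏ j : ι, ∑ b : Bool, (if ε₀ j ≠ b then Real.exp (-2) else 1) =
        (1 + Real.exp (-2)) ^ Fintype.card ι := by
      rw [← Finset.card_univ, ← Finset.prod_const]
      refine Finset.prod_congr rfl fun j _ => ?_
      cases ε₀ j <;> simp [add_comm]
    rw [← hprod, Fintype.prod_sum]
    refine Finset.sum_congr rfl fun ε _ => ?_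
    rw [Finset.prod_ite, Finset.prod_const, Finset.prod_const_one, mul_one, ← Real.exp_nat_mul]
    congr 1
    simp only [hammingDist]
    ring_nf
  rw [← hgen, Finset.mul_sum]
  calc (F.card : ℝ) = ∑ ε ∈ F, (1 : ℝ) := by simp
    _ ≤ ∑ ε ∈ F, Real.exp (Fintype.card ι / 5) * Real.exp (-(2 * (hammingDist ε₀ ε : ℝ))) := by
        refine Finset.sum_le_sum fun ε hε => ?_
        rw [← Real.exp_add]
        apply Real.one_le_exp
        have : (10 * hammingDist ε₀ ε : ℝ) < Fintype.card ι := by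
          exact_mod_cast hF ε₀ h₀ ε hε
        linarith
    _ ≤ _ := Finset.sum_le_sum_of_subset_of_nonneg (Finset.subset_univ _)
        fun _ _ _ => by positivity

/-- Among the sign vectors there are two, far apart in Hamming distance, whose images under a
matrix with entries in `[-1, 1]` are close in every coordinate. -/
lemma exists_far_signs_with_close_images {ι ρ : Type*} [Fintype ι] [Nonempty ι] [Fintype ρ]
    (V : ρ → ι → ℝ) (hV : ∀ i j, |V i j| ≤ 1) (L : ℝ) (hL : 1 ≤ L)
    (hcard : Fintype.card ρ * Real.exp (-L) ≤ Fintype.card ι / 80) :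
    ∃ ε ε' : ι → Bool, Fintype.card ι ≤ 10 * hammingDist ε ε' ∧
      ∀ i, |∑ j, boolSign (ε j) * V i j - ∑ j, boolSign (ε' j) * V i j| ≤
        4 * Real.sqrt (Fintype.card ι * L) := by
  by_contra! hcon
  have hN : (0 : ℝ) < Fintype.card ι := by exact_mod_cast Fintype.card_pos
  set N := Fintype.card ι with hNdef
  set Δ : ℝ := 4 * Real.sqrt (N * L) with hΔ
  have hΔpos : 0 < Δ := by positivity
  set b : (ι → Bool) → ρ → ℤ := fun ε i => round ((∑ j, boolSign (ε j) * V i j) / Δ) with hb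
  have hfiber : ∀ ε ε', b ε = b ε' → 10 * hammingDist ε ε' < N := by
    intro ε ε' h
    by_contra! hfar
    obtain ⟨i, hi⟩ := hcon ε ε' hfar
    have h1 := abs_sub_round ((∑ j, boolSign (ε j) * V i j) / Δ)
    have h2 := abs_sub_round ((∑ j, boolSign (ε' j) * V i j) / Δ)
    have h3 : round ((∑ j, boolSign (ε j) * V i j) / Δ) =
        round ((∑ j, boolSign (ε' j) * V i j) / Δ) := congrFun h i
    rw [h3] at h1
    have h4 : |(∑ j, boolSign (ε j) * V i j) / Δ - (∑ j, boolSign (ε' j) * V i j) / Δ| ≤ 1 := by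
      rw [abs_le] at h1 h2 ⊢
      constructor <;> linarith [h1.1, h1.2, h2.1, h2.2]
    rw [← sub_div, abs_div, abs_of_pos hΔpos, div_le_one hΔpos] at h4
    linarith
  set Φ : (ρ → ℤ) → ℝ := fun p => ∑ i, L * ((|p i| : ℤ) : ℝ) with hΦ
  set a : ℝ := Fintype.card ρ * (2 * Real.exp (-L)) with ha
  have hmean : ∑ ε, Φ (b ε) ≤ 2 ^ N * a := by
    have hrow : ∀ i, ∑ ε : ι → Bool, L * ((|b ε i| : ℤ) : ℝ) ≤ 2 ^ N * (2 * Real.exp (-L)) := by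
      intro i
      rw [← Finset.mul_sum]
      have h1 := sum_abs_round_rademacher_le (V i) (hV i) L hL
      have h2 : L * Real.exp (-(2 * L)) ≤ Real.exp (-L) := by
        have h3 : Real.exp (-(2 * L)) * Real.exp L = Real.exp (-L) := by
          rw [← Real.exp_add]; congr 1; ring
        rw [← h3, mul_comm]
        exact mul_le_mul_of_nonneg_left (by linarith [Real.add_one_le_exp L]) (Real.exp_pos _).le
      calc _ ≤ L * (2 ^ N * (2 * Real.exp (-(2 * L)))) :=
            mul_le_mul_of_nonneg_left h1 (by linarith)
        _ = 2 ^ N * (2 * (L * Real.exp (-(2 * L)))) := by ring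
        _ ≤ _ := by gcongr
    rw [Finset.sum_comm]
    calc _ ≤ ∑ _i : ρ, (2 : ℝ) ^ N * (2 * Real.exp (-L)) := Finset.sum_le_sum fun i _ => hrow i
      _ = _ := by
        rw [Finset.sum_const, Finset.card_univ, nsmul_eq_mul, ha]
        ring
  have hlower : 2 ^ N * Real.exp (-a) ≤ ∑ ε, Real.exp (-Φ (b ε)) := by
    have hpoint : ∀ ε, Real.exp (-a) * (1 + a - Φ (b ε)) ≤ Real.exp (-Φ (b ε)) := by
      intro ε
      have h1 : Real.exp (-Φ (b ε)) = Real.exp (-a) * Real.exp (a - Φ (b ε)) := by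
        rw [← Real.exp_add]; congr 1; ring
      rw [h1]
      exact mul_le_mul_of_nonneg_left (by linarith [Real.add_one_le_exp (a - Φ (b ε))])
        (Real.exp_pos _).le
    refine le_trans ?_ (Finset.sum_le_sum fun ε _ => hpoint ε)
    rw [← Finset.mul_sum, Finset.sum_sub_distrib, Finset.sum_const, Finset.card_univ,
      Fintype.card_fun, Fintype.card_bool, nsmul_eq_mul, mul_comm]
    refine mul_le_mul_of_nonneg_left ?_ (Real.exp_pos _).le
    push_cast
    linarith
  set B : ℝ := Real.exp (N / 5) * (1 + Real.exp (-2)) ^ N with hB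
  have hBpos : 0 ≤ B := by positivity
  obtain ⟨M, hM⟩ : ∃ M : ℕ, ∀ ε i, b ε i ∈ Finset.Icc (-(M : ℤ)) M := by
    refine ⟨∑ ε, ∑ i, (b ε i).natAbs, fun ε i => ?_⟩
    have h1 : (b ε i).natAbs ≤ ∑ i, (b ε i).natAbs :=
      Finset.single_le_sum (f := fun i => (b ε i).natAbs) (fun _ _ => Nat.zero_le _)
        (Finset.mem_univ i)
    have h2 : ∑ i, (b ε i).natAbs ≤ ∑ ε, ∑ i, (b ε i).natAbs :=
      Finset.single_le_sum (f := fun ε => ∑ i, (b ε i).natAbs) (fun _ _ => Nat.zero_le _)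
        (Finset.mem_univ ε)
    rw [Finset.mem_Icc]
    omega
  have hupper : ∑ ε, Real.exp (-Φ (b ε)) ≤ B * Real.exp (Fintype.card ρ * (4 * Real.exp (-L))) := by
    have hmaps : ∀ ε ∈ (Finset.univ : Finset (ι → Bool)),
        b ε ∈ Fintype.piFinset fun _ : ρ => Finset.Icc (-(M : ℤ)) M := fun ε _ =>
      Fintype.mem_piFinset.2 (hM ε)
    rw [← Finset.sum_fiberwise_of_maps_to hmaps]
    calc _ ≤ ∑ p ∈ Fintype.piFinset fun _ : ρ => Finset.Icc (-(M : ℤ)) M,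
          B * Real.exp (-Φ p) := by
          refine Finset.sum_le_sum fun p _ => ?_
          rw [Finset.sum_congr rfl (g := fun _ => Real.exp (-Φ p))
            (fun ε hε => by rw [(Finset.mem_filter.1 hε).2]), Finset.sum_const, nsmul_eq_mul]
          refine mul_le_mul_of_nonneg_right ?_ (Real.exp_pos _).le
          refine card_le_of_hammingDist_lt _ fun ε hε ε' hε' => hfiber ε ε' ?_
          rw [(Finset.mem_filter.1 hε).2, (Finset.mem_filter.1 hε').2]
      _ = B * ∏ _i : ρ, ∑ k ∈ Finset.Icc (-(M : ℤ)) M, Real.exp (-(L * ((|k| : ℤ) : ℝ))) := by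
          rw [← Finset.mul_sum, ← Finset.sum_prod_piFinset]
          congr 1
          refine Finset.sum_congr rfl fun p _ => ?_
          rw [← Real.exp_sum, Finset.sum_neg_distrib]
      _ ≤ B * ∏ _i : ρ, Real.exp (4 * Real.exp (-L)) := by
          refine mul_le_mul_of_nonneg_left (Finset.prod_le_prod (fun i _ =>
            Finset.sum_nonneg fun _ _ => (Real.exp_pos _).le) fun i _ => ?_) hBpos
          exact sum_Icc_exp_neg_abs_le L hL M
      _ = _ := by
          rw [Finset.prod_const, Finset.card_univ, ← Real.exp_nat_mul]
  have hcompare : (2 : ℝ) ^ N ≤ (Real.exp (11 / 40) * (1 + Real.exp (-2))) ^ N := by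
    have h1 := hlower.trans hupper
    have h2 : (2 : ℝ) ^ N ≤
        B * Real.exp (Fintype.card ρ * (4 * Real.exp (-L))) * Real.exp a := by
      rw [← div_le_iff₀ (Real.exp_pos a), div_eq_mul_inv, ← Real.exp_neg]
      exact h1
    refine h2.trans ?_
    rw [hB, mul_pow, ← Real.exp_nat_mul]
    calc _ = Real.exp (N / 5 + Fintype.card ρ * (4 * Real.exp (-L)) + a) *
          (1 + Real.exp (-2)) ^ N := by
          rw [Real.exp_add, Real.exp_add]
          ring
      _ ≤ _ := by
          gcongr
          rw [ha]
          linarith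
  have hlt : Real.exp (11 / 40) * (1 + Real.exp (-2)) < 2 := by
    have h1 : Real.exp (11 / 40) ≤ 40 / 29 := by
      have h2 := Real.one_sub_le_exp_neg (11 / 40)
      rw [Real.exp_neg, le_inv_comm₀ (by norm_num) (Real.exp_pos _)] at h2
      exact h2.trans_eq (by norm_num)
    have h3 : Real.exp (-2) ≤ 1 / 3 := by
      rw [Real.exp_neg, ← one_div]
      exact one_div_le_one_div_of_le (by norm_num)
        (by linarith [Real.add_one_le_exp (2 : ℝ)])
    nlinarith [Real.exp_pos (11 / 40), Real.exp_pos (-2)]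
  exact absurd hcompare (not_le.2 (pow_lt_pow_left₀ hlt (by positivity) Fintype.card_ne_zero))

/-- Partial coloring: a matrix with entries in `[-1, 1]` admits a vector with entries in
`{-1, 0, 1}`, a constant fraction of which equal `-1`, with small discrepancy. -/
lemma exists_partial_coloring {ι ρ : Type*} [Fintype ι] [Nonempty ι] [Fintype ρ]
    (V : ρ → ι → ℝ) (hV : ∀ i j, |V i j| ≤ 1) (L : ℝ) (hL : 1 ≤ L)
    (hcard : Fintype.card ρ * Real.exp (-L) ≤ Fintype.card ι / 80) :
    ∃ x : ι → ℝ, (∀ j, |x j| ≤ 1) ∧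
      Fintype.card ι ≤ 20 * (Finset.univ.filter fun j => x j = -1).card ∧
      ∀ i, |∑ j, x j * V i j| ≤ 2 * Real.sqrt (Fintype.card ι * L) := by
  obtain ⟨ε, ε', hdist, hclose⟩ := exists_far_signs_with_close_images V hV L hL hcard
  have key : ∀ δ δ' : ι → Bool,
      (∀ i, |∑ j, boolSign (δ j) * V i j - ∑ j, boolSign (δ' j) * V i j| ≤
        4 * Real.sqrt (Fintype.card ι * L)) →
      Fintype.card ι ≤ 20 * (Finset.univ.filter fun j => δ j = false ∧ δ' j = true).card →
      ∃ x : ι → ℝ, (∀ j, |x j| ≤ 1) ∧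
        Fintype.card ι ≤ 20 * (Finset.univ.filter fun j => x j = -1).card ∧
        ∀ i, |∑ j, x j * V i j| ≤ 2 * Real.sqrt (Fintype.card ι * L) := by
    intro δ δ' hδ hcount
    refine ⟨fun j => (boolSign (δ j) - boolSign (δ' j)) / 2, fun j => ?_, ?_, fun i => ?_⟩
    · cases h1 : δ j <;> cases h2 : δ' j <;> norm_num [boolSign, h1, h2]
    · refine hcount.trans (Nat.mul_le_mul_left _ (Finset.card_le_card fun j hj => ?_))
      obtain ⟨h1, h2⟩ := (Finset.mem_filter.1 hj).2
      simp only [Finset.mem_filter, Finset.mem_univ, true_and, h1, h2]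
      norm_num [boolSign]
    · have h1 : ∑ j, (boolSign (δ j) - boolSign (δ' j)) / 2 * V i j =
          (∑ j, boolSign (δ j) * V i j - ∑ j, boolSign (δ' j) * V i j) / 2 := by
        rw [← Finset.sum_sub_distrib, Finset.sum_div]
        exact Finset.sum_congr rfl fun j _ => by ring
      rw [h1, abs_div, abs_two]
      linarith [hδ i]
  have hsplit : hammingDist ε ε' ≤
      (Finset.univ.filter fun j => ε j = false ∧ ε' j = true).card +
        (Finset.univ.filter fun j => ε' j = false ∧ ε j = true).card := by
    refine le_trans (Finset.card_le_card fun j hj => ?_) (Finset.card_union_le _ _)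
    have hne := (Finset.mem_filter.1 hj).2
    simp only [Finset.mem_union, Finset.mem_filter, Finset.mem_univ, true_and]
    revert hne
    cases ε j <;> cases ε' j <;> simp
  rcases le_total (Finset.univ.filter fun j => ε' j = false ∧ ε j = true).card
    (Finset.univ.filter fun j => ε j = false ∧ ε' j = true).card with h | h
  · exact key ε ε' hclose (by omega)
  · exact key ε' ε (fun i => by rw [abs_sub_comm]; exact hclose i) (by omega)

/-- A probability vector can be replaced by a nonnegative vector whose support is smaller by a
constant factor, at small cost in the image under a matrix with entries in `[-1, 1]`. -/
lemma exists_sparser_vector {κ ρ : Type*} [Fintype κ] [Fintype ρ] (U : ρ → κ → ℝ)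
    (hU : ∀ i j, |U i j| ≤ 1) (w : κ → ℝ) (hw : ∀ j, 0 ≤ w j) (hsum : ∑ j, w j = 1)
    (s : ℕ) (hs : (Finset.univ.filter fun j => w j ≠ 0).card = s) (hspos : 0 < s)
    (L : ℝ) (hL : 1 ≤ L) (hcard : Fintype.card ρ * Real.exp (-L) ≤ s / 160) :
    ∃ w₁ : κ → ℝ, (∀ j, 0 ≤ w₁ j) ∧
      40 * (Finset.univ.filter fun j => w₁ j ≠ 0).card ≤ 39 * s ∧
      ∀ i, |∑ j, U i j * w j - ∑ j, U i j * w₁ j| ≤ 4 * Real.sqrt (L / s) := by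
  have hs0 : (0 : ℝ) < s := by exact_mod_cast hspos
  set J : Finset κ := Finset.univ.filter fun j => w j ≠ 0 ∧ w j * s ≤ 2 with hJ
  set H : Finset κ := Finset.univ.filter fun j => w j ≠ 0 ∧ ¬ w j * s ≤ 2 with hH
  have hJH : J.card + H.card = s := by
    rw [← hs, hJ, hH, ← Finset.filter_filter, ← Finset.filter_filter,
      Finset.card_filter_add_card_filter_not]
  have hHcard : 2 * H.card ≤ s := by
    have h1 : ∑ _j ∈ H, (2 : ℝ) ≤ ∑ j, w j * s :=
      le_trans (Finset.sum_le_sum fun j hj => (not_le.1 (Finset.mem_filter.1 hj).2.2).le)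
        (Finset.sum_le_sum_of_subset_of_nonneg (Finset.subset_univ _)
          fun j _ _ => mul_nonneg (hw j) hs0.le)
    rw [← Finset.sum_mul, hsum, Finset.sum_const, nsmul_eq_mul] at h1
    have h2 : ((2 * H.card : ℕ) : ℝ) ≤ s := by
      push_cast
      linarith
    exact_mod_cast h2
  have hJcard : s ≤ 2 * J.card := by omega
  have hJle : J.card ≤ s := by omega
  have hJne : J.Nonempty := Finset.card_pos.1 (by omega)
  have : Nonempty J := hJne.to_subtype
  have hJreal : (s : ℝ) ≤ 2 * J.card := by exact_mod_cast hJcard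
  obtain ⟨x, hx, hxcard, hdisc⟩ := exists_partial_coloring
    (fun (i : ρ) (j : J) => U i j * (w j * s / 2))
    (fun i j => by
      have h1 := (Finset.mem_filter.1 j.2).2.2
      have h2 : 0 ≤ w j * s / 2 := by have := hw j; positivity
      rw [abs_mul, abs_of_nonneg h2]
      exact mul_le_one₀ (hU i j) h2 (by linarith)) L hL
    (by
      rw [Fintype.card_coe]
      linarith)
  rw [Fintype.card_coe] at hxcard hdisc
  set y : κ → ℝ := fun j => if h : j ∈ J then x ⟨j, h⟩ else 0 with hy
  have hyJ : ∀ j : J, y j = x j := fun j => by simp [hy]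
  have hy0 : ∀ j, j ∉ J → y j = 0 := fun j hj => by simp [hy, hj]
  have hy1 : ∀ j, |y j| ≤ 1 := by
    intro j
    by_cases h : j ∈ J
    · rw [hyJ ⟨j, h⟩]
      exact hx _
    · rw [hy0 j h]
      simp
  refine ⟨fun j => w j * (1 + y j), fun j => ?_, ?_, fun i => ?_⟩
  · exact mul_nonneg (hw j) (by linarith [(abs_le.1 (hy1 j)).1])
  · set K : Finset κ := (Finset.univ.filter fun j => x j = -1).map
      (Function.Embedding.subtype (· ∈ J)) with hK
    have hKcard : K.card = (Finset.univ.filter fun j => x j = -1).card := Finset.card_map _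
    have hmemK : ∀ j ∈ K, j ∈ J ∧ y j = -1 := by
      intro j hj
      obtain ⟨j', hj', rfl⟩ := Finset.mem_map.1 hj
      exact ⟨j'.2, (hyJ j').trans (Finset.mem_filter.1 hj').2⟩
    have hdisj : Disjoint (Finset.univ.filter fun j => w j * (1 + y j) ≠ 0) K := by
      rw [Finset.disjoint_left]
      intro j hj hjK
      apply (Finset.mem_filter.1 hj).2
      rw [(hmemK j hjK).2]
      ring
    have hsub : (Finset.univ.filter fun j => w j * (1 + y j) ≠ 0) ∪ K ⊆
        Finset.univ.filter fun j => w j ≠ 0 := by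
      intro j hj
      rw [Finset.mem_filter]
      refine ⟨Finset.mem_univ _, ?_⟩
      rcases Finset.mem_union.1 hj with h | h
      · exact left_ne_zero_of_mul (Finset.mem_filter.1 h).2
      · exact (Finset.mem_filter.1 (hmemK j h).1).2.1
    have hle := Finset.card_le_card hsub
    rw [Finset.card_union_of_disjoint hdisj, hs] at hle
    beta_reduce
    omega
  · have h1 : ∑ j, U i j * w j - ∑ j, U i j * (w j * (1 + y j)) =
        -(2 / s * ∑ j : J, x j * (U i j * (w j * s / 2))) := by
      have h2 : ∑ j, U i j * w j * y j = ∑ j : J, U i j * w j * y j := by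
        rw [Finset.sum_coe_sort J fun j => U i j * w j * y j]
        refine (Finset.sum_subset (Finset.subset_univ J) fun j _ hj => ?_).symm
        rw [hy0 j hj, mul_zero]
      have h3 : ∑ j, U i j * w j - ∑ j, U i j * (w j * (1 + y j)) =
          -∑ j, U i j * w j * y j := by
        rw [← Finset.sum_sub_distrib, ← Finset.sum_neg_distrib]
        exact Finset.sum_congr rfl fun j _ => by ring
      rw [h3, h2, Finset.mul_sum]
      congr 1
      refine Finset.sum_congr rfl fun j _ => ?_
      rw [hyJ]
      field_simp
    rw [h1, abs_neg, abs_mul, abs_of_pos (by positivity)]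
    have h4 : Real.sqrt (J.card * L) ≤ s * Real.sqrt (L / s) := by
      apply Real.sqrt_le_iff.2 ⟨by positivity, ?_⟩
      rw [mul_pow, Real.sq_sqrt (by positivity)]
      have : (J.card : ℝ) ≤ s := by exact_mod_cast hJle
      calc (J.card : ℝ) * L ≤ s * L := by gcongr
        _ = s ^ 2 * (L / s) := by field_simp
    calc _ ≤ 2 / s * (2 * (s * Real.sqrt (L / s))) := by
          refine mul_le_mul_of_nonneg_left ((hdisc i).trans ?_) (by positivity)
          linarith
      _ = _ := by
          field_simp
          norm_num

lemma abs_sum_mul_le_sum {κ : Type*} [Fintype κ] (u v : κ → ℝ) (hu : ∀ j, |u j| ≤ 1)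
    (hv : ∀ j, 0 ≤ v j) : |∑ j, u j * v j| ≤ ∑ j, v j := by
  refine (Finset.abs_sum_le_sum_abs _ _).trans (Finset.sum_le_sum fun j _ => ?_)
  rw [abs_mul, abs_of_nonneg (hv j)]
  exact mul_le_of_le_one_left (hv j) (hu j)

/-- A probability vector with at least two nonzero coordinates can be replaced by a probability
vector whose support is smaller by a constant factor. -/
lemma exists_sparser_probability_vector {n : ℕ} {κ : Type*} [Fintype κ]
    (U : Fin n → κ → ℝ) (hU : ∀ i j, |U i j| ≤ 1) (w : κ → ℝ) (hw : ∀ j, 0 ≤ w j)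
    (hsum : ∑ j, w j = 1) (s : ℕ) (hs : (Finset.univ.filter fun j => w j ≠ 0).card = s)
    (hs2 : 2 ≤ s) :
    ∃ w₁ : κ → ℝ, (∀ j, 0 ≤ w₁ j) ∧ ∑ j, w₁ j = 1 ∧
      40 * (Finset.univ.filter fun j => w₁ j ≠ 0).card ≤ 39 * s ∧
      ∀ i, |∑ j, U i j * w j - ∑ j, U i j * w₁ j| ≤
        32 * Real.sqrt (Real.log (2 + n / s) / s) := by
  have hs0 : (0 : ℝ) < s := by
    have : 0 < s := by omega
    exact_mod_cast this
  set z : ℝ := 2 + n / s with hz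
  have hz2 : 2 ≤ z := by
    have : (0 : ℝ) ≤ n / s := by positivity
    linarith
  have hlog : 0.69 ≤ Real.log z :=
    le_trans (by linarith [Real.log_two_gt_d9]) (Real.log_le_log (by norm_num) hz2)
  have hexp : Real.exp (-(10 * Real.log z)) = (z ^ 10)⁻¹ := by
    rw [Real.exp_neg, ← Real.exp_log (show 0 < z by linarith), ← Real.exp_nat_mul,
      Real.log_exp]
    norm_num
  obtain ⟨v, hv, hvcard, hverr⟩ := exists_sparser_vector
    (fun (i : Option (Fin n)) (j : κ) => i.elim 1 fun i => U i j)
    (fun i j => by cases i <;> simp [hU]) w hw hsum s hs (by omega) (10 * Real.log z)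
    (by linarith)
    (by
      rw [hexp, Fintype.card_option, Fintype.card_fin, ← div_eq_mul_inv, div_le_iff₀ (by positivity)]
      have h1 : 512 * z ≤ z ^ 10 := by
        have : (2 : ℝ) ^ 9 ≤ z ^ 9 := pow_le_pow_left₀ (by norm_num) hz2 9
        nlinarith
      have h2 : (s : ℝ) * z = 2 * s + n := by
        rw [hz]
        field_simp
      have h3 : (2 : ℝ) ≤ s := by exact_mod_cast hs2
      have h4 : (s : ℝ) * (512 * z) ≤ s * z ^ 10 := by gcongr
      push_cast
      nlinarith)
  set δ : ℝ := 4 * Real.sqrt (10 * Real.log z / s) with hδ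
  have hδle : δ ≤ 16 * Real.sqrt (Real.log z / s) := by
    have h1 : Real.sqrt (10 * Real.log z / s) ≤ 4 * Real.sqrt (Real.log z / s) := by
      have hnn : 0 ≤ Real.log z / s := div_nonneg (by linarith) hs0.le
      apply Real.sqrt_le_iff.2 ⟨by positivity, ?_⟩
      rw [mul_pow, Real.sq_sqrt hnn, mul_div_assoc]
      linarith
    linarith
  have hmass : |1 - ∑ j, v j| ≤ δ := by
    have := hverr none
    simpa [hsum] using this
  have hrow : ∀ i, |∑ j, U i j * w j - ∑ j, U i j * v j| ≤ δ := fun i => hverr (some i)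
  have hvnn : 0 ≤ ∑ j, v j := Finset.sum_nonneg fun j _ => hv j
  rcases hvnn.eq_or_lt with hzero | hpos
  · rw [← hzero, sub_zero, abs_one] at hmass
    obtain ⟨j₀, -⟩ : (Finset.univ.filter fun j => w j ≠ 0).Nonempty :=
      Finset.card_pos.1 (by omega)
    have hnn : ∀ j, 0 ≤ (Pi.single j₀ 1 : κ → ℝ) j := fun j => by
      by_cases h : j = j₀
      · subst h; simp
      · simp [Pi.single_eq_of_ne h]
    have hone : ∑ j, (Pi.single j₀ 1 : κ → ℝ) j = 1 := by simp
    refine ⟨Pi.single j₀ 1, hnn, hone, ?_, fun i => ?_⟩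
    · have : (Finset.univ.filter fun j => (Pi.single j₀ 1 : κ → ℝ) j ≠ 0).card ≤ 1 := by
        rw [← Finset.card_singleton j₀]
        refine Finset.card_le_card fun j hj => ?_
        by_contra h
        exact (Finset.mem_filter.1 hj).2 (Pi.single_eq_of_ne (by simpa using h) _)
      omega
    · have h1 := abs_sum_mul_le_sum (U i) w (hU i) hw
      have h2 := abs_sum_mul_le_sum (U i) _ (hU i) hnn
      rw [hsum] at h1
      rw [hone] at h2
      exact (abs_sub _ _).trans (by linarith)
  · refine ⟨fun j => v j / ∑ j, v j, fun j => div_nonneg (hv j) hvnn, ?_, ?_, fun i => ?_⟩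
    · rw [← Finset.sum_div, div_self hpos.ne']
    · refine le_trans (Nat.mul_le_mul_left _ (Finset.card_le_card fun j hj => ?_)) hvcard
      rw [Finset.mem_filter] at hj ⊢
      exact ⟨hj.1, fun h => hj.2 (by simp [h])⟩
    · have h1 : ∑ j, U i j * (v j / ∑ j, v j) = (∑ j, U i j * v j) / ∑ j, v j := by
        rw [Finset.sum_div]
        exact Finset.sum_congr rfl fun j _ => by ring
      have h2 : |∑ j, U i j * v j - (∑ j, U i j * v j) / ∑ j, v j| ≤ δ := by
        have h3 : ∑ j, U i j * v j - (∑ j, U i j * v j) / ∑ j, v j =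
            (∑ j, U i j * v j) / (∑ j, v j) * -(1 - ∑ j, v j) := by
          field_simp
          ring
        rw [h3, abs_mul, abs_neg, abs_div, abs_of_pos hpos]
        refine (mul_le_of_le_one_left (abs_nonneg _) ?_).trans hmass
        exact (div_le_one hpos).2 (abs_sum_mul_le_sum _ _ (hU i) hv)
      rw [h1]
      refine (abs_sub_le _ (∑ j, U i j * v j) _).trans ?_
      linarith [hrow i]

/-- Iterating the sparsification step; the costs form a geometric series. -/
lemma exists_sparse_probability_vector {n : ℕ} {κ : Type*} [Fintype κ]
    (U : Fin n → κ → ℝ) (hU : ∀ i j, |U i j| ≤ 1) (T : ℕ) (hT : 0 < T) (s : ℕ) :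
    ∀ w : κ → ℝ, (∀ j, 0 ≤ w j) → ∑ j, w j = 1 →
      (Finset.univ.filter fun j => w j ≠ 0).card = s → T < s →
      ∃ w' : κ → ℝ, (∀ j, 0 ≤ w' j) ∧ ∑ j, w' j = 1 ∧
        (Finset.univ.filter fun j => w' j ≠ 0).card ≤ T ∧
        ∀ i, |∑ j, U i j * w j - ∑ j, U i j * w' j| ≤
          32 * Real.sqrt (Real.log (2 + n / T)) *
            (81 / Real.sqrt T - 80 / Real.sqrt s) := by
  induction s using Nat.strong_induction_on with
  | _ s ih =>
  intro w hw hsum hs hTs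
  obtain ⟨v, hv, hvsum, hvcard, hverr⟩ :=
    exists_sparser_probability_vector U hU w hw hsum s hs (by omega)
  have hT0 : (0 : ℝ) < T := by exact_mod_cast hT
  have hTs' : (T : ℝ) ≤ s := by exact_mod_cast hTs.le
  have hs0 : (0 : ℝ) < s := hT0.trans_le hTs'
  set D : ℝ := 32 * Real.sqrt (Real.log (2 + n / T)) with hD
  have hD0 : 0 ≤ D := by positivity
  have hstep : ∀ i, |∑ j, U i j * w j - ∑ j, U i j * v j| ≤ D * (1 / Real.sqrt s) := by
    intro i
    refine (hverr i).trans ?_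
    rw [Real.sqrt_div' _ hs0.le, hD, ← mul_div_assoc, mul_one_div]
    gcongr
  have hsqrt : 1 / Real.sqrt s ≤ 1 / Real.sqrt T := by gcongr
  set t := (Finset.univ.filter fun j => v j ≠ 0).card with ht
  rcases le_or_gt t T with htT | htT
  · refine ⟨v, hv, hvsum, htT, fun i => (hstep i).trans (mul_le_mul_of_nonneg_left ?_ hD0)⟩
    rw [div_eq_mul_one_div (81 : ℝ), div_eq_mul_one_div (80 : ℝ)]
    linarith
  · obtain ⟨w', hw', hsum', hcard', herr'⟩ := ih t (by omega) v hv hvsum ht.symm htT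
    refine ⟨w', hw', hsum', hcard', fun i => ?_⟩
    have ht0 : (0 : ℝ) < t := hT0.trans (by exact_mod_cast htT)
    have hgain : 81 / Real.sqrt s ≤ 80 / Real.sqrt t := by
      rw [div_le_div_iff₀ (by positivity) (by positivity)]
      have h1 : Real.sqrt t ≤ 80 / 81 * Real.sqrt s := by
        apply Real.sqrt_le_iff.2 ⟨by positivity, ?_⟩
        rw [mul_pow, Real.sq_sqrt hs0.le]
        have h2 : (40 * t : ℝ) ≤ 39 * s := by exact_mod_cast hvcard
        linarith
      linarith
    refine (abs_sub_le _ (∑ j, U i j * v j) _).trans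
      ((add_le_add (hstep i) (herr' i)).trans ?_)
    rw [← mul_add]
    refine mul_le_mul_of_nonneg_left ?_ hD0
    have h3 : 81 / Real.sqrt s = 1 / Real.sqrt s + 80 / Real.sqrt s := by ring
    linarith

/-- Non-negative sparsification: as the Sparsification Theorem, but if `w` has
non-negative coordinates then so does the sparsified vector `w'`. -/
theorem sparsification_nonneg :
    ∃ C : ℝ, 0 < C ∧
      ∀ (n m : ℕ), 0 < n → 0 < m →
        ∀ U : Matrix (Fin n) (Fin m) ℝ, (∀ i j, U i j ∈ Set.Icc (-1 : ℝ) 1) →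
          ∀ w : Fin m → ℝ, (∑ j, |w j|) = 1 → (∀ j, 0 ≤ w j) →
            ∀ T : ℕ, 0 < T → T ≤ m →
              ∃ w' : Fin m → ℝ,
                (∀ j, 0 ≤ w' j) ∧
                (∑ j, |w' j|) = 1 ∧
                (Finset.univ.filter (fun j => w' j ≠ 0)).card ≤ T ∧
                ∀ i, |U.mulVec w i - U.mulVec w' i| ≤
                  C * Real.sqrt (Real.log (2 + (n : ℝ) / (T : ℝ)) / (T : ℝ)) := by
  refine ⟨32 * 81, by norm_num, fun n m _ _ U hU w hsum hw T hT _ => ?_⟩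
  rcases le_or_gt (Finset.univ.filter fun j => w j ≠ 0).card T with hle | hlt
  · refine ⟨w, hw, hsum, hle, fun i => ?_⟩
    rw [sub_self, abs_zero]
    positivity
  have hsum1 : ∑ j, w j = 1 := by
    rw [← hsum]
    exact Finset.sum_congr rfl fun j _ => (abs_of_nonneg (hw j)).symm
  obtain ⟨w', hw', hsum', hcard', herr⟩ := exists_sparse_probability_vector U
    (fun i j => abs_le.2 (hU i j)) T hT _ w hw hsum1 rfl hlt
  refine ⟨w', hw', ?_, hcard', fun i => (herr i).trans ?_⟩
  · rw [← hsum']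
    exact Finset.sum_congr rfl fun j _ => abs_of_nonneg (hw' j)
  · rw [Real.sqrt_div' _ (Nat.cast_nonneg T), mul_assoc, mul_assoc]
    refine mul_le_mul_of_nonneg_left ?_ (by norm_num)
    have h1 : 0 ≤ 80 / Real.sqrt ((Finset.univ.filter fun j => w j ≠ 0).card : ℝ) := by
      positivity
    calc _ ≤ Real.sqrt (Real.log (2 + n / T)) * (81 / Real.sqrt T) :=
          mul_le_mul_of_nonneg_left (by linarith) (Real.sqrt_nonneg _)
      _ = _ := by ring
end

section
/- There exists a universal constant C > 0 such that for all positive integers n, m, every matrix U ∈ [−1,1]^{n×m}, every vector w ∈ ℝ^m with ‖w‖₁ = 1, and every positive integer T ≤ m, there exists a vector w' ∈ ℝ^m with ‖w'‖₁ = 1, ‖w'‖₀ ≤ T, and min_{1≤i≤n} (Uw')_i ≥ min_{1≤i≤n} (Uw)_i − C·√(log(2 + n/T)/T). -/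
open Finset
open scoped Classical

lemma exists_direction_small_quadratic_form {ι J : Type*} [Fintype ι] [Nonempty ι] [Fintype J]
    (v : ι → J → ℝ) (hv : ∀ i j, |v i j| ≤ 1) (c : ι → ℝ) (hc : ∀ i, 0 < c i)
    (A : Finset J) (B : Finset ι) (hAB : 2 * (#A + #B) < Fintype.card J) :
    ∃ d : J → ℝ, (∀ j ∈ A, d j = 0) ∧ (∀ i ∈ B, ∑ j, v i j * d j = 0) ∧
      ∑ i, c i * (∑ j, v i j * d j) ^ 2 < 2 * (∑ i, c i) * ∑ j, d j ^ 2 := by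
  let u : ι → EuclideanSpace ℝ J := fun i => WithLp.toLp 2 (v i)
  let e : J → EuclideanSpace ℝ J := fun j => EuclideanSpace.single j 1
  let s : Finset (EuclideanSpace ℝ J) := A.image e ∪ B.image u
  let K : Submodule ℝ (EuclideanSpace ℝ J) := Submodule.span ℝ (s : Set (EuclideanSpace ℝ J))
  have hinner (x y : EuclideanSpace ℝ J) : inner ℝ x y = ∑ j, x j * y j := by
    simp [PiLp.inner_apply, mul_comm]
  have hnorm (i : ι) : ‖u i‖ ^ 2 ≤ Fintype.card J := by
    rw [← real_inner_self_eq_norm_sq, hinner]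
    calc ∑ j, v i j * v i j ≤ ∑ _j : J, (1 : ℝ) :=
          sum_le_sum fun j _ => by
            rw [← sq]
            exact (sq_le_one_iff_abs_le_one _).2 (hv i j)
      _ = Fintype.card J := by simp
  have hK : Module.finrank ℝ K ≤ #A + #B :=
    (finrank_span_finset_le_card s).trans <|
      (card_union_le _ _).trans (add_le_add card_image_le card_image_le)
  have hdim : Fintype.card J < 2 * Module.finrank ℝ Kᗮ := by
    have h := K.finrank_add_finrank_orthogonal
    rw [finrank_euclideanSpace] at h
    omega
  let b := stdOrthonormalBasis ℝ Kᗮ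
  have hb : Orthonormal ℝ (fun t => (b t : EuclideanSpace ℝ J)) :=
    b.orthonormal.comp_linearIsometry Kᗮ.subtypeₗᵢ
  have hsum : 0 < ∑ i, c i := sum_pos (fun i _ => hc i) univ_nonempty
  obtain ⟨t, -, ht⟩ : ∃ t ∈ univ,
      ∑ i, c i * (inner ℝ (b t : EuclideanSpace ℝ J) (u i)) ^ 2 < 2 * ∑ i, c i := by
    apply exists_lt_of_sum_lt
    rw [sum_comm]
    calc ∑ i, ∑ t, c i * (inner ℝ (b t : EuclideanSpace ℝ J) (u i)) ^ 2
        ≤ ∑ i, c i * Fintype.card J := by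
          refine sum_le_sum fun i _ => ?_
          rw [← mul_sum]
          refine mul_le_mul_of_nonneg_left ?_ (hc i).le
          have h := hb.sum_inner_products_le (u i) (s := univ)
          simp only [Real.norm_eq_abs, sq_abs] at h
          exact h.trans (hnorm i)
      _ = (∑ i, c i) * Fintype.card J := by rw [sum_mul]
      _ < (∑ i, c i) * (2 * Module.finrank ℝ Kᗮ : ℕ) :=
          mul_lt_mul_of_pos_left (by exact_mod_cast hdim) hsum
      _ = ∑ _t, 2 * ∑ i, c i := by
          simp
          ring
  have horth (x : EuclideanSpace ℝ J) (hx : x ∈ s) :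
      inner ℝ x (b t : EuclideanSpace ℝ J) = 0 :=
    (Submodule.mem_orthogonal K _).1 (b t).2 x (Submodule.subset_span hx)
  refine ⟨fun j => (b t : EuclideanSpace ℝ J) j, fun j hj => ?_, fun i hi => ?_, ?_⟩
  · simpa [e, EuclideanSpace.inner_single_left] using
      horth (e j) (mem_union_left _ (mem_image_of_mem e hj))
  · simpa [hinner, u] using horth (u i) (mem_union_right _ (mem_image_of_mem u hi))
  · have hone : ∑ j, (b t : EuclideanSpace ℝ J) j ^ 2 = 1 := by
      have h := hb.1 t
      have h2 := real_inner_self_eq_norm_sq (b t : EuclideanSpace ℝ J)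
      rw [h, hinner] at h2
      simpa [sq] using h2
    rw [hone, mul_one]
    simpa [hinner, u, mul_comm] using ht

lemma cosh_le_one_add_sq {y : ℝ} (hy : |y| ≤ 1) : Real.cosh y ≤ 1 + y ^ 2 := by
  have h1 : y ^ 2 ≤ 1 := (sq_le_one_iff_abs_le_one _).2 hy
  have h0 := sq_nonneg y
  have h2 : |y ^ 2 / 2| = y ^ 2 / 2 := abs_of_nonneg (by positivity)
  have h3 := Real.abs_exp_sub_one_le (x := y ^ 2 / 2) (by rw [h2]; linarith)
  rw [h2] at h3
  linarith [Real.cosh_le_exp_half_sq y, le_abs_self (Real.exp (y ^ 2 / 2) - 1)]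

/-- Second-order optimality for the potential `Φ(x) exp(-2 l² |x|²)`, where
`Φ(x) = ∑ i, cosh (l ⟨v i, x⟩)`, on the polytope cut out by `|x j| ≤ 1` and `|⟨v i, x⟩| ≤ D`. -/
lemma exists_cosh_bound_and_many_tight {ι J : Type*} [Fintype ι] [Nonempty ι] [Fintype J]
    (v : ι → J → ℝ) (hv : ∀ i j, |v i j| ≤ 1) {l D : ℝ} (hl : 0 < l) (hD : 0 ≤ D) :
    ∃ x : J → ℝ, (∀ j, |x j| ≤ 1) ∧ (∀ i, |∑ j, v i j * x j| ≤ D) ∧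
      ∑ i, Real.cosh (l * ∑ j, v i j * x j) ≤
        Fintype.card ι * Real.exp (2 * l ^ 2 * Fintype.card J) ∧
      Fintype.card J ≤
        2 * (#{j | |x j| = 1} + #{i | |∑ j, v i j * x j| = D}) := by
  let g : ι → (J → ℝ) → ℝ := fun i x => ∑ j, v i j * x j
  let Φ : (J → ℝ) → ℝ := fun x => ∑ i, Real.cosh (l * g i x)
  let q : (J → ℝ) → ℝ := fun x => ∑ j, x j ^ 2
  let M : (J → ℝ) → ℝ := fun x => Φ x * Real.exp (-(2 * l ^ 2 * q x))
  let P : Set (J → ℝ) := Set.Icc (-1) 1 ∩ {x | ∀ i, |g i x| ≤ D}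
  have hgc (i : ι) : Continuous (g i) := by fun_prop
  have hPc : IsCompact P := by
    refine isCompact_Icc.inter_right ?_
    rw [Set.ofPred_forall]
    exact isClosed_iInter fun i => isClosed_le (hgc i).abs continuous_const
  have hP (x : J → ℝ) : x ∈ P ↔ (∀ j, |x j| ≤ 1) ∧ ∀ i, |g i x| ≤ D := by
    simp [P, Pi.le_def, abs_le, forall_and]
  have h0P : (0 : J → ℝ) ∈ P := by simp [hP, g, hD]
  have hMc : Continuous M := by
    have := Real.continuous_cosh
    fun_prop
  obtain ⟨x, hxP, hx⟩ := hPc.exists_isMinOn ⟨0, h0P⟩ hMc.continuousOn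
  have hxP' := (hP x).1 hxP
  have hΦpos (y : J → ℝ) : 0 < Φ y := sum_pos (fun i _ => Real.cosh_pos _) univ_nonempty
  refine ⟨x, hxP'.1, hxP'.2, ?_, ?_⟩
  · have h0 : M x ≤ M 0 := hx h0P
    have hM0 : M 0 = Fintype.card ι := by simp [M, Φ, q, g]
    have hq : q x ≤ Fintype.card J := by
      calc q x ≤ ∑ _j : J, (1 : ℝ) :=
            sum_le_sum fun j _ => (sq_le_one_iff_abs_le_one _).2 (hxP'.1 j)
        _ = Fintype.card J := by simp
    calc Φ x = M x * Real.exp (2 * l ^ 2 * q x) := by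
          simp only [M]
          rw [mul_assoc, ← Real.exp_add]
          simp
      _ ≤ Fintype.card ι * Real.exp (2 * l ^ 2 * Fintype.card J) := by
          rw [hM0] at h0
          gcongr
  · by_contra! hlt
    obtain ⟨d, hdA, hdB, hd⟩ := exists_direction_small_quadratic_form v hv
      (fun i => Real.cosh (l * g i x)) (fun i => Real.cosh_pos _) _ _ hlt
    have hline (i : ι) (s : ℝ) : g i (x + s • d) = g i x + s * g i d := by
      simp only [g, Pi.add_apply, Pi.smul_apply, smul_eq_mul, mul_sum, ← sum_add_distrib]
      exact sum_congr rfl fun j _ => by ring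
    have hqline (s : ℝ) : q (x + s • d) = q x + 2 * s * ∑ j, x j * d j + s ^ 2 * q d := by
      simp only [q, Pi.add_apply, Pi.smul_apply, smul_eq_mul, mul_sum, ← sum_add_distrib]
      exact sum_congr rfl fun j _ => by ring
    have hnear (a b r : ℝ) (ha : |a| ≤ r) (hb : |a| = r → b = 0) :
        ∀ᶠ s : ℝ in nhds 0, |a + s * b| ≤ r := by
      rcases ha.lt_or_eq with h | h
      · have hcont : Continuous fun s : ℝ => |a + s * b| := by fun_prop
        have := hcont.continuousAt.eventually_lt (x₀ := (0 : ℝ)) (g := fun _ => r)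
          continuousAt_const
          (by simpa using h)
        exact this.mono fun s hs => hs.le
      · simp [hb h, h]
    have hmem : ∀ᶠ s : ℝ in nhds 0, x + s • d ∈ P := by
      simp only [hP, Filter.eventually_and, Filter.eventually_all, hline]
      refine ⟨fun j => ?_, fun i => ?_⟩
      · simpa using hnear (x j) (d j) 1 (hxP'.1 j) fun h => hdA j (by simpa using h)
      · exact hnear (g i x) (g i d) D (hxP'.2 i) fun h => hdB i (by simpa using h)
    have hsmall : ∀ᶠ s : ℝ in nhds 0, ∀ i, |l * (s * g i d)| ≤ 1 := by
      rw [Filter.eventually_all]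
      intro i
      have := hnear 0 (l * g i d) 1 (by simp) (by simp)
      filter_upwards [this] with s hs
      convert hs using 2
      ring
    have hneg : ∀ᶠ s : ℝ in nhds 0, x + (-s) • d ∈ P :=
      (by simpa using continuous_neg.tendsto (0 : ℝ) :
        Filter.Tendsto (fun s : ℝ => -s) (nhds 0) (nhds 0)).eventually hmem
    obtain ⟨s, ⟨hs1, hs2, hs3⟩, hs⟩ :=
      (((hmem.and (hneg.and hsmall)).filter_mono nhdsWithin_le_nhds).and
        (self_mem_nhdsWithin : Set.Ioi (0 : ℝ) ∈ nhdsWithin 0 (Set.Ioi 0))).exists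
    have hs : 0 < s := hs
    have hM1 : M x ≤ M (x + s • d) := hx hs1
    have hM2 : M x ≤ M (x + (-s) • d) := hx hs2
    have hMpos : 0 < M x := mul_pos (hΦpos x) (Real.exp_pos _)
    have havg : Φ (x + s • d) + Φ (x + (-s) • d) =
        2 * ∑ i, Real.cosh (l * g i x) * Real.cosh (l * (s * g i d)) := by
      simp only [Φ, hline, mul_sum, ← sum_add_distrib]
      refine sum_congr rfl fun i _ => ?_
      rw [show l * (g i x + s * g i d) = l * g i x + l * (s * g i d) by ring,
        show l * (g i x + -s * g i d) = l * g i x - l * (s * g i d) by ring,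
        Real.cosh_add, Real.cosh_sub]
      ring
    have hupper : (Φ (x + s • d) + Φ (x + (-s) • d)) / 2 ≤
        Φ x + l ^ 2 * s ^ 2 * ∑ i, Real.cosh (l * g i x) * g i d ^ 2 := by
      rw [havg, mul_div_cancel_left₀ _ two_ne_zero]
      simp only [Φ, mul_sum, ← sum_add_distrib]
      refine sum_le_sum fun i _ => ?_
      have := mul_le_mul_of_nonneg_left (cosh_le_one_add_sq (hs3 i))
        (Real.cosh_pos (l * g i x)).le
      linarith
    have hprod : (Φ x * Real.exp (2 * l ^ 2 * s ^ 2 * q d)) ^ 2 ≤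
        Φ (x + s • d) * Φ (x + (-s) • d) := by
      have h := mul_le_mul hM1 hM2 hMpos.le (hMpos.le.trans hM1)
      simp only [M, hqline] at h
      set a := ∑ j, x j * d j
      have e1 : Φ x * Real.exp (-(2 * l ^ 2 * q x)) * (Φ x * Real.exp (-(2 * l ^ 2 * q x))) =
          (Φ x * Real.exp (2 * l ^ 2 * s ^ 2 * q d)) ^ 2 *
            Real.exp (-(4 * l ^ 2 * (q x + s ^ 2 * q d))) := by
        rw [mul_mul_mul_comm, ← Real.exp_add, mul_pow, ← Real.exp_nat_mul, mul_assoc (Φ x ^ 2),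
          ← Real.exp_add, sq (Φ x)]
        congr 2
        push_cast
        ring
      have e2 : Φ (x + s • d) * Real.exp (-(2 * l ^ 2 * (q x + 2 * s * a + s ^ 2 * q d))) *
          (Φ (x + (-s) • d) * Real.exp (-(2 * l ^ 2 * (q x + 2 * (-s) * a + (-s) ^ 2 * q d)))) =
          Φ (x + s • d) * Φ (x + (-s) • d) *
            Real.exp (-(4 * l ^ 2 * (q x + s ^ 2 * q d))) := by
        rw [mul_mul_mul_comm, ← Real.exp_add]
        congr 2
        ring
      rw [e1, e2] at h
      exact le_of_mul_le_mul_right h (Real.exp_pos _)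
    have hlower : Φ x * Real.exp (2 * l ^ 2 * s ^ 2 * q d) ≤
        (Φ (x + s • d) + Φ (x + (-s) • d)) / 2 := by
      refine le_of_sq_le_sq (hprod.trans ?_) ?_
      · nlinarith [sq_nonneg (Φ (x + s • d) - Φ (x + (-s) • d))]
      · linarith [hΦpos (x + s • d), hΦpos (x + (-s) • d)]
    have hexp := mul_le_mul_of_nonneg_left
      (Real.add_one_le_exp (2 * l ^ 2 * s ^ 2 * q d)) (hΦpos x).le
    have hls : 0 < l ^ 2 * s ^ 2 := by positivity
    have hcontra := mul_lt_mul_of_pos_left hd hls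
    change l ^ 2 * s ^ 2 * ∑ i, Real.cosh (l * g i x) * g i d ^ 2 <
      l ^ 2 * s ^ 2 * (2 * Φ x * q d) at hcontra
    linarith

lemma exists_partial_coloring_s2 {ι J : Type*} [Fintype ι] [Nonempty ι] [Fintype J] [Nonempty J]
    (v : ι → J → ℝ) (hv : ∀ i j, |v i j| ≤ 1) :
    ∃ x : J → ℝ, (∀ j, |x j| ≤ 1) ∧
      (∀ i, |∑ j, v i j * x j| ≤
        6 * √(Fintype.card J * Real.log (2 + Fintype.card ι / Fintype.card J))) ∧
      Fintype.card J ≤ 4 * #{j | |x j| = 1} := by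
  have hk : (0 : ℝ) < Fintype.card J := by exact_mod_cast Fintype.card_pos
  have hn : (0 : ℝ) < Fintype.card ι := by exact_mod_cast Fintype.card_pos
  set k : ℝ := (Fintype.card J : ℝ) with hkdef
  set n : ℝ := (Fintype.card ι : ℝ) with hndef
  set L : ℝ := Real.log (2 + n / k) with hLdef
  have hr : 0 < n / k := by positivity
  have hL : 0 < L := Real.log_pos (by linarith)
  have hexpL : Real.exp L = 2 + n / k := Real.exp_log (by positivity)
  obtain ⟨x, hx, hxD, hΦ, hcard⟩ := exists_cosh_bound_and_many_tight v hv
    (l := √(L / k)) (D := 6 * √(k * L)) (by positivity) (by positivity)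
  refine ⟨x, hx, hxD, ?_⟩
  set B : Finset ι := {i | |∑ j, v i j * x j| = 6 * √(k * L)} with hB
  have hlD : √(L / k) * (6 * √(k * L)) = 6 * L := by
    rw [mul_left_comm, ← Real.sqrt_mul (by positivity),
      show L / k * (k * L) = L ^ 2 by field_simp, Real.sqrt_sq hL.le]
  have htight : (#B : ℝ) * Real.cosh (6 * L) ≤ n * Real.exp (2 * L) := by
    calc (#B : ℝ) * Real.cosh (6 * L)
        = ∑ i ∈ B, Real.cosh (√(L / k) * ∑ j, v i j * x j) := by
          rw [← nsmul_eq_mul, ← sum_const]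
          refine sum_congr rfl fun i hi => ?_
          have hi : |∑ j, v i j * x j| = 6 * √(k * L) := by simpa [hB] using hi
          rw [← Real.cosh_abs (√(L / k) * _), abs_mul, hi, abs_of_nonneg (Real.sqrt_nonneg _), hlD]
      _ ≤ ∑ i, Real.cosh (√(L / k) * ∑ j, v i j * x j) :=
          sum_le_univ_sum_of_nonneg fun i => (Real.cosh_pos _).le
      _ ≤ n * Real.exp (2 * √(L / k) ^ 2 * k) := hΦ
      _ = n * Real.exp (2 * L) := by
          rw [Real.sq_sqrt (by positivity)]
          congr 2
          field_simp
  have hBk : 4 * (#B : ℝ) ≤ k := by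
    have hcosh : Real.exp (2 * L) * (2 + n / k) ^ 4 / 2 ≤ Real.cosh (6 * L) := by
      rw [← hexpL, ← Real.exp_nat_mul, ← Real.exp_add, Real.cosh_eq,
        show 2 * L + ((4 : ℕ) : ℝ) * L = 6 * L by push_cast; ring]
      linarith [Real.exp_pos (-(6 * L))]
    have h1 : (#B : ℝ) * (2 + n / k) ^ 4 ≤ 2 * n := by
      have h2 := (mul_le_mul_of_nonneg_left hcosh (Nat.cast_nonneg #B)).trans htight
      refine le_of_mul_le_mul_right ?_ (Real.exp_pos (2 * L))
      linarith
    have h3 : 8 * n ≤ k * (2 + n / k) ^ 4 := by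
      have h4 : 8 * (n / k) ≤ (2 + n / k) ^ 4 := by
        have : 0 ≤ (n / k) ^ 2 := by positivity
        have : 0 ≤ (n / k) ^ 3 := by positivity
        have : 0 ≤ (n / k) ^ 4 := by positivity
        nlinarith
      calc 8 * n = k * (8 * (n / k)) := by field_simp
        _ ≤ _ := by gcongr
    refine le_of_mul_le_mul_right ?_ (by positivity : 0 < (2 + n / k) ^ 4)
    linarith
  have hBk' : 4 * #B ≤ Fintype.card J := by
    rw [hkdef] at hBk
    exact_mod_cast hBk
  lia

lemma exists_partial_coloring_on {ι J : Type*} [Fintype ι] [Nonempty ι] [Fintype J]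
    (S : Finset J) (hS : S.Nonempty) (v : ι → J → ℝ) (hv : ∀ i, ∀ j ∈ S, |v i j| ≤ 1) :
    ∃ y : J → ℝ, (∀ j, |y j| ≤ 1) ∧ (∀ j ∉ S, y j = 0) ∧
      (∀ i, |∑ j, v i j * y j| ≤ 6 * √(#S * Real.log (2 + Fintype.card ι / #S))) ∧
      #S ≤ 8 * #{j ∈ S | y j = -1} := by
  have : Nonempty S := hS.to_subtype
  obtain ⟨x, hx1, hxv, hxc⟩ := exists_partial_coloring_s2 (fun i (j : S) => v i j)
    fun i j => hv i j j.2
  rw [Fintype.card_coe] at hxc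
  simp only [Fintype.card_coe] at hxv
  let z : J → ℝ := fun j => if h : j ∈ S then x ⟨j, h⟩ else 0
  have hz1 (j : J) : |z j| ≤ 1 := by
    by_cases h : j ∈ S
    · simpa [z, h] using hx1 ⟨j, h⟩
    · simp [z, h]
  have hz0 (j : J) (h : j ∉ S) : z j = 0 := by simp [z, h]
  have hzv (i : ι) : ∑ j, v i j * z j = ∑ j : S, v i j * x j := by
    rw [← sum_subset (subset_univ S) fun j _ h => by simp [hz0 j h], ← sum_coe_sort]
    exact sum_congr rfl fun j _ => by simp [z]
  have hcard : #{j : S | |x j| = 1} ≤ #{j ∈ S | z j = 1} + #{j ∈ S | z j = -1} := by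
    rw [← card_map (Function.Embedding.subtype _)]
    refine (card_le_card fun j hj => ?_).trans (card_union_le _ _)
    obtain ⟨a, ha, rfl⟩ := mem_map.1 hj
    have ha : |x a| = 1 := by simpa using ha
    simpa [z] using eq_or_eq_neg_of_abs_eq ha
  rcases le_total #{j ∈ S | z j = 1} #{j ∈ S | z j = -1} with h | h
  · refine ⟨z, hz1, hz0, fun i => ?_, by lia⟩
    rw [hzv]
    exact hxv i
  · refine ⟨fun j => -z j, fun j => by simpa using hz1 j, fun j hj => by simp [hz0 j hj],
      fun i => ?_, ?_⟩
    · simp only [mul_neg, sum_neg_distrib, abs_neg, hzv]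
      exact hxv i
    · simp only [neg_inj]
      lia

/-- The loss `√(log (2 + n / k) / k)` incurred when passing to supports of size `k`. -/
noncomputable def sparsificationRate (n k : ℝ) : ℝ :=
  √(Real.log (2 + n / k) / k)

lemma sparsificationRate_nonneg (n k : ℝ) : 0 ≤ sparsificationRate n k :=
  Real.sqrt_nonneg _

lemma sparsificationRate_antitone {n k k' : ℝ} (hn : 0 ≤ n) (hk' : 0 < k') (hkk' : k' ≤ k) :
    sparsificationRate n k ≤ sparsificationRate n k' := by
  have hk : 0 < k := hk'.trans_le hkk'
  have : 0 ≤ n / k' := by positivity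
  refine Real.sqrt_le_sqrt (div_le_div₀ (Real.log_nonneg (by linarith)) ?_ hk' hkk')
  exact Real.log_le_log (by positivity) (by gcongr)

lemma sparsificationRate_geometric {n k k' : ℝ} (hn : 0 ≤ n) (hk' : 0 < k')
    (hkk' : 16 * k' ≤ 15 * k) :
    33 / 32 * sparsificationRate n k ≤ sparsificationRate n k' := by
  have hk : 0 < k := by linarith
  have hle : k' ≤ k := by linarith
  have h1 : 0 ≤ n / k := by positivity
  have hlog : 0 ≤ Real.log (2 + n / k) := Real.log_nonneg (by linarith)
  have hlog' : Real.log (2 + n / k) ≤ Real.log (2 + n / k') :=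
    Real.log_le_log (by positivity) (by gcongr)
  refine Real.le_sqrt_of_sq_le ?_
  rw [mul_pow, sparsificationRate, Real.sq_sqrt (by positivity), ← mul_div_assoc,
    div_le_div_iff₀ hk hk']
  calc (33 / 32) ^ 2 * Real.log (2 + n / k) * k'
      = Real.log (2 + n / k) * ((33 / 32) ^ 2 * k') := by ring
    _ ≤ Real.log (2 + n / k') * k :=
        mul_le_mul hlog' (by linarith) (by positivity) (hlog.trans hlog')

lemma abs_sum_mul_le {J : Type*} [Fintype J] (a w : J → ℝ) (ha : ∀ j, |a j| ≤ 1) :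
    |∑ j, a j * w j| ≤ ∑ j, |w j| :=
  (abs_sum_le_sum_abs _ _).trans <| sum_le_sum fun j _ => by
    rw [abs_mul]
    exact mul_le_of_le_one_left (abs_nonneg _) (ha j)

lemma card_support_le_two_mul_card_light {J : Type*} [Fintype J] (w : J → ℝ)
    (hw : ∑ j, |w j| = 1) :
    #{j | w j ≠ 0} ≤ 2 * #{j | w j ≠ 0 ∧ |w j| ≤ 2 / #{j | w j ≠ 0}} := by
  set k := #{j | w j ≠ 0} with hk
  rcases Nat.eq_zero_or_pos k with h0 | hpos
  · lia
  have hkpos : (0 : ℝ) < k := by exact_mod_cast hpos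
  set H : Finset J := {j | w j ≠ 0 ∧ ¬ |w j| ≤ 2 / k} with hH
  have hsplit : #{j | w j ≠ 0 ∧ |w j| ≤ 2 / (k : ℝ)} + #H = k := by
    have h := card_filter_add_card_filter_not (s := ({j | w j ≠ 0} : Finset J))
      (fun j => |w j| ≤ 2 / (k : ℝ))
    rwa [filter_filter, filter_filter] at h
  have hheavy : (#H : ℝ) * (2 / k) ≤ 1 := by
    rw [← hw, ← nsmul_eq_mul, ← sum_const]
    refine (sum_le_sum fun j hj => ?_).trans
      (sum_le_univ_sum_of_nonneg fun j => abs_nonneg (w j))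
    have hj : w j ≠ 0 ∧ ¬ |w j| ≤ 2 / (k : ℝ) := by simpa [hH] using hj
    exact (not_le.1 hj.2).le
  have h2 : 2 * #H ≤ k := by
    have : (2 : ℝ) * #H ≤ k := by
      rw [← mul_div_assoc, div_le_one hkpos] at hheavy
      linarith
    exact_mod_cast this
  lia

lemma coloring_error_le {n k c : ℝ} (hn : 1 ≤ n) (hc : 0 < c) (hck : c ≤ k) (hkc : k ≤ 2 * c) :
    2 / k * (6 * √(c * Real.log (2 + (n + 1) / c))) ≤ 24 * sparsificationRate n k := by
  have hk : 0 < k := hc.trans_le hck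
  have hr : 0 < n / k := by positivity
  have hL : 0 ≤ Real.log (2 + n / k) := Real.log_nonneg (by linarith)
  have hlog : Real.log (2 + (n + 1) / c) ≤ 3 * Real.log (2 + n / k) := by
    have h1 : (n + 1) / c ≤ 4 * (n / k) := by
      rw [← mul_div_assoc, div_le_div_iff₀ hc hk]
      nlinarith
    rw [show (3 : ℝ) * Real.log (2 + n / k) = Real.log ((2 + n / k) ^ 3) by simp [Real.log_pow]]
    have h2 : 0 < (n + 1) / c := by positivity
    refine Real.log_le_log (by linarith) ?_
    have : 0 < (n / k) ^ 2 := by positivity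
    have : 0 < (n / k) ^ 3 := by positivity
    nlinarith
  have hsqrt : √(c * Real.log (2 + (n + 1) / c)) ≤ 2 * (k * sparsificationRate n k) := by
    refine Real.sqrt_le_iff.2 ⟨by have := sparsificationRate_nonneg n k; positivity, ?_⟩
    rw [mul_pow, mul_pow, sparsificationRate, Real.sq_sqrt (by positivity)]
    calc c * Real.log (2 + (n + 1) / c) ≤ k * (3 * Real.log (2 + n / k)) := by
          refine (mul_le_mul_of_nonneg_left hlog hc.le).trans ?_
          gcongr
      _ ≤ 2 ^ 2 * (k ^ 2 * (Real.log (2 + n / k) / k)) := by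
          rw [show (2 : ℝ) ^ 2 * (k ^ 2 * (Real.log (2 + n / k) / k)) =
            4 * (k * Real.log (2 + n / k)) by field_simp; ring]
          have : 0 ≤ k * Real.log (2 + n / k) := by positivity
          linarith
  calc 2 / k * (6 * √(c * Real.log (2 + (n + 1) / c)))
      ≤ 2 / k * (6 * (2 * (k * sparsificationRate n k))) := by gcongr
    _ = 24 * sparsificationRate n k := by field_simp; ring

lemma exists_smaller_support {ι J : Type*} [Fintype ι] [Nonempty ι] [Fintype J]
    (U : ι → J → ℝ) (hU : ∀ i j, |U i j| ≤ 1) (w : J → ℝ) (hw : ∑ j, |w j| = 1)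
    (hk : 2 ≤ #{j | w j ≠ 0}) :
    ∃ w' : J → ℝ, ∑ j, |w' j| = 1 ∧ 16 * #{j | w' j ≠ 0} ≤ 15 * #{j | w j ≠ 0} ∧
      ∀ i, ∑ j, U i j * w j - 48 * sparsificationRate (Fintype.card ι) #{j | w j ≠ 0} ≤
        ∑ j, U i j * w' j := by
  have hlight := card_support_le_two_mul_card_light w hw
  set k := #{j | w j ≠ 0} with hkdef
  set S : Finset J := {j | w j ≠ 0 ∧ |w j| ≤ 2 / k} with hS
  have hSpos : 0 < #S := by lia
  have hSk : #S ≤ k := card_le_card fun j hj => by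
    have : w j ≠ 0 ∧ |w j| ≤ 2 / k := by simpa [hS] using hj
    simpa using this.1
  have hkpos : (0 : ℝ) < k := by exact_mod_cast (by lia : 0 < k)
  let v : Option ι → J → ℝ := fun o j => o.elim (k / 2 * |w j|) fun i => k / 2 * (U i j * w j)
  have hv (o : Option ι) (j : J) (hj : j ∈ S) : |v o j| ≤ 1 := by
    have hj : w j ≠ 0 ∧ |w j| ≤ 2 / k := by simpa [hS] using hj
    have hwj : k / 2 * |w j| ≤ 1 :=
      calc k / 2 * |w j| ≤ k / 2 * (2 / k) := by gcongr; exact hj.2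
        _ = 1 := by field_simp
    have hk2 : |(k : ℝ) / 2| = k / 2 := abs_of_pos (by positivity)
    rcases o with _ | i
    · simpa only [v, Option.elim, abs_mul, abs_abs, hk2] using hwj
    · simp only [v, Option.elim, abs_mul, hk2]
      refine le_trans ?_ hwj
      gcongr
      exact mul_le_of_le_one_left (abs_nonneg _) (hU i j)
  obtain ⟨y, hy1, -, hyv, hyc⟩ :=
    exists_partial_coloring_on S (card_pos.1 hSpos) v hv
  have hn : (1 : ℝ) ≤ Fintype.card ι := by exact_mod_cast Fintype.card_pos
  set n : ℝ := (Fintype.card ι : ℝ) with hndef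
  set ε := 24 * sparsificationRate n k with hε
  have herr (o : Option ι) : |2 / k * ∑ j, v o j * y j| ≤ ε := by
    have h1 := coloring_error_le hn (by exact_mod_cast hSpos : (0 : ℝ) < #S)
      (by exact_mod_cast hSk : (#S : ℝ) ≤ k) (by exact_mod_cast hlight)
    rw [abs_mul, abs_of_pos (by positivity : (0 : ℝ) < 2 / k)]
    refine le_trans ?_ h1
    gcongr
    simpa [Fintype.card_option] using hyv o
  have herr_none : |∑ j, |w j| * y j| ≤ ε := by
    convert herr none using 2
    rw [mul_sum]
    refine sum_congr rfl fun j _ => ?_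
    simp only [v, Option.elim]
    field_simp
  have herr_some (i : ι) : |∑ j, U i j * w j * y j| ≤ ε := by
    convert herr (some i) using 2
    rw [mul_sum]
    refine sum_congr rfl fun j _ => ?_
    simp only [v, Option.elim]
    field_simp
  let u : J → ℝ := fun j => w j * (1 + y j)
  have huabs : ∑ j, |u j| = 1 + ∑ j, |w j| * y j := by
    rw [← hw, ← sum_add_distrib]
    refine sum_congr rfl fun j _ => ?_
    have := (abs_le.1 (hy1 j)).1
    rw [abs_mul, abs_of_nonneg (by linarith : 0 ≤ 1 + y j)]
    ring
  have huU (i : ι) : ∑ j, U i j * u j = ∑ j, U i j * w j + ∑ j, U i j * w j * y j := by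
    rw [← sum_add_distrib]
    exact sum_congr rfl fun j _ => by ring
  have hucard : 16 * #{j | u j ≠ 0} ≤ 15 * k := by
    have hdisj : #{j | u j ≠ 0} + #{j ∈ S | y j = -1} ≤ k := by
      rw [← card_union_of_disjoint]
      · refine card_le_card fun j hj => ?_
        simp only [mem_union, mem_filter, mem_univ, true_and, hS, u, mul_ne_zero_iff] at hj ⊢
        tauto
      · refine disjoint_left.2 fun j hj hj' => ?_
        simp only [mem_filter, mem_univ, true_and, u] at hj hj'
        simp [hj'.2] at hj
    lia
  have hwU (i : ι) : ∑ j, U i j * w j ≤ 1 :=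
    (le_abs_self _).trans ((abs_sum_mul_le (U i) w (hU i)).trans hw.le)
  set s := ∑ j, |u j| with hs
  have hs0 : 0 ≤ s := sum_nonneg fun j _ => abs_nonneg (u j)
  rcases hs0.eq_or_lt with h0 | hpos
  · have hε1 : 1 ≤ ε := by
      rw [show ∑ j, |w j| * y j = -1 by linarith] at herr_none
      simpa using herr_none
    obtain ⟨j₀, -⟩ := card_pos.1 (by lia : 0 < k)
    refine ⟨Pi.single j₀ 1, ?_, ?_, fun i => ?_⟩
    · rw [sum_eq_single j₀] <;> simp +contextual
    · have : #{j | (Pi.single j₀ 1 : J → ℝ) j ≠ 0} = 1 :=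
        card_eq_one.2 ⟨j₀, by ext; simp [Pi.single_apply]⟩
      lia
    · have : ∑ j, U i j * (Pi.single j₀ 1 : J → ℝ) j = U i j₀ := by simp [Pi.single_apply]
      rw [this]
      linarith [hwU i, (abs_le.1 (hU i j₀)).1]
  · refine ⟨fun j => u j / s, ?_, ?_, fun i => ?_⟩
    · simp only [abs_div, abs_of_pos hpos, ← sum_div, ← hs]
      exact div_self hpos.ne'
    · simpa [hpos.ne'] using hucard
    · have h1 : ∑ j, U i j * (u j / s) = (∑ j, U i j * u j) / s := by
        rw [sum_div]
        exact sum_congr rfl fun j _ => by ring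
      have h2 : |(∑ j, U i j * u j) / s| ≤ 1 := by
        rw [abs_div, abs_of_pos hpos, div_le_one hpos]
        exact abs_sum_mul_le (U i) u (hU i)
      have h3 : ∑ j, U i j * u j = (∑ j, U i j * u j) / s * s := by field_simp
      have h4 : |(∑ j, U i j * u j) / s * (s - 1)| ≤ ε := by
        rw [abs_mul]
        refine (mul_le_of_le_one_left (abs_nonneg _) h2).trans ?_
        rwa [huabs, add_sub_cancel_left]
      rw [h1]
      have h5 := (abs_le.1 h4).2
      rw [mul_sub, ← h3, huU] at h5
      rw [huU]
      linarith [(abs_le.1 (herr_some i)).1]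

lemma exists_sparse_of_card_support {ι J : Type*} [Fintype ι] [Nonempty ι] [Fintype J]
    (U : ι → J → ℝ) (hU : ∀ i j, |U i j| ≤ 1) {T : ℕ} (hT : 0 < T) (k : ℕ) (hTk : T ≤ k)
    (w : J → ℝ) (hw : ∑ j, |w j| = 1) (hk : #{j | w j ≠ 0} = k) :
    ∃ w' : J → ℝ, ∑ j, |w' j| = 1 ∧ #{j | w' j ≠ 0} ≤ T ∧
      ∀ i, ∑ j, U i j * w j - 1536 * (2 * sparsificationRate (Fintype.card ι) T -
        sparsificationRate (Fintype.card ι) k) ≤ ∑ j, U i j * w' j := by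
  induction k using Nat.strong_induction_on generalizing w with
  | _ k ih =>
    have hT' : (0 : ℝ) < T := by exact_mod_cast hT
    have hn : (0 : ℝ) ≤ Fintype.card ι := Nat.cast_nonneg _
    have hanti := sparsificationRate_antitone hn hT' (by exact_mod_cast hTk : (T : ℝ) ≤ k)
    have hnonneg := sparsificationRate_nonneg (Fintype.card ι) k
    rcases hTk.eq_or_lt with rfl | hlt
    · exact ⟨w, hw, hk.le, fun i => by linarith⟩
    obtain ⟨w₁, hw₁, hcard, hU₁⟩ := exists_smaller_support U hU w hw (by lia)
    rw [hk] at hcard hU₁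
    rcases le_or_gt #{j | w₁ j ≠ 0} T with h | h
    · exact ⟨w₁, hw₁, h, fun i => by linarith [hU₁ i]⟩
    · obtain ⟨w₂, hw₂, hcard₂, hU₂⟩ := ih _ (by lia) h.le w₁ hw₁ rfl
      have hgeom := sparsificationRate_geometric hn
        (by exact_mod_cast hT.trans h : (0 : ℝ) < #{j | w₁ j ≠ 0})
        (by exact_mod_cast hcard : (16 : ℝ) * #{j | w₁ j ≠ 0} ≤ 15 * k)
      exact ⟨w₂, hw₂, hcard₂, fun i => by linarith [hU₁ i, hU₂ i]⟩

/-- Sparsification preserving the minimal margin: one can sparsify `w` to `w'` with at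
most `T` nonzero entries so that the minimum coordinate of `Uw'` is at least the
minimum coordinate of `Uw` minus `C √(log(2 + n/T)/T)`. -/
theorem sparsification_min_margin :
    ∃ C : ℝ, 0 < C ∧
      ∀ (n m : ℕ), 0 < n → 0 < m →
        ∀ U : Matrix (Fin n) (Fin m) ℝ, (∀ i j, U i j ∈ Set.Icc (-1 : ℝ) 1) →
          ∀ w : Fin m → ℝ, (∑ j, |w j|) = 1 →
            ∀ T : ℕ, 0 < T → T ≤ m →
              ∃ w' : Fin m → ℝ,
                (∑ j, |w' j|) = 1 ∧
                (Finset.univ.filter (fun j => w' j ≠ 0)).card ≤ T ∧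
                (⨅ i, U.mulVec w' i) ≥
                  (⨅ i, U.mulVec w i) -
                    C * Real.sqrt (Real.log (2 + (n : ℝ) / (T : ℝ)) / (T : ℝ)) := by
  refine ⟨3072, by norm_num, fun n m hn hm U hU w hw T hT _ => ?_⟩
  have : Nonempty (Fin n) := ⟨⟨0, hn⟩⟩
  have hU' (i : Fin n) (j : Fin m) : |U i j| ≤ 1 := abs_le.2 (hU i j)
  change ∃ w' : Fin m → ℝ, _ ∧ _ ∧ (⨅ i, U.mulVec w' i) ≥ (⨅ i, U.mulVec w i) -
    3072 * sparsificationRate n T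
  have hrate := sparsificationRate_nonneg n T
  rcases le_total T #{j | w j ≠ 0} with h | h
  · obtain ⟨w', hw', hcard, hmargin⟩ := exists_sparse_of_card_support U hU' hT _ h w hw rfl
    refine ⟨w', hw', hcard, le_ciInf fun i => ?_⟩
    have hi : (⨅ i, U.mulVec w i) ≤ ∑ j, U i j * w j :=
      ciInf_le (Set.finite_range _).bddBelow i
    have hm' := hmargin i
    rw [Fintype.card_fin] at hm'
    change _ ≤ ∑ j, U i j * w' j
    linarith [sparsificationRate_nonneg n #{j | w j ≠ 0}]
  · exact ⟨w, hw, h, by linarith⟩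
end

section
/- There exists a universal constant C > 0 such that for all positive integers n, T and every matrix A ∈ [−1,1]^{n×T}, there exists a subset S of the column indices {1,…,T} with |S| ≤ T/2 such that for every row index i ∈ {1,…,n}: |Σ_{j∈S} a_{ij} − (1/2)·Σ_{j=1}^{T} a_{ij}| ≤ C·√(T·log(2 + n/T)). -/
open Finset
open scoped Classical

/-- The sign `±1` attached to a Boolean colour. -/
def colourSign (b : Bool) : ℝ := if b then 1 else -1

/-- A Rademacher sum of `Fintype.card ι` terms bounded by `1` is sub-Gaussian. -/
lemma sum_exp_signed_sum_le {ι : Type*} [Fintype ι] (a : ι → ℝ) (ha : ∀ j, |a j| ≤ 1) (θ : ℝ) :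
    ∑ χ : ι → Bool, Real.exp (θ * ∑ j, a j * colourSign (χ j)) ≤
      2 ^ Fintype.card ι * Real.exp (θ ^ 2 * Fintype.card ι / 2) := by
  have h1 : ∑ χ : ι → Bool, Real.exp (θ * ∑ j, a j * colourSign (χ j)) =
      ∏ j, ∑ b : Bool, Real.exp (θ * (a j * colourSign b)) := by
    rw [Finset.prod_univ_sum, Fintype.piFinset_univ]
    exact Finset.sum_congr rfl fun χ _ => by rw [Finset.mul_sum, Real.exp_sum]
  rw [h1]
  calc ∏ j, ∑ b : Bool, Real.exp (θ * (a j * colourSign b))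
      ≤ ∏ _j : ι, 2 * Real.exp (θ ^ 2 / 2) := by
        refine Finset.prod_le_prod (fun j _ => by positivity) fun j _ => ?_
        have h2 : ∑ b : Bool, Real.exp (θ * (a j * colourSign b)) = 2 * Real.cosh (θ * a j) := by
          simp [colourSign, Real.cosh_eq]
          ring
        rw [h2]
        have h3 : (θ * a j) ^ 2 ≤ θ ^ 2 := by
          have := (sq_le_one_iff_abs_le_one (a j)).2 (ha j)
          nlinarith [sq_nonneg θ]
        have h4 := Real.cosh_le_exp_half_sq (θ * a j)
        have h5 : Real.exp ((θ * a j) ^ 2 / 2) ≤ Real.exp (θ ^ 2 / 2) :=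
          Real.exp_le_exp.2 (by linarith)
        linarith
    _ = _ := by
        rw [Finset.prod_const, Finset.card_univ, mul_pow, ← Real.exp_nat_mul]
        congr 2
        ring

/-- Rounding to a multiple of `Δ` has size controlled by an exponential moment. -/
lemma abs_round_div_le_exp {s Δ θ : ℝ} (hΔ : 0 < Δ) (hθ : 0 < θ) (h : 1 ≤ θ * Δ) :
    |(round (s / Δ) : ℝ)| ≤
      Real.exp (1 - θ * Δ / 2) * (Real.exp (θ * s) + Real.exp (-θ * s)) := by
  rcases eq_or_ne (round (s / Δ)) 0 with h0 | h0
  · rw [h0]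
    simp only [Int.cast_zero, abs_zero]
    positivity
  set k : ℝ := |(round (s / Δ) : ℝ)| with hk
  have hk1 : 1 ≤ k := by
    rw [hk]
    exact_mod_cast Int.one_le_abs h0
  have hks : Δ * (k - 1 / 2) ≤ |s| := by
    have h1 : |s / Δ - round (s / Δ)| ≤ 1 / 2 := abs_sub_round _
    have h2 : k - |s / Δ| ≤ 1 / 2 := by
      refine le_trans (abs_sub_abs_le_abs_sub _ _) ?_
      rwa [abs_sub_comm]
    rw [abs_div, abs_of_pos hΔ] at h2
    have h3 : |s| = Δ * (|s| / Δ) := by field_simp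
    rw [h3]
    exact mul_le_mul_of_nonneg_left (by linarith) hΔ.le
  have hexp : Real.exp (θ * |s|) ≤ Real.exp (θ * s) + Real.exp (-θ * s) := by
    rcases abs_cases s with ⟨hs, -⟩ | ⟨hs, -⟩
    · rw [hs]
      linarith [Real.exp_pos (-θ * s)]
    · rw [hs, mul_neg, ← neg_mul]
      linarith [Real.exp_pos (θ * s)]
  calc k ≤ Real.exp k := by linarith [Real.add_one_le_exp k]
    _ ≤ Real.exp (1 - θ * Δ / 2 + θ * |s|) := by
        refine Real.exp_le_exp.2 ?_
        have := mul_le_mul_of_nonneg_left hks hθ.le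
        nlinarith [mul_nonneg (sub_nonneg.2 h) (sub_nonneg.2 hk1)]
    _ = Real.exp (1 - θ * Δ / 2) * Real.exp (θ * |s|) := Real.exp_add _ _
    _ ≤ _ := mul_le_mul_of_nonneg_left hexp (Real.exp_pos _).le

/-- A Kraft-type inequality for two-sided geometric weights on the integers. -/
lemma sum_exp_neg_geometric_cost_le_one {η : ℝ} (h0 : 0 < η) (h1 : η ≤ 1 / 2) (s : Finset ℤ) :
    ∑ k ∈ s, Real.exp (-(4 * η + -Real.log η * |(k : ℝ)|)) ≤ 1 := by
  have hterm (k : ℤ) : Real.exp (-(4 * η + -Real.log η * |(k : ℝ)|)) =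
      Real.exp (-(4 * η)) * η ^ k.natAbs := by
    rw [neg_add, Real.exp_add, ← Int.cast_abs, Int.abs_eq_natAbs, neg_mul, neg_neg,
      mul_comm (Real.log η), Int.cast_natCast, Real.exp_nat_mul, Real.exp_log h0]
  have hlt : η < 1 := by linarith
  have hsum : HasSum (fun k : ℤ => η ^ k.natAbs) ((1 - η)⁻¹ + (1 - η)⁻¹ * η) := by
    refine HasSum.of_nat_of_neg_add_one ?_ ?_
    · simpa using hasSum_geometric_of_lt_one h0.le hlt
    · have h := (hasSum_geometric_of_lt_one h0.le hlt).mul_right η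
      refine h.congr_fun fun n => ?_
      have : (-((n : ℤ) + 1)).natAbs = n + 1 := by omega
      rw [this, pow_succ]
  have hle := sum_le_hasSum s (fun k _ => by positivity) hsum
  simp_rw [hterm]
  rw [← Finset.mul_sum, Real.exp_neg, inv_mul_le_iff₀ (Real.exp_pos _), mul_one]
  refine hle.trans (le_trans ?_ (Real.add_one_le_exp (4 * η)))
  have : (1 - η)⁻¹ + (1 - η)⁻¹ * η = (1 + η) / (1 - η) := by
    rw [div_eq_mul_inv]; ring
  rw [this, div_le_iff₀ (by linarith)]
  nlinarith

/-- If an integer-vector-valued function has small average geometric cost, then one of its fibres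
is large. -/
lemma exists_large_fibre {Ω κ : Type*} [Fintype Ω] [Fintype κ] (b : Ω → κ → ℤ)
    {η m : ℝ} (h0 : 0 < η) (h1 : η ≤ 1 / 2)
    (hm : ∑ ω, ∑ i, (4 * η + -Real.log η * |(b ω i : ℝ)|) ≤ m * Fintype.card Ω) :
    ∃ v : κ → ℤ, Fintype.card Ω * Real.exp (-m) ≤ #{ω | b ω = v} := by
  by_contra! hcon
  set w : (κ → ℤ) → ℝ := fun v => ∑ i, (4 * η + -Real.log η * |(v i : ℝ)|) with hw
  set R : κ → Finset ℤ := fun i => univ.image fun ω => b ω i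
  have hlower : Fintype.card Ω * Real.exp (-m) ≤ ∑ ω, Real.exp (-w (b ω)) := by
    have htangent (ω : Ω) : Real.exp (-m) * (1 + m - w (b ω)) ≤ Real.exp (-w (b ω)) := by
      have h := Real.add_one_le_exp (m - w (b ω))
      calc Real.exp (-m) * (1 + m - w (b ω)) ≤ Real.exp (-m) * Real.exp (m - w (b ω)) :=
            mul_le_mul_of_nonneg_left (by linarith) (Real.exp_pos _).le
        _ = _ := by rw [← Real.exp_add]; congr 1; ring
    refine le_trans ?_ (Finset.sum_le_sum fun ω _ => htangent ω)
    rw [← Finset.mul_sum, Finset.sum_sub_distrib, Finset.sum_const, Finset.card_univ, nsmul_eq_mul,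
      mul_comm]
    exact mul_le_mul_of_nonneg_left (by linarith) (Real.exp_pos _).le
  have hkraft : ∑ v ∈ Fintype.piFinset R, Real.exp (-w v) ≤ 1 := by
    have : ∑ v ∈ Fintype.piFinset R, Real.exp (-w v) =
        ∏ i, ∑ k ∈ R i, Real.exp (-(4 * η + -Real.log η * |(k : ℝ)|)) := by
      rw [Finset.prod_univ_sum]
      refine Finset.sum_congr rfl fun v _ => ?_
      rw [hw, ← Finset.sum_neg_distrib, Real.exp_sum]
    rw [this]
    exact Finset.prod_le_one (fun i _ => Finset.sum_nonneg fun k _ => (Real.exp_pos _).le)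
      fun i _ => sum_exp_neg_geometric_cost_le_one h0 h1 _
  have hmem (ω : Ω) : b ω ∈ Fintype.piFinset R :=
    Fintype.mem_piFinset.2 fun i => Finset.mem_image_of_mem _ (Finset.mem_univ ω)
  have hfib : ∑ ω, Real.exp (-w (b ω)) =
      ∑ v ∈ Fintype.piFinset R, #{ω | b ω = v} * Real.exp (-w v) := by
    rw [← Finset.sum_fiberwise_of_maps_to (fun ω _ => hmem ω)]
    refine Finset.sum_congr rfl fun v _ => ?_
    rw [Finset.sum_congr rfl (g := fun _ => Real.exp (-w v))
      fun ω hω => by rw [(Finset.mem_filter.1 hω).2], Finset.sum_const, nsmul_eq_mul]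
  have hpos : 0 < (Fintype.card Ω : ℝ) * Real.exp (-m) :=
    (Nat.cast_nonneg _).trans_lt (hcon 0)
  have hΩ : Nonempty Ω := by
    by_contra hne
    rw [not_nonempty_iff] at hne
    simp at hpos
  have hstrict : ∑ v ∈ Fintype.piFinset R, #{ω | b ω = v} * Real.exp (-w v) <
      ∑ v ∈ Fintype.piFinset R, Fintype.card Ω * Real.exp (-m) * Real.exp (-w v) :=
    Finset.sum_lt_sum_of_nonempty ⟨_, hmem (Classical.arbitrary Ω)⟩ fun v _ =>
      mul_lt_mul_of_pos_right (hcon v) (Real.exp_pos _)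
  rw [← Finset.mul_sum] at hstrict
  nlinarith [mul_le_mul_of_nonneg_left hkraft hpos.le]

/-- The generating function of the Hamming distance to a fixed point of the Boolean cube. -/
lemma sum_exp_neg_hammingDist {ι : Type*} [Fintype ι] (χ₀ : ι → Bool) :
    ∑ χ : ι → Bool, Real.exp (-(hammingDist χ₀ χ : ℝ)) = (1 + Real.exp (-1)) ^ Fintype.card ι := by
  have h1 (χ : ι → Bool) : Real.exp (-(hammingDist χ₀ χ : ℝ)) =
      ∏ j, if χ₀ j = χ j then 1 else Real.exp (-1) := by
    rw [Finset.prod_ite, Finset.prod_const_one, one_mul, Finset.prod_const, ← Real.exp_nat_mul]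
    simp [hammingDist]
  simp_rw [h1]
  rw [← Fintype.piFinset_univ,
    ← Finset.prod_univ_sum (fun _ => univ) (fun j b => if χ₀ j = b then 1 else Real.exp (-1)),
    Fintype.card, ← Finset.prod_const]
  refine Finset.prod_congr rfl fun j _ => ?_
  cases χ₀ j <;> simp [add_comm]

/-- A large subset of the Boolean cube contains two points that are far apart. -/
lemma exists_hammingDist_gt {ι : Type*} [Fintype ι] [Nonempty ι] (F : Finset (ι → Bool))
    (hF : 2 ^ Fintype.card ι * Real.exp (-((Fintype.card ι : ℝ) / 8)) ≤ #F) :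
    ∃ χ ∈ F, ∃ χ' ∈ F, (Fintype.card ι : ℝ) / 8 < hammingDist χ χ' := by
  by_contra! hcon
  set t := Fintype.card ι with ht
  have ht0 : t ≠ 0 := Fintype.card_ne_zero
  have hFpos : (0 : ℝ) < #F := lt_of_lt_of_le (by positivity) hF
  obtain ⟨χ₀, hχ₀⟩ : F.Nonempty := Finset.card_pos.1 (by exact_mod_cast hFpos)
  have hball : (#F : ℝ) * Real.exp (-((t : ℝ) / 8)) ≤ (1 + Real.exp (-1)) ^ t := by
    rw [← sum_exp_neg_hammingDist χ₀, ← nsmul_eq_mul, ← Finset.sum_const]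
    refine le_trans (Finset.sum_le_sum fun χ hχ => ?_)
      (Finset.sum_le_sum_of_subset_of_nonneg (Finset.subset_univ F)
        fun χ _ _ => (Real.exp_pos (-(hammingDist χ₀ χ : ℝ))).le)
    exact Real.exp_le_exp.2 (neg_le_neg (hcon χ₀ hχ₀ χ hχ))
  have hbase : 1 + Real.exp (-1) < 2 * Real.exp (-(1 / 4)) := by
    have h1 : Real.exp (-1) < 1 / 2 := by
      rw [Real.exp_neg, inv_lt_comm₀ (Real.exp_pos _) (by norm_num)]
      linarith [Real.exp_one_gt_d9]
    have h2 := Real.add_one_le_exp (-(1 / 4 : ℝ))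
    linarith
  have hpow : (1 + Real.exp (-1)) ^ t < (2 * Real.exp (-(1 / 4))) ^ t :=
    pow_lt_pow_left₀ hbase (by positivity) ht0
  have heq : (2 * Real.exp (-(1 / 4))) ^ t =
      2 ^ t * Real.exp (-((t : ℝ) / 8)) * Real.exp (-((t : ℝ) / 8)) := by
    rw [mul_pow, ← Real.exp_nat_mul, mul_assoc, ← Real.exp_add]
    congr 2
    ring
  have := mul_le_mul_of_nonneg_right hF (Real.exp_pos (-((t : ℝ) / 8))).le
  linarith

/-- The variance proxy `t log (8 + n / t)` governing the discrepancy of `n` rows and `t` columns. -/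
noncomputable def discrepancyScale (n t : ℝ) : ℝ := t * Real.log (8 + n / t)

lemma two_le_log_eight_add {x : ℝ} (hx : 0 ≤ x) : 2 ≤ Real.log (8 + x) := by
  rw [Real.le_log_iff_exp_le (by linarith)]
  have h : Real.exp 2 = Real.exp 1 * Real.exp 1 := by rw [← Real.exp_add]; norm_num
  have := Real.exp_one_lt_d9
  have := Real.exp_pos 1
  nlinarith

/-- The scale decays at least linearly when the number of columns decreases. -/
lemma discrepancyScale_le {n t t' : ℝ} (hn : 0 ≤ n) (ht' : 0 < t') (htt' : t' ≤ t) :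
    discrepancyScale n t' ≤ (t + t') / (2 * t) * discrepancyScale n t := by
  have ht : 0 < t := ht'.trans_le htt'
  have hx : 0 ≤ n / t := by positivity
  have hL := two_le_log_eight_add hx
  unfold discrepancyScale
  set L := Real.log (8 + n / t)
  have h1 : Real.log (8 + n / t') ≤ L + (t / t' - 1) := by
    have h2 : 8 + n / t' ≤ (8 + n / t) * (t / t') := by
      have h3 : n / t' = n / t * (t / t') := by field_simp
      have h4 : 1 ≤ t / t' := (one_le_div ht').2 htt'
      rw [h3]
      linarith
    calc Real.log (8 + n / t') ≤ Real.log ((8 + n / t) * (t / t')) :=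
          Real.log_le_log (by positivity) h2
      _ = L + Real.log (t / t') := Real.log_mul (by positivity) (by positivity)
      _ ≤ _ := by linarith [Real.log_le_sub_one_of_pos (show 0 < t / t' by positivity)]
  calc t' * Real.log (8 + n / t') ≤ t' * (L + (t / t' - 1)) :=
        mul_le_mul_of_nonneg_left h1 ht'.le
    _ = t' * L + (t - t') := by field_simp
    _ ≤ (t + t') / 2 * L := by nlinarith
    _ = _ := by field_simp

/-- Colourings of the columns, rounded at the scale of the discrepancy, have small average cost. -/
lemma sum_rounding_cost_le {ι κ : Type*} [Fintype ι] [Fintype κ] [Nonempty ι]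
    (a : κ → ι → ℝ) (ha : ∀ i j, |a i j| ≤ 1) {y Δ : ℝ}
    (hy : y = 8 + (Fintype.card κ : ℝ) / Fintype.card ι)
    (hΔ : Δ = 11 * √(Fintype.card ι * Real.log y)) :
    ∑ χ : ι → Bool, ∑ i, (4 * y⁻¹ ^ 3 + -Real.log (y⁻¹ ^ 3) *
      |(round ((∑ j, a i j * colourSign (χ j)) / Δ) : ℝ)|) ≤
      (Fintype.card ι : ℝ) / 8 * Fintype.card (ι → Bool) := by
  set t : ℝ := (Fintype.card ι : ℝ) with ht
  set n : ℝ := (Fintype.card κ : ℝ) with hn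
  have ht0 : 0 < t := by
    rw [ht]
    exact_mod_cast Fintype.card_pos
  have hn0 : 0 ≤ n := Nat.cast_nonneg _
  have hx : 0 ≤ n / t := by positivity
  have hy8 : 8 ≤ y := by linarith
  have hy0 : 0 < y := by linarith
  set L := Real.log y with hLdef
  have hL2 : 2 ≤ L := by
    rw [hLdef, hy]
    exact two_le_log_eight_add hx
  have hLy : L ≤ y := by linarith [Real.log_le_sub_one_of_pos hy0]
  have hexpL : Real.exp L = y := Real.exp_log hy0
  set θ := √(L / t) with hθ
  have hθ0 : 0 < θ := Real.sqrt_pos.2 (by positivity)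
  have hΔ0 : 0 < Δ := by
    rw [hΔ]
    have : 0 < √(t * L) := Real.sqrt_pos.2 (by positivity)
    positivity
  have hθΔ : θ * Δ = 11 * L := by
    have h : √(L / t) * √(t * L) = L := by
      rw [← Real.sqrt_mul (by positivity), show L / t * (t * L) = L * L by field_simp,
        Real.sqrt_mul_self (by linarith)]
    rw [hθ, hΔ]
    linear_combination 11 * h
  have hθt : θ ^ 2 * t / 2 = L / 2 := by
    rw [hθ, Real.sq_sqrt (by positivity)]
    field_simp
  have hcard : (Fintype.card (ι → Bool) : ℝ) = 2 ^ Fintype.card ι := by simp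
  have hround (i : κ) : ∑ χ : ι → Bool, |(round ((∑ j, a i j * colourSign (χ j)) / Δ) : ℝ)| ≤
      2 ^ Fintype.card ι * (6 * y⁻¹ ^ 5) := by
    have hp := sum_exp_signed_sum_le (a i) (ha i) θ
    have hm := sum_exp_signed_sum_le (a i) (ha i) (-θ)
    rw [neg_sq] at hm
    rw [← ht, hθt] at hp hm
    calc _ ≤ ∑ χ : ι → Bool, Real.exp (1 - θ * Δ / 2) *
          (Real.exp (θ * ∑ j, a i j * colourSign (χ j)) +
            Real.exp (-θ * ∑ j, a i j * colourSign (χ j))) :=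
          Finset.sum_le_sum fun χ _ => abs_round_div_le_exp hΔ0 hθ0 (by linarith)
      _ ≤ Real.exp (1 - θ * Δ / 2) * (2 * (2 ^ Fintype.card ι * Real.exp (L / 2))) := by
          rw [← Finset.mul_sum, Finset.sum_add_distrib]
          exact mul_le_mul_of_nonneg_left (by linarith) (Real.exp_pos _).le
      _ = 2 ^ Fintype.card ι * (2 * Real.exp 1 * y⁻¹ ^ 5) := by
          have h : Real.exp (1 - θ * Δ / 2) * Real.exp (L / 2) = Real.exp 1 * y⁻¹ ^ 5 := by
            rw [← Real.exp_add, hθΔ, ← hexpL, ← Real.exp_neg, ← Real.exp_nat_mul, ← Real.exp_add]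
            congr 1
            push_cast
            ring
          linear_combination 2 * 2 ^ Fintype.card ι * h
      _ ≤ _ := by
          gcongr
          linarith [Real.exp_one_lt_d9]
  have hlog : -Real.log (y⁻¹ ^ 3) = 3 * L := by
    rw [Real.log_pow, Real.log_inv]
    push_cast
    ring
  have hny : n ≤ t * y := by
    rw [hy]
    have : t * (8 + n / t) = 8 * t + n := by field_simp
    linarith
  rw [Finset.sum_comm, hcard, hlog]
  calc _ ≤ ∑ _i : κ, 2 ^ Fintype.card ι * (4 * y⁻¹ ^ 3 + 3 * y * (6 * y⁻¹ ^ 5)) := by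
        refine Finset.sum_le_sum fun i _ => ?_
        rw [Finset.sum_add_distrib, Finset.sum_const, Finset.card_univ, nsmul_eq_mul,
          ← Finset.mul_sum, hcard, mul_add]
        have h1 : 3 * L * ∑ χ : ι → Bool, |(round ((∑ j, a i j * colourSign (χ j)) / Δ) : ℝ)| ≤
            3 * y * (2 ^ Fintype.card ι * (6 * y⁻¹ ^ 5)) := by
          have := hround i
          gcongr
        linarith
    _ = 2 ^ Fintype.card ι * (n * (4 * y⁻¹ ^ 3 + 18 * y⁻¹ ^ 4)) := by
        rw [Finset.sum_const, Finset.card_univ, nsmul_eq_mul]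
        field_simp
        ring
    _ ≤ 2 ^ Fintype.card ι * (t * y * (4 * y⁻¹ ^ 3 + 18 * y⁻¹ ^ 4)) := by gcongr
    _ = 2 ^ Fintype.card ι * (t * (4 * y⁻¹ ^ 2 + 18 * y⁻¹ ^ 3)) := by
        field_simp
    _ ≤ 2 ^ Fintype.card ι * (t * (4 * 8⁻¹ ^ 2 + 18 * 8⁻¹ ^ 3)) := by gcongr
    _ ≤ 2 ^ Fintype.card ι * (t * (1 / 8)) := by
        gcongr
        norm_num
    _ = _ := by ring

/-- Partial colouring: some pair of colourings with nearly equal row sums differs on more than an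
eighth of the columns. -/
lemma exists_partial_colouring {ι κ : Type*} [Fintype ι] [Fintype κ] [Nonempty ι]
    (a : κ → ι → ℝ) (ha : ∀ i j, |a i j| ≤ 1) :
    ∃ χ χ' : ι → Bool, (Fintype.card ι : ℝ) / 8 < hammingDist χ χ' ∧
      ∀ i, |∑ j, a i j * colourSign (χ j) - ∑ j, a i j * colourSign (χ' j)| ≤
        11 * √(discrepancyScale (Fintype.card κ) (Fintype.card ι)) := by
  obtain ⟨y, hy⟩ : ∃ y : ℝ, y = 8 + (Fintype.card κ : ℝ) / Fintype.card ι := ⟨_, rfl⟩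
  obtain ⟨Δ, hΔ⟩ : ∃ Δ : ℝ, Δ = 11 * √(Fintype.card ι * Real.log y) := ⟨_, rfl⟩
  have hx : (0 : ℝ) ≤ (Fintype.card κ : ℝ) / Fintype.card ι := by positivity
  have hy8 : 8 ≤ y := by linarith
  have hη : y⁻¹ ^ 3 ≤ 1 / 2 := calc
    y⁻¹ ^ 3 ≤ 8⁻¹ ^ 3 := by gcongr
    _ ≤ 1 / 2 := by norm_num
  obtain ⟨v, hv⟩ := exists_large_fibre
    (fun (χ : ι → Bool) i => round ((∑ j, a i j * colourSign (χ j)) / Δ))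
    (by positivity) hη (sum_rounding_cost_le a ha hy hΔ)
  have hcard : (Fintype.card (ι → Bool) : ℝ) = 2 ^ Fintype.card ι := by simp
  rw [hcard] at hv
  obtain ⟨χ, hχ, χ', hχ', hd⟩ := exists_hammingDist_gt _ hv
  refine ⟨χ, χ', hd, fun i => ?_⟩
  have hΔ0 : 0 < Δ := by
    have hL := two_le_log_eight_add hx
    rw [← hy] at hL
    have ht : (0 : ℝ) < Fintype.card ι := by exact_mod_cast Fintype.card_pos
    rw [hΔ]
    have : 0 < √(Fintype.card ι * Real.log y) := Real.sqrt_pos.2 (by positivity)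
    positivity
  have h1 := congrFun (Finset.mem_filter.1 hχ).2 i
  have h2 := congrFun (Finset.mem_filter.1 hχ').2 i
  unfold discrepancyScale
  rw [← hy, ← hΔ]
  set s := ∑ j, a i j * colourSign (χ j)
  set s' := ∑ j, a i j * colourSign (χ' j)
  have e1 := abs_le.1 (abs_sub_round (s / Δ))
  have e2 := abs_le.1 (abs_sub_round (s' / Δ))
  rw [h1] at e1
  rw [h2] at e2
  have h3 : |(s - s') / Δ| ≤ 1 := by
    rw [sub_div, abs_le]
    constructor <;> linarith [e1.1, e1.2, e2.1, e2.2]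
  rwa [abs_div, abs_of_pos hΔ0, div_le_one hΔ0] at h3

/-- Every matrix with entries in `[-1, 1]` has a column colouring whose signed row sums are of the
order of the discrepancy scale. -/
lemma exists_colouring {κ : Type*} [Fintype κ] (t : ℕ) :
    ∀ (ι : Type) [Fintype ι], Fintype.card ι = t → ∀ a : κ → ι → ℝ, (∀ i j, |a i j| ≤ 1) →
      ∃ χ : ι → Bool, ∀ i, |∑ j, a i j * colourSign (χ j)| ≤
        192 * √(discrepancyScale (Fintype.card κ) t) := by
  induction t using Nat.strong_induction_on with
  | _ t ih =>
    intro ι _ hcard a ha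
    rcases isEmpty_or_nonempty ι with hι | hι
    · exact ⟨fun _ => true, fun i => by simp⟩
    obtain ⟨χ, χ', hd, hχ⟩ := exists_partial_colouring a ha
    rw [hcard] at hd hχ
    have hsplit : hammingDist χ χ' + Fintype.card {j // χ j = χ' j} = t := by
      rw [← hcard, Fintype.card_subtype, hammingDist, add_comm]
      exact Finset.card_filter_add_card_filter_not (s := univ) fun j => χ j = χ' j
    set t' := Fintype.card {j // χ j = χ' j} with ht'
    have hsplit' : (hammingDist χ χ' : ℝ) + t' = t := by exact_mod_cast hsplit
    have htpos : (0 : ℝ) < t := by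
      rw [← hcard]
      exact_mod_cast Fintype.card_pos
    have hlt : t' < t := by
      have : (t' : ℝ) < t := by linarith
      exact_mod_cast this
    obtain ⟨ψ, hψ⟩ := ih t' hlt {j // χ j = χ' j} rfl (fun i j => a i j) fun i j => ha i j
    refine ⟨fun j => if h : χ j = χ' j then ψ ⟨j, h⟩ else χ j, fun i => ?_⟩
    set D := discrepancyScale (Fintype.card κ) t with hD
    have hdecay : √(discrepancyScale (Fintype.card κ) t') ≤ 31 / 32 * √D := by
      have hD0 : 0 ≤ D := by
        have := two_le_log_eight_add (x := (Fintype.card κ : ℝ) / t) (by positivity)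
        rw [hD, discrepancyScale]
        positivity
      rcases Nat.eq_zero_or_pos t' with h0 | h0
      · rw [h0]
        simp only [discrepancyScale, Nat.cast_zero, zero_mul, Real.sqrt_zero]
        positivity
      rw [Real.sqrt_le_left (by positivity), mul_pow, Real.sq_sqrt hD0]
      refine (discrepancyScale_le (Nat.cast_nonneg _) (by exact_mod_cast h0)
        (by exact_mod_cast hlt.le)).trans (mul_le_mul_of_nonneg_right ?_ hD0)
      rw [div_le_iff₀ (by positivity)]
      linarith
    have hsum : ∑ j, a i j * colourSign (if h : χ j = χ' j then ψ ⟨j, h⟩ else χ j) =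
        (∑ j, a i j * colourSign (χ j) - ∑ j, a i j * colourSign (χ' j)) / 2 +
          ∑ j : {j // χ j = χ' j}, a i j * colourSign (ψ j) := by
      have hsub : ∑ j : {j // χ j = χ' j}, a i j * colourSign (ψ j) =
          ∑ j, if h : χ j = χ' j then a i j * colourSign (ψ ⟨j, h⟩) else 0 := by
        rw [Finset.sum_dite, Finset.sum_const_zero, add_zero]
        refine Finset.sum_bij (fun j _ => ⟨j, by simpa using j.2⟩) ?_ ?_ ?_ ?_ <;> simp
      rw [hsub, ← Finset.sum_sub_distrib, Finset.sum_div, ← Finset.sum_add_distrib]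
      refine Finset.sum_congr rfl fun j _ => ?_
      split_ifs with h
      · rw [h]
        ring
      · have : colourSign (χ' j) = -colourSign (χ j) := by
          rcases hc : χ j <;> rcases hc' : χ' j <;> simp_all [colourSign]
        rw [this]
        ring
    rw [hsum]
    have h1 := hχ i
    have h2 := hψ i
    refine (abs_add_le _ _).trans ?_
    rw [abs_div, abs_two]
    have := Real.sqrt_nonneg D
    linarith

/-- Row-sum preserving column subset selection: for any `A ∈ [-1,1]^{n×T}` there is a
subset `S` of at most `T/2` columns whose row sums approximate half the full row sums
up to `C √(T log(2 + n/T))`. -/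
theorem row_sum_preserving_columns :
    ∃ C : ℝ, 0 < C ∧
      ∀ (n T : ℕ), 0 < n → 0 < T →
        ∀ A : Matrix (Fin n) (Fin T) ℝ, (∀ i j, A i j ∈ Set.Icc (-1 : ℝ) 1) →
          ∃ S : Finset (Fin T), (S.card : ℝ) ≤ (T : ℝ) / 2 ∧
            ∀ i, |(∑ j ∈ S, A i j) - (1 / 2) * ∑ j, A i j| ≤
              C * Real.sqrt ((T : ℝ) * Real.log (2 + (n : ℝ) / (T : ℝ))) := by
  refine ⟨192, by norm_num, fun n T hn hT A hA => ?_⟩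
  have hT' : (0 : ℝ) < T := by exact_mod_cast hT
  obtain ⟨χ, hχ⟩ := exists_colouring T (Fin T) (by simp) A fun i j => abs_le.2 (hA i j)
  rw [Fintype.card_fin] at hχ
  have hscale : √(discrepancyScale n T) ≤ 2 * √((T : ℝ) * Real.log (2 + (n : ℝ) / (T : ℝ))) := by
    have hx : (0 : ℝ) ≤ n / T := by positivity
    have hlog0 : 0 ≤ Real.log (2 + (n : ℝ) / T) := Real.log_nonneg (by linarith)
    have hlog : Real.log (8 + (n : ℝ) / T) ≤ 4 * Real.log (2 + (n : ℝ) / T) := by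
      have h : Real.log ((2 + (n : ℝ) / T) ^ 4) = 4 * Real.log (2 + (n : ℝ) / T) := by
        rw [Real.log_pow]
        norm_num
      rw [← h]
      refine Real.log_le_log (by positivity) ?_
      nlinarith [mul_nonneg hx hx, pow_nonneg hx 3, pow_nonneg hx 4]
    rw [Real.sqrt_le_left (by positivity), mul_pow, Real.sq_sqrt (by positivity), discrepancyScale]
    nlinarith
  have hhalf (b : Bool) (i : Fin n) :
      |(∑ j with χ j = b, A i j) - (1 / 2) * ∑ j, A i j| =
        |∑ j, A i j * colourSign (χ j)| / 2 := by
    have h : (∑ j with χ j = b, A i j) - (1 / 2) * ∑ j, A i j =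
        colourSign b * (∑ j, A i j * colourSign (χ j)) / 2 := by
      rw [Finset.sum_filter, Finset.mul_sum, Finset.mul_sum, Finset.sum_div,
        ← Finset.sum_sub_distrib]
      refine Finset.sum_congr rfl fun j _ => ?_
      cases b <;> cases χ j <;> simp [colourSign] <;> ring
    have hb : |colourSign b| = 1 := by cases b <;> simp [colourSign]
    rw [h, abs_div, abs_mul, hb, one_mul, abs_two]
  obtain ⟨b, hb⟩ : ∃ b : Bool, (#{j | χ j = b} : ℝ) ≤ (T : ℝ) / 2 := by
    have hadd : (#{j | χ j = true} : ℝ) + #{j | χ j = false} = T := by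
      have h := Finset.card_filter_add_card_filter_not (s := univ) fun j => χ j = true
      simp only [Bool.not_eq_true, Finset.card_univ, Fintype.card_fin] at h
      exact_mod_cast h
    by_contra! hcon
    linarith [hcon true, hcon false]
  refine ⟨_, hb, fun i => ?_⟩
  rw [hhalf]
  linarith [hχ i]
end

section
/- There exists a universal constant C > 0 such that for all positive integers n, T with T > n and every matrix A ∈ [−1,1]^{n×T}, there exists a sign vector x ∈ {−1,+1}^T with ‖Ax‖_∞ ≤ C·√n. -/
open Finset
open scoped Classical

lemma sum_powerset_const {ι : Type*} (J : Finset ι) (c : ℝ) :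
    ∑ _S ∈ J.powerset, c = 2 ^ #J * c := by
  simp [card_powerset]

section SignedSums
variable {ι : Type*} [DecidableEq ι]

/-- The signed sum `∑_{j ∈ S} a j - ∑_{j ∈ J \ S} a j`, for `S ⊆ J`. -/
def signedSum (a : ι → ℝ) (J S : Finset ι) : ℝ := 2 * ∑ j ∈ S, a j - ∑ j ∈ J, a j

lemma signedSum_insert_left (a : ι → ℝ) {J S : Finset ι} {j : ι} (hj : j ∉ J) :
    signedSum a (insert j J) S = signedSum a J S - a j := by
  rw [signedSum, signedSum, sum_insert hj]; ring

lemma signedSum_insert_insert (a : ι → ℝ) {J S : Finset ι} {j : ι} (hj : j ∉ J) (hS : S ⊆ J) :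
    signedSum a (insert j J) (insert j S) = signedSum a J S + a j := by
  rw [signedSum, signedSum, sum_insert hj, sum_insert (fun h => hj (hS h))]; ring

lemma sum_powerset_insert_signedSum (φ : ℝ → ℝ) (a : ι → ℝ) {J : Finset ι} {j : ι}
    (hj : j ∉ J) :
    ∑ S ∈ (insert j J).powerset, φ (signedSum a (insert j J) S) =
      ∑ S ∈ J.powerset, (φ (signedSum a J S - a j) + φ (signedSum a J S + a j)) := by
  rw [sum_powerset_insert hj, ← sum_add_distrib]
  refine sum_congr rfl fun S hS => ?_
  rw [signedSum_insert_left a hj, signedSum_insert_insert a hj (mem_powerset.1 hS)]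

lemma sum_signedSum_sq_le {a : ι → ℝ} (ha : ∀ j, |a j| ≤ 1) (J : Finset ι) :
    ∑ S ∈ J.powerset, signedSum a J S ^ 2 ≤ 2 ^ #J * #J := by
  induction J using Finset.induction_on with
  | empty => simp [signedSum]
  | insert j J hj ih =>
    have h1 : a j ^ 2 ≤ 1 := (sq_le_one_iff_abs_le_one _).2 (ha j)
    rw [sum_powerset_insert_signedSum (· ^ 2) a hj, card_insert_of_notMem hj]
    calc _ = 2 * ∑ S ∈ J.powerset, signedSum a J S ^ 2 + 2 ^ #J * (2 * a j ^ 2) := by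
          rw [← sum_powerset_const, mul_sum, ← sum_add_distrib]
          exact sum_congr rfl fun S _ => by ring
      _ ≤ 2 * (2 ^ #J * #J) + 2 ^ #J * (2 * 1) := by gcongr
      _ = _ := by push_cast; ring

lemma sum_signedSum_pow_four_le {a : ι → ℝ} (ha : ∀ j, |a j| ≤ 1) (J : Finset ι) :
    ∑ S ∈ J.powerset, signedSum a J S ^ 4 ≤ 2 ^ #J * (3 * (#J : ℝ) ^ 2) := by
  induction J using Finset.induction_on with
  | empty => simp [signedSum]
  | insert j J hj ih =>
    have h1 : a j ^ 2 ≤ 1 := (sq_le_one_iff_abs_le_one _).2 (ha j)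
    have h2 : a j ^ 4 ≤ 1 := by nlinarith [sq_nonneg (a j)]
    have h3 : 0 ≤ ∑ S ∈ J.powerset, signedSum a J S ^ 2 := sum_nonneg fun _ _ => sq_nonneg _
    have h4 := sum_signedSum_sq_le ha J
    rw [sum_powerset_insert_signedSum (· ^ 4) a hj, card_insert_of_notMem hj]
    calc _ = 2 * ∑ S ∈ J.powerset, signedSum a J S ^ 4
          + 12 * a j ^ 2 * ∑ S ∈ J.powerset, signedSum a J S ^ 2 + 2 ^ #J * (2 * a j ^ 4) := by
          rw [← sum_powerset_const, mul_sum, mul_sum, ← sum_add_distrib, ← sum_add_distrib]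
          exact sum_congr rfl fun S _ => by ring
      _ ≤ 2 * (2 ^ #J * (3 * (#J : ℝ) ^ 2)) + 12 * 1 * (2 ^ #J * #J) + 2 ^ #J * (2 * 1) := by
          gcongr
      _ ≤ _ := by
          push_cast
          have : (0 : ℝ) < 2 ^ #J := by positivity
          rw [pow_succ 2 #J]
          nlinarith

end SignedSums

/-- A pigeonhole principle with costs: if the costs `w` satisfy Kraft's inequality on the values
of `b`, and have average at most `E` along `b`, then some fibre of `b` has density at least
`exp (-E)`. -/
lemma exists_large_fiber {α β : Type*} [DecidableEq β] {Ω : Finset α} (hΩ : Ω.Nonempty)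
    (b : α → β) (w : β → ℝ) (E : ℝ) (hw : ∑ v ∈ Ω.image b, Real.exp (-w v) ≤ 1)
    (hE : ∑ x ∈ Ω, w (b x) ≤ #Ω * E) :
    ∃ x ∈ Ω, #Ω * Real.exp (-E) ≤ #{y ∈ Ω | b y = b x} := by
  by_contra! h
  have hN : (0 : ℝ) < #Ω := by exact_mod_cast hΩ.card_pos
  have hc : ∀ x ∈ Ω, (0 : ℝ) < #{y ∈ Ω | b y = b x} := fun x hx => by
    exact_mod_cast card_pos.2 ⟨x, by simp [hx]⟩
  have h1 : ∑ x ∈ Ω, Real.exp (-w (b x)) / #{y ∈ Ω | b y = b x} =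
      ∑ v ∈ Ω.image b, Real.exp (-w v) := by
    rw [← sum_fiberwise_of_maps_to (t := Ω.image b) (g := b) (fun x hx => mem_image_of_mem b hx)]
    refine sum_congr rfl fun v hv => ?_
    obtain ⟨x, hx, rfl⟩ := mem_image.1 hv
    rw [sum_congr rfl (g := fun _ => Real.exp (-w (b x)) / #{y ∈ Ω | b y = b x}), sum_const,
      nsmul_eq_mul]
    · have := (hc x hx).ne'
      field_simp
    · intro y hy
      rw [(mem_filter.1 hy).2]
  have h2 : ∀ x ∈ Ω, (1 + E - w (b x)) / #Ω <
      Real.exp (-w (b x)) / #{y ∈ Ω | b y = b x} := fun x hx => by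
    calc _ ≤ Real.exp (E - w (b x)) / #Ω := by
          gcongr
          linarith [Real.add_one_le_exp (E - w (b x))]
      _ = Real.exp (-w (b x)) / (#Ω * Real.exp (-E)) := by
          rw [Real.exp_neg E, sub_eq_add_neg, Real.exp_add]
          have := Real.exp_pos E
          field_simp
      _ < _ := div_lt_div_of_pos_left (Real.exp_pos _) (hc x hx) (h x hx)
  have h3 := sum_lt_sum_of_nonempty hΩ h2
  rw [h1, ← sum_div, sum_sub_distrib, sum_const, nsmul_eq_mul] at h3
  have h4 : 1 ≤ (#Ω * (1 + E) - ∑ x ∈ Ω, w (b x)) / #Ω := by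
    rw [le_div_iff₀ hN]; linarith
  linarith

lemma sum_Icc_pow_natAbs_le {ρ : ℝ} (h0 : 0 ≤ ρ) (h1 : ρ ≤ 1 / 2) (M : ℕ) :
    ∑ k ∈ Icc (-(M : ℤ)) M, ρ ^ k.natAbs ≤ 1 + 4 * ρ := by
  suffices h : ∑ k ∈ Icc (-(M : ℤ)) M, ρ ^ k.natAbs + 4 * ρ ^ (M + 1) ≤ 1 + 4 * ρ by
    have : 0 ≤ ρ ^ (M + 1) := by positivity
    linarith
  induction M with
  | zero => simp
  | succ M ih =>
    have : Icc (-((M + 1 : ℕ) : ℤ)) ((M + 1 : ℕ) : ℤ) =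
        insert (-((M : ℤ) + 1)) (insert ((M : ℤ) + 1) (Icc (-(M : ℤ)) M)) := by
      ext k; simp only [mem_Icc, mem_insert]; omega
    rw [this, sum_insert (by simp only [mem_Icc, mem_insert]; omega),
      sum_insert (by simp only [mem_Icc]; omega)]
    have e1 : (-((M : ℤ) + 1)).natAbs = M + 1 := by omega
    have e2 : ((M : ℤ) + 1).natAbs = M + 1 := by omega
    rw [e1, e2, pow_succ ρ (M + 1)]
    have : 0 ≤ ρ ^ (M + 1) := by positivity
    nlinarith

lemma abs_round_le_pow_four (y : ℝ) : |(round y : ℝ)| ≤ 16 * y ^ 4 := by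
  by_cases h : round y = 0
  · rw [h]; simp; positivity
  · have h1 : (1 : ℝ) ≤ |(round y : ℝ)| := by exact_mod_cast Int.one_le_abs h
    have h2 := abs_sub_round y
    have h3 : |(round y : ℝ)| ≤ |y| + 1 / 2 := by
      have := abs_sub_abs_le_abs_sub (round y : ℝ) y
      rw [abs_sub_comm] at this; linarith
    have h4 : 1 / 2 ≤ |y| := by linarith
    have h5 : y ^ 4 = |y| ^ 4 := by rw [← abs_pow, abs_of_nonneg (by positivity)]
    rw [h5]
    have h6 : 1 / 8 ≤ |y| ^ 3 := by
      calc (1 / 8 : ℝ) = (1 / 2) ^ 3 := by norm_num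
        _ ≤ _ := by gcongr
    nlinarith

/-- Kraft's inequality for the costs `L * |k| + 4 * exp (-L)` on integer vectors. -/
lemma sum_exp_neg_cost_le_one {κ : Type*} [Fintype κ] [DecidableEq κ] {L : ℝ}
    (hL : Real.exp (-L) ≤ 1 / 2) (s : Finset (κ → ℤ)) :
    ∑ v ∈ s, Real.exp (-∑ i, (L * |(v i : ℝ)| + 4 * Real.exp (-L))) ≤ 1 := by
  set ρ := Real.exp (-L) with hρ
  set M : ℕ := ∑ v ∈ s, ∑ i, (v i).natAbs with hM
  have hs : s ⊆ Fintype.piFinset fun _ => Icc (-(M : ℤ)) M := fun v hv => by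
    rw [Fintype.mem_piFinset]
    intro i
    have h1 : (v i).natAbs ≤ ∑ i, (v i).natAbs :=
      single_le_sum (f := fun i => (v i).natAbs) (fun _ _ => Nat.zero_le _) (mem_univ i)
    have h2 : ∑ i, (v i).natAbs ≤ M :=
      single_le_sum (f := fun v : κ → ℤ => ∑ i, (v i).natAbs) (fun _ _ => Nat.zero_le _) hv
    rw [mem_Icc]; omega
  refine (sum_le_sum_of_subset_of_nonneg hs fun _ _ _ => (Real.exp_pos _).le).trans ?_
  have hterm : ∀ k : ℤ, Real.exp (-(L * |(k : ℝ)| + 4 * ρ)) =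
      Real.exp (-(4 * ρ)) * ρ ^ k.natAbs := by
    intro k
    rw [hρ, ← Real.exp_nat_mul, ← Real.exp_add, Nat.cast_natAbs, Int.cast_abs]
    congr 1; ring
  simp_rw [← sum_neg_distrib, Real.exp_sum, hterm]
  rw [← prod_univ_sum (fun _ : κ => Icc (-(M : ℤ)) M)
    (fun _ k => Real.exp (-(4 * ρ)) * ρ ^ k.natAbs)]
  refine prod_le_one (fun _ _ => sum_nonneg fun _ _ => by positivity) fun _ _ => ?_
  rw [← mul_sum]
  calc _ ≤ Real.exp (-(4 * ρ)) * Real.exp (4 * ρ) := by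
        gcongr
        linarith [sum_Icc_pow_natAbs_le (Real.exp_pos _).le hL M, Real.add_one_le_exp (4 * ρ)]
    _ = 1 := by rw [← Real.exp_add]; simp

/-- A dense family of subsets of `J` contains two sets that differ in an eighth of `J`. -/
lemma exists_large_symmDiff {ι : Type*} [DecidableEq ι] {J : Finset ι} (hJ : J.Nonempty)
    {𝒮 : Finset (Finset ι)} (h𝒮 : 𝒮 ⊆ J.powerset) {S : Finset ι} (hS : S ∈ J.powerset)
    (hcard : 2 ^ #J * Real.exp (-(#J / 8 : ℝ)) ≤ #𝒮) :
    ∃ S' ∈ 𝒮, (#J : ℝ) / 8 ≤ #(symmDiff S S') := by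
  by_contra! h
  have h1 : #𝒮 * Real.exp (-(#J / 8 : ℝ)) ≤ (3 / 2 : ℝ) ^ #J := by
    calc #𝒮 * Real.exp (-(#J / 8 : ℝ)) = ∑ S' ∈ 𝒮, Real.exp (-(#J / 8 : ℝ)) := by simp
      _ ≤ ∑ S' ∈ 𝒮, (1 / 2 : ℝ) ^ #(symmDiff S S') := by
          refine sum_le_sum fun S' hS' => ?_
          have e : Real.exp (-1) ≤ 1 / 2 := by
            rw [Real.exp_neg, inv_eq_one_div]
            have := Real.add_one_le_exp (1 : ℝ)
            exact one_div_le_one_div_of_le (by norm_num) (by linarith)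
          calc _ ≤ Real.exp (#(symmDiff S S') * (-1)) := by
                gcongr; linarith [h S' hS']
            _ = Real.exp (-1) ^ #(symmDiff S S') := Real.exp_nat_mul _ _
            _ ≤ _ := by gcongr
      _ = ∑ U ∈ 𝒮.image (symmDiff S), (1 / 2 : ℝ) ^ #U := by
          rw [sum_image]
          exact fun _ _ _ _ h => symmDiff_right_injective S h
      _ ≤ ∑ U ∈ J.powerset, (1 / 2 : ℝ) ^ #U := by
          refine sum_le_sum_of_subset_of_nonneg (fun U hU => ?_) fun _ _ _ => by positivity
          obtain ⟨S', hS', rfl⟩ := mem_image.1 hU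
          have h2 := mem_powerset.1 (h𝒮 hS')
          rw [mem_powerset] at hS ⊢
          exact symmDiff_le_sup.trans (sup_le hS h2)
      _ = (3 / 2 : ℝ) ^ #J := by
          have := sum_pow_mul_eq_add_pow (1 / 2 : ℝ) 1 J
          simp only [one_pow, mul_one] at this
          rw [this]; norm_num
  have h2 : (3 / 4 : ℝ) ^ #J < Real.exp (-(1 / 4)) ^ #J := by
    refine pow_lt_pow_left₀ ?_ (by norm_num) hJ.card_pos.ne'
    linarith [Real.add_one_lt_exp (x := -(1 / 4 : ℝ)) (by norm_num)]
  have h3 : Real.exp (-(1 / 4)) ^ #J = Real.exp (-(#J / 8 : ℝ)) * Real.exp (-(#J / 8 : ℝ)) := by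
    rw [← Real.exp_nat_mul, ← Real.exp_add]; congr 1; ring
  have h4 : (3 / 2 : ℝ) ^ #J = 2 ^ #J * (3 / 4) ^ #J := by rw [← mul_pow]; norm_num
  have h5 : 2 ^ #J * Real.exp (-(#J / 8 : ℝ)) * Real.exp (-(#J / 8 : ℝ)) ≤
      #𝒮 * Real.exp (-(#J / 8 : ℝ)) := by gcongr
  have h6 : (2 : ℝ) ^ #J * (3 / 4) ^ #J < 2 ^ #J * Real.exp (-(1 / 4)) ^ #J := by gcongr
  rw [h3] at h6
  linarith

/-- Partial colouring: two subsets of `J` that differ in an eighth of `J` and have nearly equal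
sums in every row. The parameters `a` and `b` are the eighth roots of `n` and `#J`. -/
lemma exists_partial_coloring_s6 {n : ℕ} {ι : Type*} [DecidableEq ι] {A : Fin n → ι → ℝ}
    (hA : ∀ i j, |A i j| ≤ 1) {J : Finset ι} (hJ : J.Nonempty) (hJn : #J ≤ n) {a b : ℝ}
    (ha : 0 < a) (hb : 0 < b) (han : a ^ 8 = n) (hbJ : b ^ 8 = #J) :
    ∃ S ⊆ J, ∃ S' ⊆ J, (#J : ℝ) / 8 ≤ #(symmDiff S S') ∧
      ∀ i, |∑ j ∈ S, A i j - ∑ j ∈ S', A i j| ≤ 6 * a ^ 3 * b := by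
  set Δ := 6 * a ^ 3 * b with hΔ
  have hΔ0 : 0 < Δ := by positivity
  have hba : b ^ 8 ≤ a ^ 8 := by rw [han, hbJ]; exact_mod_cast hJn
  set L := Real.log (64 * a ^ 8 / b ^ 8) with hL
  have hexpL : Real.exp (-L) = b ^ 8 / (64 * a ^ 8) := by
    rw [Real.exp_neg, hL, Real.exp_log (by positivity), inv_div]
  have hL_le : L ≤ 16 * a ^ 4 / b ^ 4 := by
    have e : 64 * a ^ 8 / b ^ 8 = (8 * a ^ 4 / b ^ 4) ^ 2 := by
      field_simp; norm_num
    have := Real.log_le_sub_one_of_pos (x := 8 * a ^ 4 / b ^ 4) (by positivity)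
    rw [hL, e, Real.log_pow]
    have e2 : 16 * a ^ 4 / b ^ 4 = 2 * (8 * a ^ 4 / b ^ 4) := by ring
    rw [e2]; push_cast; linarith
  have hhalf : Real.exp (-L) ≤ 1 / 2 := by
    rw [hexpL, div_le_iff₀ (by positivity)]
    nlinarith [pow_pos hb 8]
  have hL0 : 0 ≤ L := by
    have := Real.exp_le_one_iff.1 (hhalf.trans (by norm_num))
    linarith
  let f : Finset ι → Fin n → ℤ := fun S i => round (signedSum (A i) J S / (2 * Δ))
  have hrow : ∀ i, ∑ S ∈ J.powerset, |(f S i : ℝ)| ≤ 2 ^ #J * (3 * b ^ 16 / Δ ^ 4) := fun i => by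
    calc _ ≤ ∑ S ∈ J.powerset, signedSum (A i) J S ^ 4 / Δ ^ 4 := by
          refine sum_le_sum fun S _ => (abs_round_le_pow_four _).trans_eq ?_
          field_simp; ring
      _ ≤ 2 ^ #J * (3 * (#J : ℝ) ^ 2) / Δ ^ 4 := by
          rw [← sum_div]
          gcongr
          exact sum_signedSum_pow_four_le (hA i) J
      _ = _ := by rw [← hbJ]; ring
  obtain ⟨S, hS, hfib⟩ := exists_large_fiber (powerset_nonempty J) f
    (fun v => ∑ i, (L * |(v i : ℝ)| + 4 * Real.exp (-L))) (#J / 8)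
    (sum_exp_neg_cost_le_one hhalf _) (by
      rw [sum_comm, card_powerset, Nat.cast_pow, Nat.cast_two]
      calc _ ≤ ∑ _i : Fin n, 2 ^ #J * (16 * a ^ 4 / b ^ 4 * (3 * b ^ 16 / Δ ^ 4)
            + 4 * (b ^ 8 / (64 * a ^ 8))) := by
            refine sum_le_sum fun i _ => ?_
            rw [sum_add_distrib, ← mul_sum, sum_powerset_const, hexpL, mul_add]
            refine add_le_add_left ?_ _
            calc _ ≤ L * (2 ^ #J * (3 * b ^ 16 / Δ ^ 4)) := by gcongr; exact hrow i
              _ ≤ 16 * a ^ 4 / b ^ 4 * (2 ^ #J * (3 * b ^ 16 / Δ ^ 4)) := by gcongr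
              _ = _ := by ring
        _ = 2 ^ #J * (b ^ 8 * (43 / 432)) := by
            rw [sum_const, card_univ, Fintype.card_fin, nsmul_eq_mul, ← han, hΔ]
            field_simp; norm_num
        _ ≤ _ := by
            rw [← hbJ]
            gcongr
            nlinarith [pow_pos hb 8])
  rw [card_powerset, Nat.cast_pow, Nat.cast_two] at hfib
  obtain ⟨S', hS', hd⟩ := exists_large_symmDiff hJ (filter_subset _ _) hS hfib
  rw [mem_filter] at hS'
  refine ⟨S, mem_powerset.1 hS, S', mem_powerset.1 hS'.1, hd, fun i => ?_⟩
  have e : round (signedSum (A i) J S' / (2 * Δ)) = round (signedSum (A i) J S / (2 * Δ)) :=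
    congrFun hS'.2 i
  have h1 := abs_le.1 (abs_sub_round (signedSum (A i) J S / (2 * Δ)))
  have h2 := abs_le.1 (abs_sub_round (signedSum (A i) J S' / (2 * Δ)))
  rw [e] at h2
  have h3 : (∑ j ∈ S, A i j - ∑ j ∈ S', A i j) / Δ =
      signedSum (A i) J S / (2 * Δ) - signedSum (A i) J S' / (2 * Δ) := by
    rw [signedSum, signedSum]; field_simp; ring
  have h4 : |(∑ j ∈ S, A i j - ∑ j ∈ S', A i j) / Δ| ≤ 1 := by
    rw [h3, abs_le]; constructor <;> linarith
  rwa [abs_div, abs_of_pos hΔ0, div_le_one hΔ0] at h4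

lemma exists_eighth_root {x : ℝ} (hx : 0 ≤ x) : ∃ y : ℝ, 0 ≤ y ∧ y ^ 8 = x :=
  ⟨x ^ ((8 : ℕ) : ℝ)⁻¹, by positivity, Real.rpow_inv_natCast_pow hx (by norm_num)⟩

/-- Colouring at most `n` columns. The parameters `a` and `b` are the eighth roots of `n` and
`#J`. -/
lemma exists_coloring {n : ℕ} {ι : Type*} [DecidableEq ι] {A : Fin n → ι → ℝ}
    (hA : ∀ i j, |A i j| ≤ 1) {a : ℝ} (ha : 0 < a) (han : a ^ 8 = n) (J : Finset ι)
    (hJn : #J ≤ n) {b : ℝ} (hb : 0 ≤ b) (hbJ : b ^ 8 = #J) :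
    ∃ P ⊆ J, ∀ i, |signedSum (A i) J P| ≤ 384 * a ^ 3 * b := by
  induction J using Finset.strongInduction generalizing b with
  | H J ih =>
    rcases J.eq_empty_or_nonempty with rfl | hJ
    · exact ⟨∅, subset_rfl, fun i => by simp [signedSum]; positivity⟩
    have hJ0 : (0 : ℝ) < #J := by exact_mod_cast hJ.card_pos
    have hb0 : 0 < b := lt_of_le_of_ne hb (by rintro rfl; norm_num at hbJ; linarith)
    obtain ⟨S, hS, S', hS', hd, hsum⟩ := exists_partial_coloring_s6 hA hJ hJn ha hb0 han hbJ
    have hDJ : symmDiff S S' ⊆ J := symmDiff_le_sup.trans (sup_le hS hS')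
    have hD : (symmDiff S S').Nonempty := by
      rw [← card_pos]; have : (0 : ℝ) < #(symmDiff S S') := by linarith
      exact_mod_cast this
    have hcard : (#(J \ symmDiff S S') : ℝ) = #J - #(symmDiff S S') := by
      rw [card_sdiff_of_subset hDJ, Nat.cast_sub (card_le_card hDJ)]
    obtain ⟨c, hc, hcJ⟩ := exists_eighth_root (Nat.cast_nonneg (α := ℝ) #(J \ symmDiff S S'))
    obtain ⟨P, hP, hPsum⟩ := ih (J \ symmDiff S S') (sdiff_ssubset hDJ hD)
      ((card_le_card sdiff_subset).trans hJn) hc hcJ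
    have hcb : c ≤ 63 / 64 * b := by
      refine le_of_pow_le_pow_left₀ (n := 8) (by norm_num) (by positivity) ?_
      rw [hcJ, hcard, mul_pow, hbJ]
      norm_num
      linarith
    have hdisj : Disjoint P (S \ S') := by
      rw [Finset.disjoint_left]
      intro j hjP hjS
      exact (mem_sdiff.1 (hP hjP)).2 (mem_symmDiff.2 (Or.inl (mem_sdiff.1 hjS)))
    refine ⟨P ∪ S \ S', union_subset (hP.trans sdiff_subset) (sdiff_subset.trans hS), fun i => ?_⟩
    have e : signedSum (A i) J (P ∪ S \ S') = signedSum (A i) (J \ symmDiff S S') P +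
        (∑ j ∈ S, A i j - ∑ j ∈ S', A i j) := by
      have e1 := sum_sdiff (f := A i) hDJ
      have e2 : ∑ j ∈ symmDiff S S', A i j = ∑ j ∈ S \ S', A i j + ∑ j ∈ S' \ S, A i j :=
        sum_union disjoint_sdiff_sdiff
      have e3 := sum_sdiff_sub_sum_sdiff (s₁ := S') (s₂ := S) (f := A i)
      rw [signedSum, signedSum, sum_union hdisj]
      linarith
    rw [e]
    calc _ ≤ 384 * a ^ 3 * c + 6 * a ^ 3 * b :=
          (abs_add_le _ _).trans (add_le_add (hPsum i) (hsum i))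
      _ ≤ 384 * a ^ 3 * (63 / 64 * b) + 6 * a ^ 3 * b := by gcongr
      _ = _ := by ring

/-- Rounding of dyadic points: if every set of at most `n` columns has discrepancy at most `D`,
then a point of the cube with coordinates `z j / 2 ^ k`, at most `n` of them fractional, can be
rounded to a vertex with error at most `D * (1 - 2⁻ᵏ)` in each row. -/
lemma exists_rounding_dyadic {κ ι : Type*} [Fintype ι] [DecidableEq ι] {A : κ → ι → ℝ} {n : ℕ}
    {D : ℝ} (hD : ∀ J : Finset ι, #J ≤ n → ∃ P ⊆ J, ∀ i, |signedSum (A i) J P| ≤ D) (k : ℕ)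
    (z : ι → ℕ) (hz : ∀ j, z j ≤ 2 ^ k) (hn : #{j | z j ≠ 0 ∧ z j ≠ 2 ^ k} ≤ n) :
    ∃ s : ι → ℕ, (∀ j, s j = 0 ∨ s j = 1) ∧
      ∀ i, |∑ j, A i j * (z j - 2 ^ k * s j)| ≤ D * (2 ^ k - 1) := by
  induction k generalizing z with
  | zero =>
    refine ⟨z, fun j => ?_, fun i => by simp⟩
    have := hz j
    omega
  | succ k ih =>
    obtain ⟨P, hP, hPsum⟩ := hD ({j | z j % 2 = 1}) (le_trans (card_le_card fun j hj => by
      simp only [mem_filter, mem_univ, true_and] at hj ⊢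
      rw [pow_succ]; omega) hn)
    let z' : ι → ℕ := fun j => if j ∈ P then (z j + 1) / 2 else z j / 2
    have hz2 : ∀ j, z j ≤ 2 ^ k * 2 := fun j => by rw [← pow_succ]; exact hz j
    obtain ⟨s, hs, hsum⟩ := ih z' (fun j => by
        have := hz2 j
        simp only [z']; split_ifs <;> omega)
      (le_trans (card_le_card fun j hj => by
        have := hz2 j
        simp only [mem_filter, mem_univ, true_and, z'] at hj ⊢
        rw [pow_succ]
        split_ifs at hj <;> omega) hn)
    refine ⟨s, hs, fun i => ?_⟩
    have e : ∑ j, A i j * (z j - 2 ^ (k + 1) * s j) =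
        2 * ∑ j, A i j * (z' j - 2 ^ k * s j) - signedSum (A i) ({j | z j % 2 = 1}) P := by
      have hPu : ∑ j ∈ P, A i j = ∑ j, if j ∈ P then A i j else 0 := by simp
      rw [signedSum, hPu, sum_filter, mul_sum, mul_sum, ← sum_sub_distrib, ← sum_sub_distrib]
      refine sum_congr rfl fun j _ => ?_
      have hj : j ∈ P → z j % 2 = 1 := fun h => by simpa using hP h
      have hz' : (2 * z' j : ℤ) = z j + (2 * (if j ∈ P then 1 else 0) -
          if z j % 2 = 1 then 1 else 0) := by
        simp only [z']
        split_ifs <;> simp_all <;> omega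
      have hz'' : (2 * z' j : ℝ) = z j + (2 * (if j ∈ P then 1 else 0) -
          if z j % 2 = 1 then 1 else 0) := by exact_mod_cast hz'
      rw [show (if j ∈ P then A i j else 0) = A i j * if j ∈ P then 1 else 0 by simp,
        show (if z j % 2 = 1 then A i j else 0) = A i j * if z j % 2 = 1 then 1 else 0 by simp]
      linear_combination (-A i j) * hz''
    rw [e]
    calc _ ≤ 2 * |∑ j, A i j * (z' j - 2 ^ k * s j)| +
          |signedSum (A i) ({j | z j % 2 = 1}) P| := by
          refine (abs_sub _ _).trans_eq ?_
          rw [abs_mul, abs_two]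
      _ ≤ 2 * (D * (2 ^ k - 1)) + D := by gcongr; exacts [hsum i, hPsum i]
      _ = _ := by ring

/-- A point of the cube can be moved, keeping its image under `A`, to a point with at most `n`
fractional coordinates. -/
lemma exists_few_fractional {n T : ℕ} (A : Matrix (Fin n) (Fin T) ℝ) {y₀ : Fin T → ℝ}
    (hy₀ : y₀ ∈ Set.Icc 0 1) :
    ∃ y ∈ Set.Icc (0 : Fin T → ℝ) 1, A.mulVec y = A.mulVec y₀ ∧
      #{j | y j ≠ 0 ∧ y j ≠ 1} ≤ n := by
  have hcont : Continuous fun y : Fin T → ℝ => A.mulVec y := by fun_prop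
  have hK : IsCompact (Set.Icc (0 : Fin T → ℝ) 1 ∩ {y | A.mulVec y = A.mulVec y₀}) :=
    isCompact_Icc.inter_right (isClosed_eq hcont continuous_const)
  obtain ⟨y, ⟨hyI, hyA⟩, hext⟩ := hK.extremePoints_nonempty ⟨y₀, hy₀, rfl⟩
  refine ⟨y, hyI, hyA, ?_⟩
  by_contra! hcard
  set F : Finset (Fin T) := {j | y j ≠ 0 ∧ y j ≠ 1} with hF
  let g : (Fin T → ℝ) →ₗ[ℝ] (Fin n → ℝ) × ({j // j ∉ F} → ℝ) :=
    A.mulVecLin.prod (LinearMap.funLeft ℝ ℝ Subtype.val)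
  obtain ⟨v, hv, hv0⟩ := (Submodule.ne_bot_iff _).1 (LinearMap.ker_ne_bot_of_finrank_lt (f := g) (by
    have h1 : #F ≤ T := by simpa using card_le_univ F
    simp [Fintype.card_subtype_compl]
    omega))
  have hvA : A.mulVec v = 0 := congrArg Prod.fst hv
  have hvF : ∀ j ∉ F, v j = 0 := fun j hj => congrFun (congrArg Prod.snd hv) ⟨j, hj⟩
  have hev : ∀ᶠ t in nhds (0 : ℝ), ∀ j, y j + t * v j ∈ Set.Icc (0 : ℝ) 1 := by
    rw [Filter.eventually_all]
    intro j
    by_cases hj : j ∈ F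
    · have hj' : y j ≠ 0 ∧ y j ≠ 1 := by simpa [hF] using hj
      have h1 : Filter.Tendsto (fun t : ℝ => y j + t * v j) (nhds 0) (nhds (y j)) :=
        Continuous.tendsto' (by fun_prop) _ _ (by simp)
      exact h1.eventually (Icc_mem_nhds (lt_of_le_of_ne (hyI.1 j) hj'.1.symm)
        (lt_of_le_of_ne (hyI.2 j) hj'.2))
    · refine Filter.Eventually.of_forall fun t => ?_
      rw [hvF j hj, mul_zero, add_zero]
      exact ⟨hyI.1 j, hyI.2 j⟩
  obtain ⟨δ, hδ, hball⟩ := Metric.eventually_nhds_iff.1 hev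
  have hmem : ∀ t : ℝ, |t| < δ →
      y + t • v ∈ Set.Icc (0 : Fin T → ℝ) 1 ∩ {y | A.mulVec y = A.mulVec y₀} := fun t ht => by
    have h := hball (y := t) (by simpa using ht)
    refine ⟨⟨fun j => (h j).1, fun j => (h j).2⟩, ?_⟩
    rw [Set.mem_ofPred_eq, Matrix.mulVec_add, Matrix.mulVec_smul, hvA, smul_zero, add_zero]
    exact hyA
  have h1 := hext (hmem (δ / 2) (by rw [abs_of_pos] <;> linarith))
    (hmem (-(δ / 2)) (by rw [abs_neg, abs_of_pos] <;> linarith))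
    ⟨1 / 2, 1 / 2, by norm_num, by norm_num, by norm_num, by ext j; simp; ring⟩
  have h2 : (δ / 2) • v = 0 := by simpa using h1
  rcases smul_eq_zero.1 h2 with h | h
  · linarith
  · exact hv0 h

/-- Spencer's theorem in the regime `T > n`: for any `A ∈ [-1,1]^{n×T}` there is a sign
vector `x ∈ {-1,+1}^T` with `‖Ax‖_∞ ≤ C √n`. -/
theorem spencer_many_columns :
    ∃ C : ℝ, 0 < C ∧
      ∀ (n T : ℕ), 0 < n → n < T →
        ∀ A : Matrix (Fin n) (Fin T) ℝ, (∀ i j, A i j ∈ Set.Icc (-1 : ℝ) 1) →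
          ∃ x : Fin T → ℝ, (∀ j, x j = -1 ∨ x j = 1) ∧
            ∀ i, |A.mulVec x i| ≤ C * Real.sqrt (n : ℝ) := by
  refine ⟨770, by norm_num, fun n T hn _ A hA => ?_⟩
  have hA' : ∀ i j, |A i j| ≤ 1 := fun i j => abs_le.2 (hA i j)
  have hn1 : (1 : ℝ) ≤ n := by exact_mod_cast hn
  have hsq : (1 : ℝ) ≤ √n := Real.one_le_sqrt.2 hn1
  obtain ⟨a, ha, han⟩ := exists_eighth_root (Nat.cast_nonneg (α := ℝ) n)
  have ha0 : 0 < a := lt_of_le_of_ne ha (by rintro rfl; norm_num at han; linarith)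
  have ha4 : a ^ 4 = √n := by
    rw [← han, show a ^ 8 = (a ^ 4) ^ 2 by ring, Real.sqrt_sq (by positivity)]
  have hdisc : ∀ J : Finset (Fin T), #J ≤ n →
      ∃ P ⊆ J, ∀ i, |signedSum (A i) J P| ≤ 384 * √n := fun J hJ => by
    obtain ⟨b, hb, hbJ⟩ := exists_eighth_root (Nat.cast_nonneg (α := ℝ) #J)
    obtain ⟨P, hP, h⟩ := exists_coloring hA' ha0 han J hJ hb hbJ
    have hba : b ≤ a := by
      refine le_of_pow_le_pow_left₀ (n := 8) (by norm_num) ha ?_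
      rw [hbJ, han]; exact_mod_cast hJ
    refine ⟨P, hP, fun i => (h i).trans ?_⟩
    calc 384 * a ^ 3 * b ≤ 384 * a ^ 3 * a := by gcongr
      _ = 384 * √n := by rw [← ha4]; ring
  obtain ⟨y, hyI, hyA, hycard⟩ := exists_few_fractional A (y₀ := fun _ => 1 / 2)
    ⟨fun _ => by norm_num, fun _ => by norm_num⟩
  have hT : (T : ℝ) ≤ 2 ^ T := by exact_mod_cast Nat.lt_two_pow_self.le
  obtain ⟨s, hs, hsum⟩ := exists_rounding_dyadic hdisc T (fun j => ⌊2 ^ T * y j⌋₊)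
    (fun j => by
      refine Nat.floor_le_of_le ?_
      push_cast
      exact mul_le_of_le_one_right (by positivity) (hyI.2 j))
    (le_trans (card_le_card fun j hj => by
      simp only [mem_filter, mem_univ, true_and] at hj ⊢
      refine ⟨fun h => hj.1 (by simp [h]), fun h => hj.2 ?_⟩
      rw [h, mul_one]
      exact_mod_cast Nat.floor_natCast (R := ℝ) (2 ^ T)) hycard)
  refine ⟨fun j => 2 * s j - 1, fun j => ?_, fun i => ?_⟩
  · rcases hs j with h | h <;> norm_num [h]
  have herr : |∑ j, A i j * (2 ^ T * y j - ⌊2 ^ T * y j⌋₊)| ≤ T := by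
    calc _ ≤ ∑ j : Fin T, (1 : ℝ) := by
          refine (abs_sum_le_sum_abs _ _).trans (sum_le_sum fun j _ => ?_)
          rw [abs_mul]
          refine mul_le_one₀ (hA' i j) (abs_nonneg _) (abs_le.2 ⟨?_, ?_⟩)
          · have := Nat.floor_le (mul_nonneg (by positivity : (0 : ℝ) ≤ 2 ^ T) (hyI.1 j))
            linarith
          · linarith [Nat.lt_floor_add_one (2 ^ T * y j)]
      _ = T := by simp
  have hhalf : ∑ j, A i j * y j = ∑ j, A i j * (1 / 2) := congrFun hyA i
  have e : 2 ^ T * A.mulVec (fun j => 2 * s j - 1) i =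
      -2 * (∑ j, A i j * (⌊2 ^ T * y j⌋₊ - 2 ^ T * s j) +
        ∑ j, A i j * (2 ^ T * y j - ⌊2 ^ T * y j⌋₊)) := by
    have e1 : ∑ j, A i j * (⌊2 ^ T * y j⌋₊ - 2 ^ T * s j) +
        ∑ j, A i j * (2 ^ T * y j - ⌊2 ^ T * y j⌋₊) =
        2 ^ T * ∑ j, A i j * y j - 2 ^ T * ∑ j, A i j * s j := by
      rw [← sum_add_distrib, mul_sum, mul_sum, ← sum_sub_distrib]
      exact sum_congr rfl fun j _ => by ring
    have e2 : A.mulVec (fun j => 2 * s j - 1) i =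
        2 * ∑ j, A i j * s j - 2 * ∑ j, A i j * (1 / 2) := by
      rw [mul_sum, mul_sum, ← sum_sub_distrib, Matrix.mulVec, dotProduct]
      exact sum_congr rfl fun j _ => by ring
    rw [e1, e2, hhalf]; ring
  have h2T : (0 : ℝ) < 2 ^ T := by positivity
  refine le_of_mul_le_mul_left ?_ h2T
  calc 2 ^ T * |A.mulVec (fun j => 2 * (s j : ℝ) - 1) i|
      = |2 ^ T * A.mulVec (fun j => 2 * (s j : ℝ) - 1) i| := by rw [abs_mul, abs_of_pos h2T]
    _ ≤ 2 * (384 * √n * (2 ^ T - 1) + T) := by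
        rw [e, abs_mul, abs_neg, abs_two]
        gcongr
        exact (abs_add_le _ _).trans (add_le_add (hsum i) herr)
    _ ≤ 2 ^ T * (770 * √n) := by nlinarith
end
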